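/- arXiv:1206.0694 — 5 statements merged into one kernel-verified Lean document; each statement's English description precedes it below -/
import Mathlib

section
/- (Sakai) Let A be a C*-algebra. Then every derivation δ : A → A is automatically continuous. -/
/-!
A star-preserving derivation `D` of a unital C⋆-algebra is dissipative. Indeed, let `φ` be a state
with `φ (star x * x) = ‖x‖ ^ 2` and write `‖x‖ ^ 2 - star x * x = star h * h`. By the
Cauchy–Schwarz inequality `φ` kills `D (star h * h) = star (D h) * h + star h * D h`, hence also
`D (star x * x)`, and so `‖x‖ ^ 2 = re (φ (star x * (x + D x))) ≤ ‖x‖ * ‖x + D x‖`. States are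
avoided below: the existence of `φ` becomes the non-invertibility of `star h * h`, and the
Cauchy–Schwarz inequality becomes a weighted arithmetic-geometric mean inequality. An everywhere
defined dissipative operator on a Banach space is closed, hence continuous. An arbitrary derivation
extends to the unitization, where it is a complex linear combination of two star-preserving
derivations.
-/

open ComplexStarModule Filter Topology WithConv

section Dissipative

variable {E : Type*} [NormedAddCommGroup E] [NormedSpace ℝ E] {D : E →ₗ[ℝ] E}

/-- Dissipativity of an everywhere defined operator, in the norm form of Lumer and Phillips. -/
def IsDissipative (D : E →ₗ[ℝ] E) : Prop :=
  ∀ t : ℝ, 0 < t → ∀ x : E, ‖x‖ ≤ ‖x - t • D x‖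

namespace IsDissipative

theorem norm_le_norm_sub_sub_smul (hD : IsDissipative D) {u : ℕ → E} {b : E}
    (hu : Tendsto u atTop (𝓝 0)) (hDu : Tendsto (fun n => D (u n)) atTop (𝓝 b)) (c : E)
    {t : ℝ} (ht : 0 < t) : ‖c‖ ≤ ‖c - b - t • D c‖ := by
  have hleft : Tendsto (fun n => ‖u n + t • c‖) atTop (𝓝 ‖t • c‖) := by
    simpa using (hu.add_const (t • c)).norm
  have hright : Tendsto (fun n => ‖u n + t • c - t • D (u n + t • c)‖) atTop
      (𝓝 ‖t • (c - b - t • D c)‖) := by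
    have h := ((hu.add_const (t • c)).sub ((hDu.add_const (t • D c)).const_smul t)).norm
    simpa only [map_add, map_smul, zero_add, ← smul_sub, ← sub_sub] using h
  have hlim : ‖t • c‖ ≤ ‖t • (c - b - t • D c)‖ :=
    le_of_tendsto_of_tendsto' hleft hright fun n => hD t ht _
  rw [norm_smul, norm_smul] at hlim
  exact le_of_mul_le_mul_left hlim (norm_pos_iff.2 ht.ne')

theorem eq_zero_of_tendsto (hD : IsDissipative D) {u : ℕ → E} {b : E}
    (hu : Tendsto u atTop (𝓝 0)) (hDu : Tendsto (fun n => D (u n)) atTop (𝓝 b)) : b = 0 := by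
  have hlim : Tendsto (fun t : ℝ => ‖b - b - t • D b‖) (𝓝[>] 0) (𝓝 0) := by
    have hcont : Continuous fun t : ℝ => ‖b - b - t • D b‖ := by fun_prop
    simpa using (hcont.tendsto 0).mono_left nhdsWithin_le_nhds
  exact norm_le_zero_iff.1 <| ge_of_tendsto hlim <| eventually_nhdsWithin_of_forall
    fun t ht => hD.norm_le_norm_sub_sub_smul hu hDu b ht

protected theorem continuous [CompleteSpace E] (hD : IsDissipative D) : Continuous D := by
  refine D.continuous_of_seq_closed_graph fun u x y hu hDu => sub_eq_zero.1 ?_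
  refine hD.eq_zero_of_tendsto (u := fun n => u n - x) (by simpa using hu.sub_const x) ?_
  simpa using hDu.sub_const (D x)

end IsDissipative

end Dissipative

section Derivation

/-- A derivation of an algebra into itself. Mathlib's `Derivation` is restricted to commutative
algebras. -/
def IsDerivation {R A : Type*} [Semiring R] [NonUnitalNonAssocSemiring A] [Module R A]
    (δ : A →ₗ[R] A) : Prop :=
  ∀ a b : A, δ (a * b) = δ a * b + a * δ b

namespace IsDerivation

section Module

variable {R A : Type*} [Semiring R] [NonUnitalNonAssocSemiring A] [Module R A]
  {δ δ₁ δ₂ : A →ₗ[R] A}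

protected theorem add (h₁ : IsDerivation δ₁) (h₂ : IsDerivation δ₂) :
    IsDerivation (δ₁ + δ₂) := fun a b => by
  simp only [LinearMap.add_apply, h₁ a b, h₂ a b, add_mul, mul_add, add_add_add_comm]

protected theorem smul {S : Type*} [Monoid S] [DistribMulAction S A] [SMulCommClass R S A]
    [IsScalarTower S A A] [SMulCommClass S A A] (hδ : IsDerivation δ) (s : S) :
    IsDerivation (s • δ) := fun a b => by
  simp only [LinearMap.smul_apply, hδ a b, smul_add, smul_mul_assoc, mul_smul_comm]

protected theorem intrinsicStar [InvolutiveStar R] [StarRing A] [StarModule R A]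
    (hδ : IsDerivation δ) : IsDerivation (star (toConv δ)).ofConv := fun a b => by
  simp [hδ (star b) (star a), add_comm]

end Module

theorem star_mul_add_map {R A : Type*} [Semiring R] [NonUnitalNonAssocSemiring A] [StarRing A]
    [Module R A] {D : A →ₗ[R] A} (hD : IsDerivation D) (hstar : ∀ a, D (star a) = star (D a))
    (x : A) : star x * (x + D x) + star (x + D x) * x = 2 • (star x * x) + D (star x * x) := by
  rw [hD, hstar, star_add, mul_add, add_mul]
  abel

theorem map_algebraMap {R A : Type*} [CommSemiring R] [Ring A] [Algebra R A] {δ : A →ₗ[R] A}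
    (hδ : IsDerivation δ) (r : R) : δ (algebraMap R A r) = 0 := by
  have hone : δ 1 = 0 := by simpa using hδ 1 1
  rw [Algebra.algebraMap_eq_smul_one, map_smul, hone, smul_zero]

theorem unitization {R A : Type*} [CommSemiring R] [NonUnitalNonAssocSemiring A] [Module R A]
    {δ : A →ₗ[R] A} (hδ : IsDerivation δ) :
    IsDerivation (Unitization.inrHom R R A ∘ₗ δ ∘ₗ Unitization.sndHom R R A) := fun x y => by
  ext
  · simp
  · simp [hδ x.snd y.snd]
    abel

section Complex

variable {A : Type*} [NonUnitalNonAssocRing A] [StarRing A] [Module ℂ A] [IsScalarTower ℂ A A]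
  [SMulCommClass ℂ A A] [StarModule ℂ A] {δ : A →ₗ[ℂ] A}

protected theorem realPart (hδ : IsDerivation δ) :
    IsDerivation (ℜ (toConv δ) : WithConv (A →ₗ[ℂ] A)).ofConv := by
  rw [realPart_apply_coe, ← Complex.coe_smul]
  exact (hδ.add hδ.intrinsicStar).smul ((2⁻¹ : ℝ) : ℂ)

protected theorem imaginaryPart (hδ : IsDerivation δ) :
    IsDerivation (ℑ (toConv δ) : WithConv (A →ₗ[ℂ] A)).ofConv := by
  have h := (hδ.smul (-Complex.I)).realPart
  rwa [toConv_smul, neg_smul, map_neg, realPart_I_smul, neg_neg] at h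

end Complex

end IsDerivation

end Derivation

theorem star_mul_add_star_mul_le_smul_add_inv_smul {A : Type*} [NonUnitalRing A] [StarRing A]
    [PartialOrder A] [StarOrderedRing A] [Module ℝ A] [StarModule ℝ A] [IsScalarTower ℝ A A]
    [SMulCommClass ℝ A A] [PosSMulMono ℝ A] (h m : A) {t : ℝ} (ht : 0 < t) :
    star h * m + star m * h ≤ t • (star m * m) + t⁻¹ • (star h * h) := by
  have hsquare : 0 ≤ t⁻¹ • (star (t • m - h) * (t • m - h)) :=
    smul_nonneg (inv_nonneg.2 ht.le) (star_mul_self_nonneg _)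
  have hexpand : t⁻¹ • (star (t • m - h) * (t • m - h))
      = t • (star m * m) + t⁻¹ • (star h * h) - (star h * m + star m * h) := by
    simp only [star_sub, star_smul, star_trivial, sub_mul, mul_sub, smul_mul_assoc, mul_smul_comm,
      smul_sub, smul_smul, inv_mul_cancel₀ ht.ne', ← mul_assoc, one_mul, one_smul]
    abel
  rw [hexpand] at hsquare
  exact sub_nonneg.1 hsquare

section CStarAlgebra

variable {B : Type*} [CStarAlgebra B]

section Order

variable [PartialOrder B] [StarOrderedRing B]

theorem star_mul_add_star_mul_le_algebraMap (x y : B) :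
    star x * y + star y * x ≤ algebraMap ℝ B (2 * (‖x‖ * ‖y‖)) := by
  have hself : IsSelfAdjoint (star x * y + star y * x) := by
    simp [IsSelfAdjoint, add_comm]
  refine hself.le_algebraMap_norm_self.trans (algebraMap_mono B ?_)
  calc ‖star x * y + star y * x‖ ≤ ‖star x‖ * ‖y‖ + ‖star y‖ * ‖x‖ :=
        norm_add_le_of_le (norm_mul_le _ _) (norm_mul_le _ _)
    _ = 2 * (‖x‖ * ‖y‖) := by rw [norm_star, norm_star]; ring

theorem isUnit_star_mul_self_of_algebraMap_le {h m : B} {ε : ℝ} (hε : 0 < ε)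
    (hle : algebraMap ℝ B ε ≤ star h * m + star m * h) : IsUnit (star h * h) := by
  obtain ⟨t, ht, htε⟩ : ∃ t : ℝ, 0 < t ∧ t * ‖m‖ ^ 2 ≤ ε / 2 := by
    refine ⟨ε / 2 / (‖m‖ ^ 2 + 1), by positivity, ?_⟩
    rw [div_mul_eq_mul_div, div_le_iff₀ (by positivity)]
    nlinarith
  have hm : t • (star m * m) ≤ algebraMap ℝ B (ε / 2) := calc
    t • (star m * m) ≤ t • algebraMap ℝ B (‖m‖ ^ 2) :=
      smul_le_smul_of_nonneg_left CStarAlgebra.star_mul_le_algebraMap_norm_sq ht.le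
    _ = algebraMap ℝ B (t * ‖m‖ ^ 2) := by rw [Algebra.smul_def, map_mul]
    _ ≤ algebraMap ℝ B (ε / 2) := algebraMap_mono B htε
  have hh : algebraMap ℝ B (ε / 2) ≤ t⁻¹ • (star h * h) := by
    have hsum : algebraMap ℝ B (ε / 2) + algebraMap ℝ B (ε / 2)
        ≤ algebraMap ℝ B (ε / 2) + t⁻¹ • (star h * h) := calc
      _ = algebraMap ℝ B ε := by rw [← map_add, add_halves]
      _ ≤ t • (star m * m) + t⁻¹ • (star h * h) :=
        hle.trans (star_mul_add_star_mul_le_smul_add_inv_smul h m ht)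
      _ ≤ _ := by gcongr
    exact le_of_add_le_add_left hsum
  have hunit : IsUnit (t⁻¹ • (star h * h)) :=
    CStarAlgebra.isUnit_of_le _ hh (isStrictlyPositive_algebraMap (half_pos hε))
  simpa [Units.smul_def, smul_smul, ht.ne'] using hunit.smul (Units.mk0 t ht.ne')

end Order

theorem IsDerivation.norm_le_norm_add {D : B →ₗ[ℝ] B} (hD : IsDerivation D)
    (hstar : ∀ a, D (star a) = star (D a)) (x : B) : ‖x‖ ≤ ‖x + D x‖ := by
  let _ := CStarAlgebra.spectralOrder B
  have _ := CStarAlgebra.spectralOrderedRing B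
  nontriviality B
  by_contra! hlt
  obtain ⟨h, hh⟩ : ∃ h : B, algebraMap ℝ B (‖x‖ ^ 2) - star x * x = star h * h :=
    CStarAlgebra.nonneg_iff_eq_star_mul_self.1
      (sub_nonneg.2 CStarAlgebra.star_mul_le_algebraMap_norm_sq)
  have hcross : star h * (h + D h) + star (h + D h) * h =
      algebraMap ℝ B (2 * ‖x‖ ^ 2) - (star x * (x + D x) + star (x + D x) * x) := by
    rw [hD.star_mul_add_map hstar, hD.star_mul_add_map hstar, ← hh, map_sub, hD.map_algebraMap,
      two_mul, map_add]
    abel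
  have hle : algebraMap ℝ B (2 * (‖x‖ * (‖x‖ - ‖x + D x‖))) ≤
      star h * (h + D h) + star (h + D h) * h := by
    rw [hcross, mul_sub, mul_sub, map_sub, ← sq]
    exact sub_le_sub_left (star_mul_add_star_mul_le_algebraMap _ _) _
  have hpos : 0 < 2 * (‖x‖ * (‖x‖ - ‖x + D x‖)) :=
    mul_pos two_pos (mul_pos ((norm_nonneg _).trans_lt hlt) (sub_pos.2 hlt))
  have hspec : ‖x‖ ^ 2 ∈ spectrum ℝ (star x * x) := by
    rw [sq, ← CStarRing.norm_star_mul_self]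
    exact CStarAlgebra.norm_mem_spectrum_of_nonneg (star_mul_self_nonneg x)
  rw [spectrum.mem_iff, hh] at hspec
  exact hspec (isUnit_star_mul_self_of_algebraMap_le hpos hle)

theorem IsDerivation.isDissipative {D : B →ₗ[ℝ] B} (hD : IsDerivation D)
    (hstar : ∀ a, D (star a) = star (D a)) : IsDissipative D := fun t _ x => by
  simpa [sub_eq_add_neg] using (hD.smul (-t)).norm_le_norm_add (by simp [hstar]) x

theorem IsDerivation.continuous_of_isSelfAdjoint {δ : B →ₗ[ℂ] B} (hδ : IsDerivation δ)
    (hsa : IsSelfAdjoint (toConv δ)) : Continuous δ :=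
  (IsDerivation.isDissipative (D := δ.restrictScalars ℝ) hδ
    ((LinearMap.IntrinsicStar.isSelfAdjoint_iff_map_star (toConv δ)).1 hsa)).continuous

protected theorem IsDerivation.continuous {δ : B →ₗ[ℂ] B} (hδ : IsDerivation δ) :
    Continuous δ := by
  have hre := hδ.realPart.continuous_of_isSelfAdjoint (ℜ (toConv δ)).2
  have him := hδ.imaginaryPart.continuous_of_isSelfAdjoint (ℑ (toConv δ)).2
  have hsum : (ℜ (toConv δ) : WithConv (B →ₗ[ℂ] B)).ofConv +
      Complex.I • (ℑ (toConv δ) : WithConv (B →ₗ[ℂ] B)).ofConv = δ :=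
    congrArg ofConv (realPart_add_I_smul_imaginaryPart (toConv δ))
  rw [← hsum]
  exact hre.add (him.const_smul Complex.I)

end CStarAlgebra

/-- (Sakai) Every derivation on a C*-algebra is automatically continuous. -/
theorem sakai_automatic_continuity (A : Type*) [NonUnitalNormedRing A] [StarRing A]
    [CStarRing A] [CompleteSpace A] [NormedSpace ℂ A] [IsScalarTower ℂ A A]
    [SMulCommClass ℂ A A] [StarModule ℂ A]
    (δ : A →ₗ[ℂ] A)
    (hδ : ∀ a b : A, δ (a * b) = δ a * b + a * δ b) :
    Continuous δ := by
  let _ : NonUnitalCStarAlgebra A :=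
    { smul_assoc := smul_assoc, smul_comm := smul_comm, star_smul := star_smul }
  have hcont := (IsDerivation.unitization (δ := δ) hδ).continuous
  exact Unitization.continuous_snd.comp (hcont.comp Unitization.continuous_inr)
end

section
/- (Sakai–Kadison) Let M be a von Neumann algebra acting on a complex Hilbert space H. Then every derivation D : M → M (a linear map satisfying D(xy) = D(x)y + xD(y), not assumed continuous) is inner: there exists a ∈ M such that D(x) = ax − xa for all x ∈ M. -/
/-!
Splitting a derivation into two parts reduces the claim to a derivation `D` that anticommutes with
the involution. Positivity in the C⋆-algebra shows that `D` is Hermitian in the sense of Vidav and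
Lumer, so `D` is bounded with real spectrum, and its norm is at most twice its spectral radius.
Let `Q j` be the left support projection of the spectral subspace of `D` for `[j κ, ∞)`, where
`κ = ‖D‖ / 4`, and let `h = κ (Q 1 + ⋯ + Q 4)`. As `D` adds spectral values of products, `D` and
the inner derivation of `h` shift the filtration `Q 0 ≥ Q 1 ≥ ⋯` equally up to `κ`. Hence the
spectrum of their difference lies in `[-κ, κ]`, and passing from `D` to this difference halves the
norm. Iterating gives a norm convergent series of implementing elements.
-/

open Complex Metric Filter Topology
open scoped NNReal

section HermitianOperator

theorem sub_mul_resolvent {R A : Type*} [CommRing R] [Ring A] [Algebra R A] {a : A} {z : R}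
    (hz : z ∈ resolventSet R a) (w : R) :
    (algebraMap R A w - a) * resolvent a z = 1 + (w - z) • resolvent a z := by
  have h : (algebraMap R A z - a) * resolvent a z = 1 := Ring.mul_inverse_cancel _ hz
  rw [← h, sub_smul, Algebra.smul_def, Algebra.smul_def, sub_mul, sub_mul]
  abel

theorem inverse_one_sub_smul_eq {𝕜 A : Type*} [Field 𝕜] [Ring A] [Algebra 𝕜 A] (a : A) {z : 𝕜}
    (hz : z ≠ 0) :
    Ring.inverse (1 - z • a) = z⁻¹ • resolvent a z⁻¹ := by
  have h := spectrum.units_smul_resolvent_self (r := (Units.mk0 z hz)⁻¹) (a := a)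
  rw [inv_inv] at h
  simpa [resolvent, Units.smul_def] using h.symm

theorem mem_resolventSet_of_norm_sub_mul_norm_resolvent_lt_one {𝕜 A : Type*} [NormedField 𝕜]
    [NormedRing A] [NormedAlgebra 𝕜 A] [CompleteSpace A] {a : A} {z w : 𝕜}
    (hw : w ∈ resolventSet 𝕜 a) (h : ‖w - z‖ * ‖resolvent a w‖ < 1) :
    z ∈ resolventSet 𝕜 a := by
  have hfactor : algebraMap 𝕜 A z - a =
      (algebraMap 𝕜 A w - a) * (1 - (w - z) • resolvent a w) := by
    rw [mul_sub, mul_one, mul_smul_comm, sub_mul_resolvent hw, sub_self, zero_smul, add_zero,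
      ← Algebra.algebraMap_eq_smul_one, map_sub]
    abel
  rw [spectrum.mem_resolventSet_iff, hfactor]
  exact (spectrum.mem_resolventSet_iff.1 hw).mul
    (isUnit_one_sub_of_norm_lt_one (by rwa [norm_smul]))

theorem norm_sub_sq_sub_sq_of_mem_sphere {s r : ℝ} {z : ℂ} (hz : z ∈ sphere (s : ℂ) r) :
    ‖(z - s) ^ 2 - r ^ 2‖ = 2 * r * |z.im| := by
  have hr : ‖z - s‖ = r := mem_sphere_iff_norm.1 hz
  have hsq : (r : ℂ) ^ 2 = (z - s) * (starRingEnd ℂ) (z - s) := by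
    rw [mul_conj, normSq_eq_norm_sq, hr, ofReal_pow]
  have him : z - starRingEnd ℂ z = (2 * z.im : ℝ) * I := sub_conj z
  have hfactor : (z - s) ^ 2 - r ^ 2 = (z - s) * ((2 * z.im : ℝ) * I) := by
    rw [hsq, ← him, map_sub, conj_ofReal]
    ring
  rw [hfactor, norm_mul, norm_mul, hr, norm_I, mul_one, norm_real, Real.norm_eq_abs, abs_mul,
    abs_two]
  ring

variable {E : Type*} [NormedAddCommGroup E] [NormedSpace ℂ E]

/-- Hermitian operators on a complex normed space in the sense of Vidav and Lumer, which for bounded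
operators on a Banach space means that the numerical range is real. The resolvent estimate used
here as the definition makes sense without assuming continuity. -/
def IsHermitianOperator (T : E → E) : Prop :=
  ∀ (z : ℂ) (x : E), |z.im| * ‖x‖ ≤ ‖z • x - T x‖

namespace IsHermitianOperator

theorem neg {T : E → E} (hT : IsHermitianOperator T) : IsHermitianOperator (-T) := fun z x => by
  rw [show z • x - (-T) x = -(-z • x - T x) by rw [neg_smul, Pi.neg_apply]; abel, norm_neg]
  simpa only [neg_im, abs_neg] using hT (-z) x

/-- If `x → 0` and `T x → y`, then letting `x → 0` in the estimate for `y + s I x` bounds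
`s * ‖y‖` by `‖T y‖` for all `s > 0`. -/
theorem continuous [CompleteSpace E] {T : E →ₗ[ℂ] E} (hT : IsHermitianOperator T) :
    Continuous T := by
  refine T.continuous_of_seq_closed_graph fun u x y hu hy => ?_
  set w := y - T x
  have hv : Tendsto (fun n => u n - x) atTop (𝓝 0) := by simpa using hu.sub_const x
  have hTv : Tendsto (fun n => T (u n - x)) atTop (𝓝 w) := by simpa using hy.sub_const (T x)
  have hle (s : ℝ) : s * ‖w‖ ≤ ‖T w‖ := by
    set z : ℂ := s * I with hz
    have hwv : Tendsto (fun n => w + z • (u n - x)) atTop (𝓝 w) := by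
      simpa using (hv.const_smul z).const_add w
    have hTwv : Tendsto (fun n => z • (w + z • (u n - x)) - T (w + z • (u n - x))) atTop
        (𝓝 (-T w)) := by
      simpa using (hwv.const_smul z).sub ((hTv.const_smul z).const_add (T w))
    have hlim := le_of_tendsto_of_tendsto' (hwv.norm.const_mul |z.im|) hTwv.norm fun n => hT z _
    rw [norm_neg, hz, im_ofReal_mul, I_im, mul_one] at hlim
    exact (mul_le_mul_of_nonneg_right (le_abs_self s) (norm_nonneg w)).trans hlim
  by_contra hne
  have hpos : 0 < ‖w‖ := norm_pos_iff.2 (sub_ne_zero.2 hne)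
  have h := hle ((‖T w‖ + 1) / ‖w‖)
  rw [div_mul_cancel₀ _ hpos.ne'] at h
  linarith

variable {N : E →L[ℂ] E}

theorem im_mul_norm_resolvent_le_one_of_mem (hN : IsHermitianOperator N) {z : ℂ}
    (hz : z ∈ resolventSet ℂ N) : |z.im| * ‖resolvent N z‖ ≤ 1 := by
  rcases (abs_nonneg z.im).eq_or_lt with h0 | h0
  · rw [← h0, zero_mul]
    exact zero_le_one
  rw [mul_comm, ← le_div_iff₀ h0]
  refine ContinuousLinearMap.opNorm_le_bound _ (by positivity) fun x => ?_
  have hx : z • resolvent N z x - N (resolvent N z x) = x := by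
    simpa [Algebra.algebraMap_eq_smul_one] using
      congrArg (fun S : E →L[ℂ] E => S x) (sub_mul_resolvent hz z)
  rw [div_mul_eq_mul_div, one_mul, le_div_iff₀' h0]
  simpa only [hx] using hN z (resolvent N z x)

variable [CompleteSpace E]

theorem mem_resolventSet (hN : IsHermitianOperator N) {z : ℂ} (hz : z.im ≠ 0) :
    z ∈ resolventSet ℂ N := by
  have h0 : 0 < |z.im| := abs_pos.2 hz
  set s : ℝ := ‖N‖ * ‖(1 : E →L[ℂ] E)‖ / |z.im| with hs
  have hs0 : 0 ≤ s := by positivity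
  set w : ℂ := z + (s * z.im : ℝ) * I with hw
  have him : |w.im| = (1 + s) * |z.im| := by
    rw [hw, add_im, im_ofReal_mul, I_im, mul_one, ← one_add_mul, abs_mul,
      abs_of_nonneg (by positivity)]
  have hmem : w ∈ resolventSet ℂ N := by
    refine spectrum.mem_resolventSet_of_norm_lt_mul (lt_of_lt_of_le ?_ (abs_im_le_norm w))
    rw [him, hs, add_mul, div_mul_cancel₀ _ h0.ne']
    linarith
  refine mem_resolventSet_of_norm_sub_mul_norm_resolvent_lt_one hmem ?_
  have hR : (1 + s) * (|z.im| * ‖resolvent N w‖) ≤ 1 := by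
    rw [← mul_assoc, ← him]
    exact hN.im_mul_norm_resolvent_le_one_of_mem hmem
  have hdist : ‖w - z‖ = s * |z.im| := by
    rw [hw, add_sub_cancel_left, norm_mul, norm_I, mul_one, norm_real, Real.norm_eq_abs, abs_mul,
      abs_of_nonneg hs0]
  rw [hdist, mul_assoc]
  nlinarith

theorem im_mul_norm_resolvent_le_one (hN : IsHermitianOperator N) (z : ℂ) :
    |z.im| * ‖resolvent N z‖ ≤ 1 := by
  rcases eq_or_ne z.im 0 with h | h
  · simp [h]
  · exact hN.im_mul_norm_resolvent_le_one_of_mem (hN.mem_resolventSet h)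

theorem norm_sub_sq_smul_resolvent_le (hN : IsHermitianOperator N) {s r : ℝ} {z : ℂ}
    (hz : z ∈ sphere (s : ℂ) r) : ‖((z - s) ^ 2 - r ^ 2) • resolvent N z‖ ≤ 2 * r := by
  have hr : 0 ≤ r := nonneg_of_mem_sphere hz
  rw [norm_smul, norm_sub_sq_sub_sq_of_mem_sphere hz, mul_assoc]
  exact mul_le_of_le_one_right (by positivity) (hN.im_mul_norm_resolvent_le_one z)

/-- Cauchy's estimate for the derivative `N` at `0` of `w ↦ (1 - p² w²) (1 - w N)⁻¹`; the quadratic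
factor cancels the blow-up of the resolvent at `± p`. -/
theorem norm_le_two_mul_of_spectralRadius_lt (hN : IsHermitianOperator N) {p : ℝ≥0}
    (hp : spectralRadius ℂ N < p) : ‖N‖ ≤ 2 * p := by
  have hp0 : (0 : ℝ) < p := NNReal.coe_pos.2 (ENNReal.coe_pos.1 (bot_le.trans_lt hp))
  set Φ : ℂ → E →L[ℂ] E := fun w => (1 - p ^ 2 * w ^ 2) • Ring.inverse (1 - w • N) with hΦ
  have hderiv : HasDerivAt Φ N 0 := by
    have hinv := (spectrum.hasFPowerSeriesOnBall_inverse_one_sub_smul ℂ N).hasFPowerSeriesAt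
    have hpoly : HasDerivAt (fun w : ℂ => 1 - (p : ℂ) ^ 2 * w ^ 2) 0 0 := by
      simpa using (((hasDerivAt_id (0 : ℂ)).pow 2).const_mul ((p : ℂ) ^ 2)).const_sub 1
    refine (hpoly.smul hinv.hasDerivAt).congr_deriv ?_
    simp
  have hdiff : DiffContOnCl ℂ Φ (ball 0 (p : ℝ)⁻¹) := by
    refine DifferentiableOn.diffContOnCl_ball (U := closedBall 0 (p : ℝ)⁻¹) ?_ subset_rfl
    have hpoly : Differentiable ℂ fun w : ℂ => 1 - (p : ℂ) ^ 2 * w ^ 2 := by fun_prop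
    refine hpoly.differentiableOn.smul ?_
    rw [← NNReal.coe_inv]
    refine spectrum.differentiableOn_inverse_one_sub_smul ?_
    rw [ENNReal.coe_inv (NNReal.coe_pos.1 hp0).ne', ENNReal.inv_lt_inv]
    exact hp
  have hbound (w : ℂ) (hw : w ∈ sphere 0 (p : ℝ)⁻¹) : ‖Φ w‖ ≤ 2 := by
    have hnorm : ‖w‖ = (p : ℝ)⁻¹ := mem_sphere_zero_iff_norm.1 hw
    have hw0 : w ≠ 0 := norm_pos_iff.1 (by rw [hnorm]; positivity)
    have hsphere : w⁻¹ ∈ sphere ((0 : ℝ) : ℂ) p := by simp [hnorm]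
    have hfactor : Φ w = w • ((w⁻¹ - (0 : ℝ)) ^ 2 - p ^ 2 : ℂ) • resolvent N w⁻¹ := by
      simp only [hΦ]
      rw [inverse_one_sub_smul_eq N hw0, smul_smul, smul_smul]
      congr 1
      push_cast
      field_simp
      ring
    rw [hfactor, norm_smul, hnorm, inv_mul_le_iff₀ hp0, mul_comm]
    exact hN.norm_sub_sq_smul_resolvent_le hsphere
  have hcauchy := norm_deriv_le_of_forall_mem_sphere_norm_le (inv_pos.2 hp0) hdiff hbound
  rwa [hderiv.deriv, div_inv_eq_mul] at hcauchy

end IsHermitianOperator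

end HermitianOperator

section SpectralSubspace

/-- The iterates of `S` at `x` grow at most like `r ^ n`: the local spectral radius of `S` at `x`
is at most `r`, with the additional control of a constant. -/
def HasIterateGrowth {E : Type*} [Norm E] (S : E → E) (r : ℝ) (x : E) : Prop :=
  ∃ C : ℝ, ∀ n : ℕ, ‖S^[n] x‖ ≤ C * r ^ n

namespace HasIterateGrowth

section Norm

variable {E F G : Type*} [SeminormedAddCommGroup E] [SeminormedAddCommGroup F]
  [SeminormedAddCommGroup G] {S : E → E} {T : F → F} {r q : ℝ} {x : E} {y : F}

theorem mono (h : HasIterateGrowth S r x) (hr : 0 ≤ r) (hrq : r ≤ q) :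
    HasIterateGrowth S q x := by
  obtain ⟨C, hC⟩ := h
  have hC0 : 0 ≤ C := (norm_nonneg x).trans (by simpa using hC 0)
  exact ⟨C, fun n => (hC n).trans (by gcongr)⟩

theorem of_apply_eq_zero {𝓕 : Type*} [FunLike 𝓕 E E] [AddMonoidHomClass 𝓕 E E] {S : 𝓕}
    (h : S x = 0) : HasIterateGrowth S 0 x := by
  refine ⟨‖x‖, fun n => ?_⟩
  cases n with
  | zero => simp
  | succ n => simp [Function.iterate_succ_apply, h, iterate_map_zero]

theorem add {𝓕 : Type*} [FunLike 𝓕 E E] [AddMonoidHomClass 𝓕 E E] {S : 𝓕} {x y : E}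
    (hx : HasIterateGrowth S r x) (hy : HasIterateGrowth S r y) :
    HasIterateGrowth S r (x + y) := by
  obtain ⟨C, hC⟩ := hx
  obtain ⟨C', hC'⟩ := hy
  refine ⟨C + C', fun n => ?_⟩
  rw [iterate_map_add, add_mul]
  exact norm_add_le_of_le (hC n) (hC' n)

theorem map (h : HasIterateGrowth S r x) {L : E → F} {c : ℝ} (hL : ∀ v, ‖L v‖ ≤ c * ‖v‖)
    (hc : 0 ≤ c) (hST : Function.Semiconj L S T) : HasIterateGrowth T r (L x) := by
  obtain ⟨C, hC⟩ := h
  refine ⟨c * C, fun n => ?_⟩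
  rw [← (hST.iterate_right n).eq, mul_assoc]
  exact (hL _).trans (mul_le_mul_of_nonneg_left (hC n) hc)

/-- The binomial theorem, in the form of an induction over all pairs `(S^[i] x, T^[j] y)`. -/
theorem bilinear {𝓕 : Type*} [FunLike 𝓕 G G] [AddMonoidHomClass 𝓕 G G] {U : 𝓕} {B : E → F → G}
    (hB : ∀ v w, ‖B v w‖ ≤ ‖v‖ * ‖w‖)
    (hU : ∀ v w, U (B v w) = B (S v) w + B v (T w)) (hx : HasIterateGrowth S r x)
    (hy : HasIterateGrowth T q y) : HasIterateGrowth U (r + q) (B x y) := by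
  obtain ⟨C, hC⟩ := hx
  obtain ⟨C', hC'⟩ := hy
  refine ⟨C * C', fun n => ?_⟩
  induction n generalizing x y C C' with
  | zero =>
    have hx0 : ‖x‖ ≤ C := by simpa using hC 0
    have hy0 : ‖y‖ ≤ C' := by simpa using hC' 0
    simpa using (hB x y).trans (mul_le_mul hx0 hy0 (norm_nonneg y) ((norm_nonneg x).trans hx0))
  | succ n ih =>
    have hSx (k : ℕ) : ‖S^[k] (S x)‖ ≤ C * r * r ^ k := by
      rw [mul_assoc, ← pow_succ']
      exact hC (k + 1)
    have hTy (k : ℕ) : ‖T^[k] (T y)‖ ≤ C' * q * q ^ k := by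
      rw [mul_assoc, ← pow_succ']
      exact hC' (k + 1)
    rw [Function.iterate_succ_apply, hU, iterate_map_add]
    calc ‖U^[n] (B (S x) y) + U^[n] (B x (T y))‖
        ≤ C * r * C' * (r + q) ^ n + C * (C' * q) * (r + q) ^ n :=
          norm_add_le_of_le (ih _ hSx _ hC') (ih _ hC _ hTy)
      _ = C * C' * (r + q) ^ (n + 1) := by ring

end Norm

theorem eq_zero_of_mul_norm_le {E : Type*} [NormedAddCommGroup E] {S : E → E} {r q : ℝ} {x : E}
    (h : HasIterateGrowth S r x) (hS : ∀ v, q * ‖v‖ ≤ ‖S v‖) (hr : 0 ≤ r) (hrq : r < q) :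
    x = 0 := by
  obtain ⟨C, hC⟩ := h
  have hq : 0 < q := hr.trans_lt hrq
  have hlow (n : ℕ) : q ^ n * ‖x‖ ≤ ‖S^[n] x‖ := by
    induction n with
    | zero => simp
    | succ n ih =>
      rw [Function.iterate_succ_apply', pow_succ', mul_assoc]
      exact (mul_le_mul_of_nonneg_left ih hq.le).trans (hS _)
  have hle (n : ℕ) : ‖x‖ ≤ C * (r / q) ^ n := by
    rw [div_pow, ← mul_div_assoc, le_div_iff₀' (pow_pos hq n)]
    exact (hlow n).trans (hC n)
  have hlim : Tendsto (fun n : ℕ => C * (r / q) ^ n) atTop (𝓝 0) := by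
    simpa using (tendsto_pow_atTop_nhds_zero_of_lt_one (div_nonneg hr hq.le)
      ((div_lt_one hq).2 hrq)).const_mul C
  exact norm_le_zero_iff.1 (ge_of_tendsto' hlim hle)

theorem smul_one_sub_add {E : Type*} [NormedAddCommGroup E] [NormedSpace ℂ E] {N : E →L[ℂ] E}
    {K r t : ℝ} {x : E} (h : HasIterateGrowth (K • (1 : E →L[ℂ] E) - N) r x) (ht : 0 ≤ t) :
    HasIterateGrowth ((K + t) • (1 : E →L[ℂ] E) - N) (r + t) x := by
  have hpow : HasIterateGrowth (t * ·) t 1 := ⟨1, fun n => by simp [abs_of_nonneg ht]⟩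
  have hsum := hpow.bilinear (U := (K + t) • (1 : E →L[ℂ] E) - N)
    (B := fun (s : ℝ) v => s • v) (fun s v => (norm_smul s v).le) (fun s v => ?_) h
  · rwa [one_smul, add_comm t r] at hsum
  · simp only [add_smul, sub_apply, add_apply, smul_apply, one_apply_eq_self,
      ContinuousLinearMap.map_smul_of_tower, mul_smul, smul_sub, smul_comm s]
    abel

end HasIterateGrowth

variable {E F : Type*} [NormedAddCommGroup E] [NormedSpace ℂ E] [NormedAddCommGroup F]
  [NormedSpace ℂ F]

/-- The spectral subspace of a Hermitian operator `N` for the interval `[l, ∞)`. Since `K - N` has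
spectrum in `[0, K - l]` on it for large `K`, it is encoded by the growth of the iterates of
`K - N`. -/
def spectralSubspace (N : E →L[ℂ] E) (l : ℝ) : Submodule ℂ E where
  carrier := {x | ∃ K : ℝ, l ≤ K ∧ HasIterateGrowth (K • (1 : E →L[ℂ] E) - N) (K - l) x}
  zero_mem' := ⟨l, le_rfl, by rw [sub_self]; exact .of_apply_eq_zero (map_zero _)⟩
  add_mem' := by
    rintro x y ⟨K, hK, hx⟩ ⟨L, hL, hy⟩
    refine ⟨K + (L - l), by linarith, ?_⟩
    have hx' := hx.smul_one_sub_add (sub_nonneg.2 hL)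
    have hy' := hy.smul_one_sub_add (sub_nonneg.2 hK)
    rw [show L + (K - l) = K + (L - l) by ring,
      show L - l + (K - l) = K - l + (L - l) by ring] at hy'
    rw [show K + (L - l) - l = K - l + (L - l) by ring]
    exact hx'.add hy'
  smul_mem' := by
    rintro c x ⟨K, hK, hx⟩
    exact ⟨K, hK, hx.map (fun v => (norm_smul c v).le) (norm_nonneg c) fun v => by simp⟩

variable {N : E →L[ℂ] E} {l : ℝ}

theorem spectralSubspace_antitone (N : E →L[ℂ] E) : Antitone (spectralSubspace N) := by
  rintro l m hlm x ⟨K, hK, hx⟩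
  exact ⟨K, hlm.trans hK, hx.mono (sub_nonneg.2 hK) (sub_le_sub_left hlm K)⟩

theorem spectralSubspace_eq_bot_of_norm_lt (hl : ‖N‖ < l) : spectralSubspace N l = ⊥ := by
  refine (Submodule.eq_bot_iff _).2 ?_
  rintro x ⟨K, hK, hx⟩
  refine hx.eq_zero_of_mul_norm_le (q := K - ‖N‖) (fun v => ?_) (sub_nonneg.2 hK)
    (sub_lt_sub_left hl K)
  have hK0 : 0 ≤ K := (norm_nonneg N).trans (hl.le.trans hK)
  calc (K - ‖N‖) * ‖v‖ ≤ ‖K • v‖ - ‖N v‖ := by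
        rw [norm_smul, Real.norm_of_nonneg hK0, sub_mul]
        exact sub_le_sub_left (N.le_opNorm v) _
    _ ≤ ‖(K • (1 : E →L[ℂ] E) - N) v‖ := norm_sub_norm_le _ _

theorem mem_spectralSubspace_of_apply_eq_smul {x : E} (h : N x = l • x) :
    x ∈ spectralSubspace N l := by
  refine ⟨l, le_rfl, ?_⟩
  rw [sub_self]
  exact .of_apply_eq_zero (by simp [h])

theorem map_mem_spectralSubspace {N' : F →L[ℂ] F} {c : ℝ} (S : E →L[ℝ] F)
    (hS : ∀ v, N' (S v) = S (N v) + c • S v) {x : E} (hx : x ∈ spectralSubspace N l) :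
    S x ∈ spectralSubspace N' (l + c) := by
  obtain ⟨K, hK, hx⟩ := hx
  refine ⟨K + c, by linarith, ?_⟩
  rw [add_sub_add_right_eq_sub]
  exact hx.map S.le_opNorm (norm_nonneg S) fun v => by simp [hS, add_smul]

theorem apply_mem_spectralSubspace {x : E} (hx : x ∈ spectralSubspace N l) :
    N x ∈ spectralSubspace N l := by
  simpa using map_mem_spectralSubspace (c := 0) (N.restrictScalars ℝ) (by simp) hx

theorem mul_mem_spectralSubspace {A : Type*} [NormedRing A] [NormedAlgebra ℂ A] {D : A →L[ℂ] A}
    (hD : ∀ x y, D (x * y) = D x * y + x * D y) {l m : ℝ} {x y : A}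
    (hx : x ∈ spectralSubspace D l) (hy : y ∈ spectralSubspace D m) :
    x * y ∈ spectralSubspace D (l + m) := by
  obtain ⟨K, hK, hx⟩ := hx
  obtain ⟨L, hL, hy⟩ := hy
  refine ⟨K + L, add_le_add hK hL, ?_⟩
  rw [add_sub_add_comm]
  refine hx.bilinear (U := (K + L) • (1 : A →L[ℂ] A) - D) norm_mul_le
    (fun v w => ?_) hy
  simp only [sub_apply, smul_apply, one_apply_eq_self, add_smul, hD, sub_mul, smul_mul_assoc,
    mul_sub, mul_smul_comm]
  abel

end SpectralSubspace

section SpectrumOfSpectralSubspaces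

theorem circleIntegral_comp_clm {E F : Type*} [NormedAddCommGroup E] [NormedSpace ℂ E]
    [CompleteSpace E] [NormedAddCommGroup F] [NormedSpace ℂ F] [CompleteSpace F] (L : E →L[ℂ] F)
    {f : ℂ → E} {c : ℂ} {r : ℝ} (hf : CircleIntegrable f c r) :
    ∮ z in C(c, r), L (f z) = L (∮ z in C(c, r), f z) := by
  simpa [circleIntegral] using L.intervalIntegral_comp_comm hf.out

variable {E : Type*} [NormedAddCommGroup E] [NormedSpace ℂ E]

/-- The contour integral of `f` times the resolvent of `N` over the circle with centre `s` and
radius `r`. The weight vanishes to second order where the circle crosses the real axis, so that the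
integrand is continuous for Hermitian `N` although the crossings may lie in the spectrum. -/
noncomputable def weightedResolventIntegral (N : E →L[ℂ] E) (s r : ℝ) (f : ℂ → ℂ) : E →L[ℂ] E :=
  ∮ z in C(s, r), f z • ((z - s) ^ 2 - r ^ 2 : ℂ) ^ 2 • resolvent N z

namespace IsHermitianOperator

variable [CompleteSpace E] {N : E →L[ℂ] E} {s r : ℝ} {f : ℂ → ℂ}

theorem continuousOn_sq_smul_resolvent (hN : IsHermitianOperator N) (s r : ℝ) :
    ContinuousOn (fun z : ℂ => ((z - s) ^ 2 - r ^ 2) ^ 2 • resolvent N z) (sphere (s : ℂ) r) := by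
  intro z hz
  have hpoly : Continuous fun w : ℂ => (w - s) ^ 2 - (r : ℂ) ^ 2 := by fun_prop
  by_cases him : z.im = 0
  · have hzero : (z - s) ^ 2 - (r : ℂ) ^ 2 = 0 := by
      rw [← norm_eq_zero, norm_sub_sq_sub_sq_of_mem_sphere hz, him, abs_zero, mul_zero]
    have hlim : Tendsto (fun w : ℂ => ‖(w - s) ^ 2 - (r : ℂ) ^ 2‖ * (2 * r))
        (𝓝[sphere (s : ℂ) r] z) (𝓝 0) := by
      have h := (hpoly.norm.mul_const (2 * r)).tendsto z
      rw [hzero, norm_zero, zero_mul] at h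
      exact h.mono_left nhdsWithin_le_nhds
    rw [ContinuousWithinAt, hzero, zero_pow two_ne_zero, zero_smul]
    refine squeeze_zero_norm' (eventually_nhdsWithin_of_forall fun w hw => ?_) hlim
    rw [pow_two, mul_smul, norm_smul]
    exact mul_le_mul_of_nonneg_left (hN.norm_sub_sq_smul_resolvent_le hw) (norm_nonneg _)
  · have hR := spectrum.hasDerivAt_resolvent_const_left (hN.mem_resolventSet him)
    exact ((hpoly.pow 2).continuousAt.smul hR.continuousAt).continuousWithinAt

theorem sub_mul_weightedResolventIntegral (hN : IsHermitianOperator N) (hr : 0 ≤ r)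
    (hf : ContinuousOn f (sphere (s : ℂ) r)) (ζ : ℂ) :
    (algebraMap ℂ (E →L[ℂ] E) ζ - N) * weightedResolventIntegral N s r f =
      weightedResolventIntegral N s r (fun z => (ζ - z) * f z) +
        (∮ z in C(s, r), f z * ((z - s) ^ 2 - r ^ 2) ^ 2) • 1 := by
  have hR := hN.continuousOn_sq_smul_resolvent s r
  have hint (g : ℂ → ℂ) (hg : ContinuousOn g (sphere (s : ℂ) r)) : CircleIntegrable
      (fun z => g z • ((z - s) ^ 2 - r ^ 2 : ℂ) ^ 2 • resolvent N z) s r :=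
    (hg.smul hR).circleIntegrable hr
  have hone : CircleIntegrable
      (fun z => (f z * ((z - s) ^ 2 - r ^ 2) ^ 2) • (1 : E →L[ℂ] E)) s r :=
    ContinuousOn.circleIntegrable hr (by fun_prop)
  have hcomm := circleIntegral_comp_clm
    (ContinuousLinearMap.mul ℂ (E →L[ℂ] E) (algebraMap ℂ (E →L[ℂ] E) ζ - N)) (hint f hf)
  simp only [ContinuousLinearMap.mul_apply'] at hcomm
  have hconst := circleIntegral.integral_smul_const
    (fun z : ℂ => f z * ((z - s) ^ 2 - r ^ 2) ^ 2) (1 : E →L[ℂ] E) s r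
  rw [weightedResolventIntegral, weightedResolventIntegral, ← hconst,
    ← circleIntegral.integral_add (hint _ (by fun_prop)) hone]
  refine hcomm.symm.trans (circleIntegral.integral_congr hr fun z hz => ?_)
  by_cases him : z.im = 0
  · have hzero : (z - s) ^ 2 - (r : ℂ) ^ 2 = 0 := by
      rw [← norm_eq_zero, norm_sub_sq_sub_sq_of_mem_sphere hz, him, abs_zero, mul_zero]
    simp [hzero]
  · simp only [mul_smul_comm, sub_mul_resolvent (hN.mem_resolventSet him), smul_add, smul_smul]
    rw [add_comm]
    congr 2
    ring

theorem sub_pow_mul_weightedResolventIntegral_one (hN : IsHermitianOperator N) (hr : 0 ≤ r)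
    (n : ℕ) : (algebraMap ℂ (E →L[ℂ] E) s - N) ^ n * weightedResolventIntegral N s r 1 =
      weightedResolventIntegral N s r fun z => (s - z) ^ n := by
  induction n with
  | zero => simp [Pi.one_def]
  | succ n ih =>
    have hcauchy : ∮ z in C(s, r), ((s : ℂ) - z) ^ n * ((z - s) ^ 2 - (r : ℂ) ^ 2) ^ 2 = 0 :=
      (by fun_prop : Differentiable ℂ _).diffContOnCl.circleIntegral_eq_zero hr
    rw [pow_succ', mul_assoc, ih, hN.sub_mul_weightedResolventIntegral hr (by fun_prop), hcauchy,
      zero_smul, add_zero]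
    simp only [← pow_succ']

theorem weightedResolventIntegral_one_apply_mem (hN : IsHermitianOperator N) (hr : 0 ≤ r)
    (x : E) : weightedResolventIntegral N s r 1 x ∈ spectralSubspace N (s - r) := by
  obtain ⟨C, hC⟩ := (isCompact_sphere (s : ℂ) r).exists_bound_of_continuousOn
    (hN.continuousOn_sq_smul_resolvent s r)
  refine ⟨s, by linarith, 2 * Real.pi * r * C * ‖x‖, fun n => ?_⟩
  have hiter : (⇑(s • (1 : E →L[ℂ] E) - N))^[n] (weightedResolventIntegral N s r 1 x) =
      weightedResolventIntegral N s r (fun z => (s - z) ^ n) x := by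
    rw [← hN.sub_pow_mul_weightedResolventIntegral_one hr n, mul_apply_eq_comp,
      Algebra.algebraMap_eq_smul_one, Complex.coe_smul, FunLike.coe_pow_eq_iterate]
  have hbound : ‖weightedResolventIntegral N s r fun z => (s - z) ^ n‖ ≤
      2 * Real.pi * r * (r ^ n * C) :=
    circleIntegral.norm_integral_le_of_norm_le_const hr fun z hz => by
      rw [norm_smul, norm_pow, norm_sub_rev, mem_sphere_iff_norm.1 hz]
      exact mul_le_mul_of_nonneg_left (hC z hz) (by positivity)
  rw [hiter, sub_sub_cancel]
  calc _ ≤ 2 * Real.pi * r * (r ^ n * C) * ‖x‖ := ContinuousLinearMap.le_of_opNorm_le _ hbound x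
    _ = 2 * Real.pi * r * C * ‖x‖ * r ^ n := by ring

theorem sub_mul_weightedResolventIntegral_inv (hN : IsHermitianOperator N) (hr : 0 < r)
    (h : weightedResolventIntegral N s r 1 = 0) :
    (algebraMap ℂ (E →L[ℂ] E) s - N) * weightedResolventIntegral N s r (fun z => (z - s)⁻¹) =
      (2 * Real.pi * I * r ^ 4 : ℂ) • 1 := by
  have hne (z : ℂ) (hz : z ∈ sphere (s : ℂ) r) : z - s ≠ 0 :=
    sub_ne_zero.2 (ne_of_mem_sphere hz hr.ne')
  have hneg : weightedResolventIntegral N s r (fun z => (s - z) * (z - s)⁻¹) =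
      (-1 : ℂ) • weightedResolventIntegral N s r 1 := by
    rw [weightedResolventIntegral, weightedResolventIntegral, ← circleIntegral.integral_smul]
    refine circleIntegral.integral_congr hr.le fun z hz => ?_
    have hcancel : (s - z) * (z - s)⁻¹ = -1 := by
      rw [← neg_sub z (s : ℂ), neg_mul, mul_inv_cancel₀ (hne z hz)]
    simp only [hcancel, Pi.one_apply, one_smul]
  have hpoly : DiffContOnCl ℂ (fun z : ℂ => ((z - s) ^ 2 - (r : ℂ) ^ 2) ^ 2) (ball (s : ℂ) r) :=
    (by fun_prop : Differentiable ℂ _).diffContOnCl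
  have hcauchy := hpoly.circleIntegral_sub_inv_smul (mem_ball_self hr)
  simp only [smul_eq_mul] at hcauchy
  rw [hN.sub_mul_weightedResolventIntegral hr.le, hneg, h, smul_zero, zero_add,
    hcauchy]
  · congr 1
    ring
  · exact ContinuousOn.inv₀ (by fun_prop) hne

theorem mem_resolventSet_of_spectralSubspace_eq_bot (hN : IsHermitianOperator N) {l s : ℝ}
    (hls : l < s) (h : spectralSubspace N l = ⊥) : (s : ℂ) ∈ resolventSet ℂ N := by
  obtain ⟨r, rfl⟩ : ∃ r, l = s - r := ⟨s - l, by ring⟩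
  have hr : 0 < r := by linarith
  have hzero : weightedResolventIntegral N s r 1 = 0 := by
    ext x
    exact (Submodule.mem_bot ℂ).1 (h ▸ hN.weightedResolventIntegral_one_apply_mem hr.le x)
  have hinv := hN.sub_mul_weightedResolventIntegral_inv hr hzero
  set c : ℂ := 2 * Real.pi * I * r ^ 4
  have hc : c ≠ 0 := by simp [c, hr.ne']
  rw [spectrum.mem_resolventSet_iff, ContinuousLinearMap.isUnit_iff_bijective]
  refine ⟨(injective_iff_map_eq_zero _).2 fun x hx => ?_, fun y =>
    ⟨weightedResolventIntegral N s r (fun z => (z - s)⁻¹) (c⁻¹ • y), ?_⟩⟩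
  · have hNx : N x = s • x :=
      (sub_eq_zero.1 (by simpa [Algebra.algebraMap_eq_smul_one] using hx)).symm
    have hmem := spectralSubspace_antitone N hls.le (mem_spectralSubspace_of_apply_eq_smul hNx)
    exact (Submodule.mem_bot ℂ).1 (h ▸ hmem)
  · rw [← mul_apply_eq_comp, hinv, smul_apply, one_apply_eq_self, smul_inv_smul₀ hc]

theorem norm_le_two_mul_of_spectralSubspace_eq_bot (hN : IsHermitianOperator N) {κ : ℝ}
    (hκ : 0 ≤ κ) (hpos : ∀ l, κ < l → spectralSubspace N l = ⊥)
    (hneg : ∀ l, κ < l → spectralSubspace (-N) l = ⊥) : ‖N‖ ≤ 2 * κ := by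
  have hreal {T : E →L[ℂ] E} (hT : IsHermitianOperator T)
      (hspec : ∀ l, κ < l → spectralSubspace T l = ⊥) (s : ℝ) (hs : (s : ℂ) ∈ spectrum ℂ T) :
      s ≤ κ := by
    by_contra! hκs
    obtain ⟨l, hκl, hls⟩ := exists_between hκs
    exact hs (hT.mem_resolventSet_of_spectralSubspace_eq_bot hls (hspec l hκl))
  have hradius : spectralRadius ℂ N ≤ ENNReal.ofReal κ := by
    refine iSup₂_le fun z hz => ?_
    obtain ⟨s, rfl⟩ : ∃ s : ℝ, z = s :=
      ⟨z.re, Complex.ext rfl (not_ne_iff.1 fun him => hz (hN.mem_resolventSet him))⟩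
    have hs' : ((-s : ℝ) : ℂ) ∈ spectrum ℂ (-N) := by
      rw [← spectrum.neg_eq, Set.mem_neg, ofReal_neg, neg_neg]
      exact hz
    rw [← enorm_eq_nnnorm, ← ofReal_norm, norm_real]
    exact ENNReal.ofReal_le_ofReal (abs_le'.2 ⟨hreal hN hpos s hz, hreal hN.neg hneg (-s) hs'⟩)
  rw [← div_le_iff₀' two_pos]
  refine le_of_forall_gt_imp_ge_of_dense fun p hp => ?_
  lift p to ℝ≥0 using hκ.trans hp.le
  rw [div_le_iff₀' two_pos]
  exact hN.norm_le_two_mul_of_spectralRadius_lt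
    (hradius.trans_lt ((ENNReal.ofReal_lt_coe_iff hκ).2 hp))

end IsHermitianOperator

end SpectrumOfSpectralSubspaces

section BaerStarRing

section Ring

variable {R : Type*} [Ring R] [StarRing R]

/-- The left support projection of a set `V`: its left annihilator is that of `V`. In `B(H)` this is
the projection onto the closed span of the ranges of the elements of `V`. -/
structure IsLeftSupport (Q : R) (V : Set R) : Prop where
  isStarProjection : IsStarProjection Q
  mul_eq_zero_iff : ∀ x, x * Q = 0 ↔ ∀ y ∈ V, x * y = 0

/-- A Baer *-ring: every annihilator is generated by a projection. A C⋆-algebra with this property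
is an AW⋆-algebra. -/
def IsBaerStarRing (R : Type*) [Ring R] [StarRing R] : Prop :=
  ∀ V : Set R, ∃ Q, IsLeftSupport Q V

namespace IsLeftSupport

variable {P Q c : R} {V W : Set R}

theorem mul_eq_self (hQ : IsLeftSupport Q V) {y : R} (hy : y ∈ V) : Q * y = y := by
  have h := (hQ.mul_eq_zero_iff (1 - Q)).1 hQ.isStarProjection.one_sub_mul_self y hy
  rwa [sub_mul, one_mul, sub_eq_zero, eq_comm] at h

theorem mul_of_subset (hQ : IsLeftSupport Q V) (hP : IsLeftSupport P W) (hVW : V ⊆ W) :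
    P * Q = Q := by
  have h : (1 - P) * Q = 0 := (hQ.mul_eq_zero_iff _).2 fun y hy => by
    rw [sub_mul, one_mul, hP.mul_eq_self (hVW hy), sub_self]
  rwa [sub_mul, one_mul, sub_eq_zero, eq_comm] at h

theorem mul_of_superset (hQ : IsLeftSupport Q V) (hP : IsLeftSupport P W) (hVW : V ⊆ W) :
    Q * P = Q := by
  simpa only [star_mul, hQ.isStarProjection.isSelfAdjoint.star_eq,
    hP.isStarProjection.isSelfAdjoint.star_eq] using congrArg star (hQ.mul_of_subset hP hVW)

theorem commute (hQ : IsLeftSupport Q V) (hc : ∀ y ∈ V, Commute c y)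
    (hc' : ∀ y ∈ V, Commute (star c) y) : Commute c Q := by
  have hinv {b : R} (hb : ∀ y ∈ V, Commute b y) : Q * b * Q = b * Q := by
    have h : (1 - Q) * b * Q = 0 := (hQ.mul_eq_zero_iff _).2 fun y hy => by
      rw [mul_assoc, (hb y hy).eq, ← mul_assoc, sub_mul, one_mul, hQ.mul_eq_self hy, sub_self,
        zero_mul]
    rwa [sub_mul, sub_mul, one_mul, sub_eq_zero, eq_comm] at h
  have hstar : Q * c * Q = Q * c := by
    simpa only [star_mul, star_star, hQ.isStarProjection.isSelfAdjoint.star_eq, ← mul_assoc]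
      using congrArg star (hinv hc')
  rw [commute_iff_eq, ← hinv hc, hstar]

end IsLeftSupport

end Ring

variable {H : Type*} [NormedAddCommGroup H] [InnerProductSpace ℂ H] [CompleteSpace H]

theorem isBaerStarRing_clm : IsBaerStarRing (H →L[ℂ] H) := by
  intro V
  set U : Submodule ℂ H := (⨆ y ∈ V, LinearMap.range (y : H →ₗ[ℂ] H)).topologicalClosure
  have : CompleteSpace U := (Submodule.isClosed_topologicalClosure _).completeSpace_coe
  refine ⟨U.starProjection, isStarProjection_starProjection, fun x => ?_⟩
  have hker (y : H →L[ℂ] H) : x * y = 0 ↔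
      LinearMap.range (y : H →ₗ[ℂ] H) ≤ LinearMap.ker (x : H →ₗ[ℂ] H) := by
    rw [LinearMap.range_le_ker_iff, ← ContinuousLinearMap.coe_inj]
    rfl
  have hclosed : IsClosed (LinearMap.ker (x : H →ₗ[ℂ] H) : Set H) := x.isClosed_ker
  simp only [hker, Submodule.range_starProjection]
  rw [← iSup₂_le_iff]
  exact ⟨(Submodule.le_topologicalClosure _).trans,
    fun h => Submodule.topologicalClosure_minimal _ h hclosed⟩

theorem IsLeftSupport.mem_vonNeumannAlgebra {M : VonNeumannAlgebra H} {Q : H →L[ℂ] H}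
    {V : Set (H →L[ℂ] H)} (hQ : IsLeftSupport Q V) (hV : V ⊆ M) : Q ∈ M := by
  rw [← M.commutant_commutant, VonNeumannAlgebra.mem_commutant_iff]
  have hcomm (c : H →L[ℂ] H) (hc : c ∈ M.commutant) (y : H →L[ℂ] H) (hy : y ∈ V) : Commute c y :=
    (VonNeumannAlgebra.mem_commutant_iff.1 hc y (hV hy)).symm
  exact fun c hc => hQ.commute (hcomm c hc) (hcomm _ (star_mem hc))

theorem isClosed_vonNeumannAlgebra (M : VonNeumannAlgebra H) :
    IsClosed (M.toStarSubalgebra : Set (H →L[ℂ] H)) := by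
  rw [VonNeumannAlgebra.coe_toStarSubalgebra, ← M.centralizer_centralizer]
  exact Set.isClosed_centralizer _

theorem isBaerStarRing_vonNeumannAlgebra (M : VonNeumannAlgebra H) :
    IsBaerStarRing M.toStarSubalgebra := by
  intro V
  obtain ⟨Q, hQ⟩ := isBaerStarRing_clm (Subtype.val '' V)
  have hQM : Q ∈ M := hQ.mem_vonNeumannAlgebra (by rintro _ ⟨y, -, rfl⟩; exact y.2)
  refine ⟨⟨Q, hQM⟩, ⟨Subtype.ext hQ.isStarProjection.isIdempotentElem.eq,
    Subtype.ext hQ.isStarProjection.isSelfAdjoint.star_eq⟩, fun x => ?_⟩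
  simpa [Subtype.ext_iff] using hQ.mul_eq_zero_iff x

end BaerStarRing

section DecreasingIdempotents

variable {R : Type*} [Ring R] {Q : ℕ → R}

theorem mul_sub_succ_of_mul_eq_max (hQ : ∀ i j, Q i * Q j = Q (max i j)) (i j : ℕ) :
    Q j * (Q i - Q (i + 1)) = if j ≤ i then Q i - Q (i + 1) else 0 := by
  rw [mul_sub, hQ, hQ]
  split_ifs with h
  · rw [max_eq_right h, max_eq_right (by omega)]
  · rw [max_eq_left (by omega), max_eq_left (by omega), sub_self]

theorem commute_of_mul_eq_max (hQ : ∀ i j, Q i * Q j = Q (max i j)) (i j : ℕ) :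
    Commute (Q i) (Q j) := by
  rw [commute_iff_eq, hQ, hQ, max_comm]

/-- In the Abel summation `∑ j < m, Q (j + 1) = ∑ i ≤ m, i • (Q i - Q (i + 1))` for `Q (m + 1) = 0`,
the differences `Q i - Q (i + 1)` are orthogonal idempotents. -/
theorem sum_mul_sub_succ_of_mul_eq_max (hQ : ∀ i j, Q i * Q j = Q (max i j)) {m i : ℕ}
    (hi : i ≤ m) :
    (∑ j ∈ Finset.range m, Q (j + 1)) * (Q i - Q (i + 1)) = i • (Q i - Q (i + 1)) := by
  have hfilter : Finset.filter (fun j => j + 1 ≤ i) (Finset.range m) = Finset.range i := by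
    ext j
    simp only [Finset.mem_filter, Finset.mem_range]
    omega
  simp only [Finset.sum_mul, mul_sub_succ_of_mul_eq_max hQ]
  rw [← Finset.sum_filter, Finset.sum_const, hfilter, Finset.card_range]

end DecreasingIdempotents

section SkewDerivation

variable {A : Type*} [Ring A] [StarRing A]

/-- A derivation anticommuting with the involution, such as `x ↦ h * x - x * h` for self-adjoint
`h`. -/
structure IsSkewDerivation (D : A → A) : Prop where
  leibniz : ∀ x y, D (x * y) = D x * y + x * D y
  map_star : ∀ x, D (star x) = -star (D x)

namespace IsSkewDerivation

variable {D : A → A}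

theorem map_one (hD : IsSkewDerivation D) : D 1 = 0 := by
  simpa using hD.leibniz 1 1

theorem star_apply (hD : IsSkewDerivation D) (x : A) : star (D x) = -D (star x) := by
  rw [hD.map_star, neg_neg]

theorem apply_leftSupport_eq_zero (hD : IsSkewDerivation D) {Q : A} {V : Set A}
    (hQ : IsLeftSupport Q V) (hV : Set.MapsTo D V V) : D Q = 0 := by
  have hright : D Q * Q = 0 := (hQ.mul_eq_zero_iff _).2 fun y hy => by
    simpa [hQ.mul_eq_self hy, hQ.mul_eq_self (hV hy)] using hD.leibniz Q y
  have hleft : Q * D Q = 0 := by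
    simpa [hD.star_apply, hQ.isStarProjection.isSelfAdjoint.star_eq] using congrArg star hright
  have hidem := hD.leibniz Q Q
  rwa [hQ.isStarProjection.isIdempotentElem.eq, hright, hleft, add_zero] at hidem

end IsSkewDerivation

end SkewDerivation

section InnerDerivation

variable {A : Type*} [NormedRing A] [NormedAlgebra ℂ A]

/-- The inner derivation `x ↦ h * x - x * h` implemented by `h`, as a continuous linear map in both
variables. -/
noncomputable def innerDerivation : A →L[ℂ] A →L[ℂ] A :=
  ContinuousLinearMap.mul ℂ A - (ContinuousLinearMap.mul ℂ A).flip

theorem innerDerivation_apply (h x : A) : innerDerivation h x = h * x - x * h := by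
  simp [innerDerivation]

theorem mul_mul_mem_spectralSubspace {D : A →L[ℂ] A}
    (hD : ∀ x y, D (x * y) = D x * y + x * D y) {p q h x : A} {a b l : ℝ} (hDp : D p = 0)
    (hDq : D q = 0) (hp : p * h = a • p) (hq : h * q = b • q)
    (hx : x ∈ spectralSubspace (D - innerDerivation h) l) :
    p * x * q ∈ spectralSubspace D (l + (a - b)) := by
  refine map_mem_spectralSubspace
    ((ContinuousLinearMap.mulLeftRight ℂ A p q).restrictScalars ℝ) (fun v => ?_) hx
  have hphv : p * (h * v) * q = a • (p * v * q) := by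
    rw [← mul_assoc, hp, smul_mul_assoc, smul_mul_assoc]
  have hpvh : p * (v * h) * q = b • (p * v * q) := by
    rw [← mul_assoc, mul_assoc, hq, mul_smul_comm]
  simp only [ContinuousLinearMap.coe_restrictScalars', ContinuousLinearMap.mulLeftRight_apply, hD,
    hDp, hDq, sub_apply, innerDerivation_apply, mul_sub, sub_mul, hphv, hpvh, zero_mul, mul_zero,
    zero_add, add_zero, sub_smul]
  abel

variable [StarRing A]

theorem IsLeftSupport.mul_eq_zero_of_mem_spectralSubspace {D : A →L[ℂ] A}
    (hD : ∀ x y, D (x * y) = D x * y + x * D y) {P Q y : A} {k l m : ℝ}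
    (hP : IsLeftSupport P (spectralSubspace D k)) (hQ : IsLeftSupport Q (spectralSubspace D m))
    (hy : y ∈ spectralSubspace D l) (hk : k ≤ l + m) (hPy : P * y = 0) : y * Q = 0 := by
  refine (hQ.mul_eq_zero_iff y).2 fun z hz => ?_
  have hyz := spectralSubspace_antitone D hk (mul_mem_spectralSubspace hD hy hz)
  rw [← hP.mul_eq_self hyz, ← mul_assoc, hPy, zero_mul]

namespace IsSkewDerivation

variable {D : A →L[ℂ] A}

theorem sub_innerDerivation (hD : IsSkewDerivation D) {h : A} (hh : IsSelfAdjoint h) :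
    IsSkewDerivation (D - innerDerivation h) where
  leibniz x y := by
    simp only [sub_apply, innerDerivation_apply, hD.leibniz, sub_mul, mul_sub, mul_assoc]
    abel
  map_star x := by
    simp only [sub_apply, innerDerivation_apply, hD.map_star, star_sub, star_mul, hh.star_eq]
    abel

theorem star_mem_spectralSubspace [NormedStarGroup A] [StarModule ℂ A] (hD : IsSkewDerivation D)
    {l : ℝ} {x : A} (hx : x ∈ spectralSubspace (-D) l) : star x ∈ spectralSubspace D l := by
  simpa using map_mem_spectralSubspace (N' := D) (c := 0) ((starL' ℝ : A ≃L[ℝ] A) : A →L[ℝ] A)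
    (by simp [hD.map_star]) hx

end IsSkewDerivation

end InnerDerivation

section Approximation

theorem IsLeftSupport.mul_eq_max {R : Type*} [Ring R] [StarRing R] {Q : ℕ → R} {V : ℕ → Set R}
    (hQ : ∀ j, IsLeftSupport (Q j) (V j)) (hV : Antitone V) (i j : ℕ) :
    Q i * Q j = Q (max i j) := by
  rcases le_total i j with h | h
  · rw [max_eq_right h, (hQ j).mul_of_subset (hQ i) (hV h)]
  · rw [max_eq_left h, (hQ i).mul_of_superset (hQ j) (hV h)]

theorem eq_zero_of_forall_mul_mul_eq_zero {ι R : Type*} [Semiring R] {s : Finset ι} {P : ι → R}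
    {x : R} (hP : ∑ i ∈ s, P i = 1) (h : ∀ i ∈ s, ∀ j ∈ s, P i * x * P j = 0) : x = 0 := by
  rw [← one_mul x, ← mul_one (1 * x), ← hP, Finset.sum_mul, Finset.sum_mul_sum]
  exact Finset.sum_eq_zero fun i hi => Finset.sum_eq_zero fun j hj => h i hi j hj

variable {A : Type*} [NormedRing A] [NormedAlgebra ℂ A] [StarRing A]

namespace IsSkewDerivation

variable {D : A →L[ℂ] A}

/-- On the corner `(Q i - Q (i + 1)) A (Q j - Q (j + 1))` the step function `h` differs from `D` by
a shift of the spectrum by `(i - j) κ`; an element of the corner that increases the spectrum by more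
than `κ` beyond this shift is annihilated by `Q (i + 1)` and hence vanishes. -/
theorem spectralSubspace_sub_eq_bot (hD : IsSkewDerivation D) {κ l : ℝ} {m : ℕ} {Q : ℕ → A}
    (hQ : ∀ j : ℕ, IsLeftSupport (Q j) (spectralSubspace D (j * κ))) (hκ : 0 ≤ κ) (hl : κ ≤ l)
    (h0 : Q 0 = 1) (hm : Q (m + 1) = 0) :
    spectralSubspace (D - innerDerivation (κ • ∑ j ∈ Finset.range m, Q (j + 1))) l = ⊥ := by
  set h := κ • ∑ j ∈ Finset.range m, Q (j + 1) with hh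
  set P : ℕ → A := fun i => Q i - Q (i + 1) with hP
  have hmax := IsLeftSupport.mul_eq_max hQ fun i j hij =>
    spectralSubspace_antitone D (by gcongr)
  have hDP (i : ℕ) : D (P i) = 0 := by
    have hDQ (j : ℕ) : D (Q j) = 0 :=
      hD.apply_leftSupport_eq_zero (hQ j) fun _ => apply_mem_spectralSubspace
    simp only [hP, map_sub, hDQ, sub_self]
  have hhP (i : ℕ) (hi : i ≤ m) : h * P i = (i * κ) • P i := by
    rw [hh, smul_mul_assoc, sum_mul_sub_succ_of_mul_eq_max hmax hi, ← Nat.cast_smul_eq_nsmul ℝ,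
      smul_smul, mul_comm]
  have hcomm (i : ℕ) : Commute h (P i) :=
    .smul_left (.sum_left _ _ _ fun j _ => .sub_right (commute_of_mul_eq_max hmax _ _)
      (commute_of_mul_eq_max hmax _ _)) κ
  refine (Submodule.eq_bot_iff _).2 fun x hx => ?_
  refine eq_zero_of_forall_mul_mul_eq_zero (s := Finset.range (m + 1)) (P := P) ?_ ?_
  · rw [Finset.sum_range_sub', h0, hm, sub_zero]
  intro i hi j hj
  have hy : P i * x * P j ∈ spectralSubspace D (l + (i * κ - j * κ)) :=
    mul_mul_mem_spectralSubspace hD.leibniz (hDP i) (hDP j)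
      (by rw [← (hcomm i).eq, hhP i (Finset.mem_range_succ_iff.1 hi)])
      (hhP j (Finset.mem_range_succ_iff.1 hj)) hx
  have hQP : Q (i + 1) * P i = 0 :=
    (mul_sub_succ_of_mul_eq_max hmax i (i + 1)).trans (if_neg (by omega))
  have hPQ : P j * Q j = P j := by
    rw [((commute_of_mul_eq_max hmax j j).sub_left (commute_of_mul_eq_max hmax (j + 1) j)).eq]
    exact (mul_sub_succ_of_mul_eq_max hmax j j).trans (if_pos le_rfl)
  rw [← hPQ, ← mul_assoc]
  refine (hQ (i + 1)).mul_eq_zero_of_mem_spectralSubspace hD.leibniz (hQ j) hy ?_ ?_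
  · push_cast
    linarith
  · rw [← mul_assoc, ← mul_assoc, hQP, zero_mul, zero_mul]

theorem exists_forall_spectralSubspace_sub_eq_bot [CStarRing A] [StarModule ℂ A]
    (hA : IsBaerStarRing A) (hD : IsSkewDerivation D) {m : ℕ} (hm : m ≠ 0) (hD0 : D ≠ 0) :
    ∃ h : A, IsSelfAdjoint h ∧ ‖h‖ ≤ ‖D‖ ∧
      ∀ l, ‖D‖ / m < l → spectralSubspace (D - innerDerivation h) l = ⊥ := by
  set κ : ℝ := ‖D‖ / m
  have hmκ : m * κ = ‖D‖ := mul_div_cancel₀ _ (Nat.cast_ne_zero.2 hm)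
  have hκ0 : 0 < κ := by positivity
  choose Q hQ using fun j : ℕ => hA (spectralSubspace D (j * κ))
  have h0 : Q 0 = 1 := by
    have hone : (1 : A) ∈ spectralSubspace D ((0 : ℕ) * κ) :=
      mem_spectralSubspace_of_apply_eq_smul (by simp [hD.map_one])
    simpa using (hQ 0).mul_eq_self hone
  have hlast : Q (m + 1) = 0 := by
    rw [← one_mul (Q _), (hQ _).mul_eq_zero_iff, spectralSubspace_eq_bot_of_norm_lt]
    · simp
    · push_cast
      linarith
  refine ⟨κ • ∑ j ∈ Finset.range m, Q (j + 1), ?_, ?_, fun l hl =>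
    hD.spectralSubspace_sub_eq_bot hQ hκ0.le hl.le h0 hlast⟩
  · exact .smul (.all κ) (isSelfAdjoint_sum _ fun j _ => (hQ _).isStarProjection.isSelfAdjoint)
  · rw [norm_smul, Real.norm_of_nonneg hκ0.le, ← hmκ, mul_comm]
    gcongr
    simpa using norm_sum_le_of_le (Finset.range m) fun j _ =>
      (hQ (j + 1)).isStarProjection.norm_le

end IsSkewDerivation

end Approximation

section CStarAlgebra

variable {A : Type*} [CStarAlgebra A]

section Order

variable [PartialOrder A] [StarOrderedRing A]

theorem mul_add_mul_le_smul_mul_self_add {b y : A} (hb : IsSelfAdjoint b) (hy : IsSelfAdjoint y)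
    {s : ℝ} (hs : 0 < s) : b * y + y * b ≤ s • (b * b) + s⁻¹ • (y * y) := by
  have h : 0 ≤ s⁻¹ • (star (y - s • b) * (y - s • b)) :=
    smul_nonneg (inv_nonneg.2 hs.le) (star_mul_self_nonneg _)
  have hexpand : s⁻¹ • (star (y - s • b) * (y - s • b)) =
      s • (b * b) + s⁻¹ • (y * y) - (b * y + y * b) := by
    simp only [star_sub, star_smul, star_trivial, hb.star_eq, hy.star_eq, sub_mul, mul_sub,
      smul_mul_assoc, mul_smul_comm, smul_sub, inv_smul_smul₀ hs.ne']
    abel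
  rwa [hexpand, sub_nonneg] at h

theorem exists_pos_algebraMap_le_mul_self {b y : A} (hb : IsSelfAdjoint b) (hy : IsSelfAdjoint y)
    {δ : ℝ} (hδ : 0 < δ) (h : algebraMap ℝ A δ ≤ y * y + (b * y + y * b)) :
    ∃ ε : ℝ, 0 < ε ∧ algebraMap ℝ A ε ≤ y * y := by
  obtain ⟨s, hs, hsb⟩ : ∃ s : ℝ, 0 < s ∧ s * ‖b * b‖ ≤ δ / 2 :=
    ⟨δ / 2 / (‖b * b‖ + 1), by positivity, by
      rw [div_mul_eq_mul_div, div_le_iff₀ (by positivity)]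
      gcongr
      linarith⟩
  have hbb : s • (b * b) ≤ algebraMap ℝ A (δ / 2) := by
    have hsa : IsSelfAdjoint (s • (b * b)) := by
      simp [IsSelfAdjoint, star_smul, star_mul, hb.star_eq]
    refine hsa.le_algebraMap_norm_self.trans (algebraMap_mono A ?_)
    rwa [norm_smul, Real.norm_of_nonneg hs.le]
  have hK : 0 < 1 + s⁻¹ := by positivity
  have hle : algebraMap ℝ A (δ / 2) ≤ (1 + s⁻¹) • (y * y) := by
    refine le_of_add_le_add_left (a := algebraMap ℝ A (δ / 2)) ?_
    calc algebraMap ℝ A (δ / 2) + algebraMap ℝ A (δ / 2)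
        ≤ y * y + (b * y + y * b) := by rwa [← map_add, add_halves]
      _ ≤ y * y + (algebraMap ℝ A (δ / 2) + s⁻¹ • (y * y)) := by
        grw [mul_add_mul_le_smul_mul_self_add hb hy hs, hbb]
      _ = algebraMap ℝ A (δ / 2) + (1 + s⁻¹) • (y * y) := by
        rw [add_smul, one_smul, add_left_comm]
  refine ⟨(1 + s⁻¹)⁻¹ * (δ / 2), by positivity, ?_⟩
  rw [Algebra.algebraMap_eq_smul_one, mul_smul, inv_smul_le_iff_of_pos hK,
    ← Algebra.algebraMap_eq_smul_one]
  exact hle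

/-- At the maximum of its spectrum `a` cannot be decreased to first order by a perturbation that
vanishes with `‖a‖ - a`. -/
theorem norm_le_norm_sub_mul_add_mul {a b y : A} (ha : 0 ≤ a) (hb : IsSelfAdjoint b)
    (hy : IsSelfAdjoint y) (hya : y * y = algebraMap ℝ A ‖a‖ - a) :
    ‖a‖ ≤ ‖a - (b * y + y * b)‖ := by
  by_contra! hlt
  set e := a - (b * y + y * b) with he
  have hesa : IsSelfAdjoint e := by
    simp [IsSelfAdjoint, he, star_mul, hb.star_eq, hy.star_eq, ha.isSelfAdjoint.star_eq, add_comm]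
  obtain ⟨ε, hε, hle⟩ := exists_pos_algebraMap_le_mul_self hb hy (sub_pos.2 hlt) (by
    rw [map_sub, hya, sub_add, ← he]
    exact sub_le_sub_left hesa.le_algebraMap_norm_self _)
  rw [hya, le_sub_comm, ← map_sub] at hle
  have hmax : ‖a‖ ≤ max (‖a‖ - ε) ‖e‖ :=
    (CStarAlgebra.norm_le_iff_le_algebraMap a (le_max_of_le_right (norm_nonneg e)) ha).2
      (hle.trans (algebraMap_mono A (le_max_left _ _)))
  exact hmax.not_gt (max_lt (sub_lt_self _ hε) hlt)

end Order

namespace IsSkewDerivation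

theorem abs_mul_norm_le_of_nonneg [PartialOrder A] [StarOrderedRing A] {D : A →ₗ[ℂ] A}
    (hD : IsSkewDerivation D) {a : A} (ha : 0 ≤ a) (t : ℝ) :
    |t| * ‖a‖ ≤ ‖(t * I : ℂ) • a - D a‖ := by
  rcases eq_or_ne t 0 with rfl | ht
  · simp
  have hnonneg : 0 ≤ algebraMap ℝ A ‖a‖ - a :=
    sub_nonneg.2 ha.isSelfAdjoint.le_algebraMap_norm_self
  set y := CFC.sqrt (algebraMap ℝ A ‖a‖ - a)
  have hysa : IsSelfAdjoint y := (CFC.sqrt_nonneg _).isSelfAdjoint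
  have hya : y * y = algebraMap ℝ A ‖a‖ - a := CFC.sqrt_mul_sqrt_self _ hnonneg
  set c : ℂ := t * I with hc
  have hc0 : c ≠ 0 := by simp [hc, ht]
  set b := -c⁻¹ • D y with hb
  have hbsa : IsSelfAdjoint b := by
    have hcstar : star c⁻¹ = -c⁻¹ := by simp [hc]
    rw [IsSelfAdjoint, hb, star_smul, star_neg, hcstar, hD.star_apply, hysa.star_eq, neg_neg,
      smul_neg, neg_smul]
  have hDa : c • a - D a = c • (a - (b * y + y * b)) := by
    have hay : a = (‖a‖ : ℂ) • 1 - y * y := by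
      rw [hya, Algebra.algebraMap_eq_smul_one, Complex.coe_smul, sub_sub_cancel]
    have hDay : D a = -(D y * y + y * D y) := by
      rw [hay, map_sub, map_smul, hD.map_one, smul_zero, zero_sub, hD.leibniz]
    rw [hDay, smul_sub, hb, smul_mul_assoc, mul_smul_comm, ← smul_add, smul_smul, mul_neg,
      mul_inv_cancel₀ hc0, neg_one_smul]
  have hnc : ‖c‖ = |t| := by simp [hc]
  rw [hDa, norm_smul, hnc]
  gcongr
  exact norm_le_norm_sub_mul_add_mul ha hbsa hysa hya

theorem isHermitianOperator {D : A →ₗ[ℂ] A} (hD : IsSkewDerivation D) :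
    IsHermitianOperator D := by
  let := CStarAlgebra.spectralOrder A
  have := CStarAlgebra.spectralOrderedRing A
  intro z x
  rcases eq_or_ne x 0 with rfl | hx
  · simp
  set w := z • x - D x with hw
  have hcomm : star x * w - star w * x =
      ((2 * z.im : ℝ) * I) • (star x * x) - D (star x * x) := by
    rw [← sub_conj, hD.leibniz]
    simp only [hw, star_sub, star_smul, hD.star_apply, mul_sub, sub_mul, neg_mul, mul_smul_comm,
      smul_mul_assoc, sub_smul, starRingEnd_apply]
    abel
  have h := hD.abs_mul_norm_le_of_nonneg (star_mul_self_nonneg x) (2 * z.im)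
  rw [← hcomm, CStarRing.norm_star_mul_self, abs_mul, abs_two] at h
  have hle : ‖star x * w - star w * x‖ ≤ 2 * (‖x‖ * ‖w‖) := by
    refine (norm_sub_le_of_le (norm_mul_le _ _) (norm_mul_le _ _)).trans_eq ?_
    rw [norm_star, norm_star]
    ring
  have hx0 : 0 < ‖x‖ := norm_pos_iff.2 hx
  refine le_of_mul_le_mul_left ?_ hx0
  linarith

end IsSkewDerivation

end CStarAlgebra

section SuccessiveApproximation

theorem exists_apply_eq_of_forall_exists_norm_sub_le {F G : Type*} [NormedAddCommGroup F]
    [NormedAddCommGroup G] [CompleteSpace G] (f : G →+ F) (hf : Continuous f) {S : Set F} {C r : ℝ}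
    (hr0 : 0 ≤ r) (hr1 : r < 1)
    (h : ∀ y ∈ S, ∃ g, ‖g‖ ≤ C * ‖y‖ ∧ y - f g ∈ S ∧ ‖y - f g‖ ≤ r * ‖y‖) {y : F} (hy : y ∈ S) :
    ∃ g, f g = y := by
  choose! g hg hS hle using h
  set u : ℕ → F := fun n => (fun y => y - f (g y))^[n] y with hu
  have hsucc (n : ℕ) : u (n + 1) = u n - f (g (u n)) := Function.iterate_succ_apply' _ _ _
  have hmem (n : ℕ) : u n ∈ S := by
    induction n with
    | zero => exact hy
    | succ n ih => exact hsucc n ▸ hS _ ih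
  have hnorm (n : ℕ) : ‖u n‖ ≤ ‖y‖ * r ^ n := by
    induction n with
    | zero => simp [hu]
    | succ n ih =>
      rw [hsucc, pow_succ', mul_left_comm]
      exact (hle _ (hmem n)).trans (mul_le_mul_of_nonneg_left ih hr0)
  have hgeom : Summable fun n => ‖y‖ * r ^ n := (summable_geometric_of_lt_one hr0 hr1).mul_left _
  have hsum : Summable fun n => g (u n) := by
    refine .of_norm_bounded (hgeom.mul_left |C|) fun n => (hg _ (hmem n)).trans ?_
    exact mul_le_mul (le_abs_self C) (hnorm n) (norm_nonneg _) (abs_nonneg C)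
  have hpartial (n : ℕ) : f (∑ k ∈ Finset.range n, g (u k)) = y - u n := by
    have hstep (k : ℕ) : f (g (u k)) = u k - u (k + 1) := by rw [hsucc, sub_sub_cancel]
    simp only [map_sum, hstep]
    exact Finset.sum_range_sub' u n
  have hlim : Tendsto (fun n => y - u n) atTop (𝓝 y) := by
    simpa using (squeeze_zero_norm hnorm hgeom.tendsto_atTop_zero).const_sub y
  refine ⟨∑' n, g (u n), tendsto_nhds_unique ?_ hlim⟩
  simpa only [Function.comp_def, hpartial] using
    (hf.tendsto _).comp hsum.hasSum.tendsto_sum_nat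

end SuccessiveApproximation

section Inner

variable {A : Type*} [CStarAlgebra A]

namespace IsSkewDerivation

variable {D : A →L[ℂ] A}

theorem exists_norm_sub_innerDerivation_le (hA : IsBaerStarRing A) (hD : IsSkewDerivation D) :
    ∃ h : A, IsSelfAdjoint h ∧ ‖h‖ ≤ ‖D‖ ∧ ‖D - innerDerivation h‖ ≤ 2⁻¹ * ‖D‖ := by
  rcases eq_or_ne D 0 with rfl | hD0
  · exact ⟨0, .zero A, by simp, by simp⟩
  obtain ⟨h, hh, hnorm, hbot⟩ :=
    hD.exists_forall_spectralSubspace_sub_eq_bot hA (m := 4) (by norm_num) hD0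
  refine ⟨h, hh, hnorm, ?_⟩
  have hsub := hD.sub_innerDerivation hh
  have hherm : IsHermitianOperator (D - innerDerivation h) :=
    isHermitianOperator (D := (D - innerDerivation h : A →L[ℂ] A).toLinearMap) hsub
  refine (hherm.norm_le_two_mul_of_spectralSubspace_eq_bot (by positivity) hbot
    fun l hl => (Submodule.eq_bot_iff _).2 fun x hx => ?_).trans_eq ?_
  · exact star_eq_zero.1 ((Submodule.mem_bot ℂ).1 (hbot l hl ▸ hsub.star_mem_spectralSubspace hx))
  · push_cast
    ring

theorem exists_eq_innerDerivation (hA : IsBaerStarRing A) (hD : IsSkewDerivation D) :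
    ∃ h : A, innerDerivation h = D := by
  refine exists_apply_eq_of_forall_exists_norm_sub_le (C := 1) (r := 2⁻¹)
    (S := {T : A →L[ℂ] A | IsSkewDerivation T})
    (innerDerivation : A →L[ℂ] A →L[ℂ] A).toLinearMap.toAddMonoidHom innerDerivation.continuous
    (by norm_num) (by norm_num) (fun T hT => ?_) hD
  obtain ⟨h, hh, hnorm, hhalf⟩ := IsSkewDerivation.exists_norm_sub_innerDerivation_le hA hT
  exact ⟨h, by rwa [one_mul], IsSkewDerivation.sub_innerDerivation hT hh, hhalf⟩

theorem exists_eq_mul_sub_mul (hA : IsBaerStarRing A) {D : A →ₗ[ℂ] A}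
    (hD : IsSkewDerivation D) : ∃ h : A, ∀ x, D x = h * x - x * h := by
  let T : A →L[ℂ] A := ⟨D, hD.isHermitianOperator.continuous⟩
  obtain ⟨h, hh⟩ := exists_eq_innerDerivation hA (D := T) hD
  refine ⟨h, fun x => ?_⟩
  rw [← innerDerivation_apply, hh]
  rfl

end IsSkewDerivation

section SkewPart

variable {B : Type*} [Ring B] [StarRing B] [Algebra ℂ B] [StarModule ℂ B]

/-- The part `(D - D') / 2` of a linear map `D` that anticommutes with the involution, where
`D' x = star (D (star x))`. -/
noncomputable def skewPart (D : B →ₗ[ℂ] B) : B →ₗ[ℂ] B where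
  toFun x := (2⁻¹ : ℂ) • (D x - star (D (star x)))
  map_add' x y := by
    simp only [map_add, star_add, ← smul_add]
    rw [add_sub_add_comm]
  map_smul' c x := by
    simp only [star_smul, map_smul, star_star, ← smul_sub, smul_comm c, RingHom.id_apply]

theorem skewPart_apply (D : B →ₗ[ℂ] B) (x : B) :
    skewPart D x = (2⁻¹ : ℂ) • (D x - star (D (star x))) := rfl

theorem isSkewDerivation_skewPart {D : B →ₗ[ℂ] B}
    (hD : ∀ x y, D (x * y) = D x * y + x * D y) : IsSkewDerivation (skewPart D) where
  leibniz x y := by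
    simp only [skewPart_apply, star_mul, hD, star_add, star_star, smul_mul_assoc, mul_smul_comm,
      sub_mul, mul_sub, ← smul_add]
    congr 1
    abel
  map_star x := by
    rw [skewPart_apply, skewPart_apply, star_star, star_smul, star_sub, star_star, ← smul_neg,
      neg_sub]
    simp

theorem skewPart_add_I_smul_skewPart (D : B →ₗ[ℂ] B) (x : B) :
    skewPart D x + I • skewPart (-I • D) x = D x := by
  have hstar : star (-I) = I := by simp
  have hI : I * (2⁻¹ * I) = -2⁻¹ := by rw [mul_left_comm, I_mul_I, mul_neg_one]
  simp only [skewPart_apply, LinearMap.smul_apply, star_smul, hstar]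
  match_scalars <;> linear_combination -hI

end SkewPart

theorem sakai_kadison_inner_general (hA : IsBaerStarRing A) (D : A →ₗ[ℂ] A)
    (hD : ∀ x y, D (x * y) = D x * y + x * D y) : ∃ a : A, ∀ x, D x = a * x - x * a := by
  obtain ⟨h, hh⟩ := (isSkewDerivation_skewPart hD).exists_eq_mul_sub_mul hA
  have hDI (x y : A) : (-I • D) (x * y) = (-I • D) x * y + x * (-I • D) y := by
    simp only [LinearMap.smul_apply, hD, smul_add, smul_mul_assoc, mul_smul_comm]
  obtain ⟨k, hk⟩ := (isSkewDerivation_skewPart hDI).exists_eq_mul_sub_mul hA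
  refine ⟨h + I • k, fun x => ?_⟩
  rw [← skewPart_add_I_smul_skewPart D x, hh, hk, smul_sub, add_mul, mul_add, smul_mul_assoc,
    mul_smul_comm]
  abel

end Inner

/-- (Sakai–Kadison) Every derivation of a von Neumann algebra is inner. -/
theorem sakai_kadison_inner (H : Type*) [NormedAddCommGroup H] [InnerProductSpace ℂ H]
    [CompleteSpace H] (M : VonNeumannAlgebra H)
    (D : M.toStarSubalgebra →ₗ[ℂ] M.toStarSubalgebra)
    (hD : ∀ x y : M.toStarSubalgebra, D (x * y) = D x * y + x * D y) :
    ∃ a : M.toStarSubalgebra, ∀ x : M.toStarSubalgebra, D x = a * x - x * a := by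
  have := isClosed_vonNeumannAlgebra M
  exact sakai_kadison_inner_general (isBaerStarRing_vonNeumannAlgebra M) D hD
end

section
/- (Pearcy–Topping) Let H be a separable infinite-dimensional complex Hilbert space. Then every compact operator T on H is a finite sum of commutators of compact operators: there exist n ∈ ℕ and compact operators A₁, …, Aₙ, B₁, …, Bₙ on H such that T = Σᵢ₌₁ⁿ (AᵢBᵢ − BᵢAᵢ). -/
/-!
Let `V : ℕ → H →ₗᵢ H` have pairwise orthogonal ranges. Since `‖V₀XV₀* + V₁XV₁*‖ ≤ ‖X‖`, the map
`X ↦ T + ½(V₀XV₀* + V₁XV₁*)` is a contraction of the space of compact operators; at its fixed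
point, `T = ½(X - V₀XV₀*) + ½(X - V₁XV₁*)`. Factor `X = AB` with `A` and `B` compact by sending
the terms of a series of finite-rank operators with sum `X` through the ranges of the `Vₙ`, where
they do not interact. For an isometry `S`, the identity `AB - S(AB)S* = [A, B] + [BS*, SA]` turns
both halves of `T` into commutators.
-/

open ContinuousLinearMap Filter

section FiniteRank

variable {𝕜 E F : Type*} [RCLike 𝕜] [NormedAddCommGroup E] [NormedSpace 𝕜 E]

section NormedSpace

variable [NormedAddCommGroup F] [NormedSpace 𝕜 F]

theorem isCompactOperator_of_hasFiniteRange {T : E →L[𝕜] F}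
    (hT : T.toLinearMap.HasFiniteRange) : IsCompactOperator T := by
  have : FiniteDimensional 𝕜 T.range := Module.Finite.of_fg hT.fg_range
  have : ProperSpace T.range := FiniteDimensional.proper_rclike 𝕜 _
  exact (isCompactOperator_of_locallyCompactSpace_rng T.range.subtypeL).comp_clm T.rangeRestrict

theorem isCompactOperator_of_hasSum [CompleteSpace F] {ι : Type*} {T : ι → E →L[𝕜] F}
    {S : E →L[𝕜] F} (hS : HasSum T S) (hT : ∀ i, IsCompactOperator (T i)) :
    IsCompactOperator S :=
  isCompactOperator_of_tendsto hS <| .of_forall fun _ ↦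
    sum_mem (S := compactOperator (RingHom.id 𝕜) E F) fun i _ ↦ hT i

end NormedSpace

variable [NormedAddCommGroup F] [InnerProductSpace 𝕜 F]

theorem hasFiniteRange_starProjection (U : Submodule 𝕜 F) [FiniteDimensional 𝕜 U] :
    U.starProjection.toLinearMap.HasFiniteRange :=
  ((LinearMap.HasNoetherianRange.of_isNoetherian_rng
    (f := U.orthogonalProjectionOnto.toLinearMap)).comp_left U.subtype).hasFiniteRange

theorem exists_norm_sub_starProjection_comp_le {T : E →L[𝕜] F} (hT : IsCompactOperator T)
    {ε : ℝ} (hε : 0 < ε) :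
    ∃ (U : Submodule 𝕜 F) (_ : FiniteDimensional 𝕜 U), ‖T - U.starProjection ∘L T‖ ≤ ε := by
  have hbounded : TotallyBounded (T '' Metric.closedBall 0 1) :=
    (IsCompactOperator.isCompact_closure_image_closedBall (f := T.toLinearMap) hT
      1).totallyBounded.subset subset_closure
  obtain ⟨t, ht, hcover⟩ := Metric.totallyBounded_iff.1 hbounded ε hε
  have := FiniteDimensional.span_of_finite 𝕜 ht
  set U : Submodule 𝕜 F := .span 𝕜 t
  refine ⟨U, this, opNorm_le_of_unit_norm hε.le fun x hx ↦ ?_⟩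
  obtain ⟨y, hy, hxy⟩ := Set.mem_iUnion₂.1 (hcover ⟨x, by simp [hx], rfl⟩)
  calc ‖T x - U.starProjection (T x)‖
    _ = ⨅ u : U, ‖T x - u‖ := U.starProjection_minimal (T x)
    _ ≤ ‖T x - y‖ :=
        ciInf_le ⟨0, by rintro _ ⟨u, rfl⟩; positivity⟩ (⟨y, Submodule.subset_span hy⟩ : U)
    _ ≤ ε := (mem_ball_iff_norm.1 hxy).le

theorem mem_closure_finiteRange {T : E →L[𝕜] F} (hT : IsCompactOperator T) :
    T ∈ closure ((LinearMap.finiteRange 𝕜 E F).comap (coeLM 𝕜) : Set (E →L[𝕜] F)) := by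
  refine Metric.mem_closure_iff.2 fun ε hε ↦ ?_
  obtain ⟨U, _, hU⟩ := exists_norm_sub_starProjection_comp_le hT (half_pos hε)
  refine ⟨U.starProjection ∘L T,
    ((hasFiniteRange_starProjection U).comp_right T.toLinearMap).hasNoetherianRange, ?_⟩
  rw [dist_eq_norm]
  exact hU.trans_lt (half_lt_self hε)

theorem exists_hasSum_hasFiniteRange [CompleteSpace F] {T : E →L[𝕜] F}
    (hT : IsCompactOperator T) {r : ℝ} (hr₀ : 0 < r) (hr₁ : r < 1) :
    ∃ (v : ℕ → E →L[𝕜] F) (C : ℝ), (∀ n, (v n).toLinearMap.HasFiniteRange) ∧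
      (∀ n, ‖v n‖ ≤ C * r ^ n) ∧ HasSum v T := by
  obtain ⟨v, hlim, hfin, -, hlt⟩ := controlled_sum_of_mem_closure
    (s := ((LinearMap.finiteRange 𝕜 E F).comap (coeLM 𝕜)).toAddSubgroup)
    (mem_closure_finiteRange hT) (fun n ↦ pow_pos hr₀ n)
  have hbound (n : ℕ) : ‖v n‖ ≤ max 1 ‖v 0‖ * r ^ n := by
    rcases n.eq_zero_or_pos with rfl | hn
    · simp
    · exact (hlt n hn).le.trans (le_mul_of_one_le_left (by positivity) (le_max_left ..))
  have hsum : Summable v :=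
    .of_norm_bounded ((summable_geometric_of_lt_one hr₀.le hr₁).mul_left _) hbound
  have hT' : ∑' n, v n = T :=
    tendsto_nhds_unique (hsum.hasSum.tendsto_sum_nat.comp (tendsto_add_atTop_nat 1)) hlim
  exact ⟨v, _, fun n ↦ (hfin n).hasFiniteRange, hbound, hT' ▸ hsum.hasSum⟩

end FiniteRank

section OrthogonalIsometries

variable {𝕜 G H : Type*} [RCLike 𝕜] [NormedAddCommGroup G] [InnerProductSpace 𝕜 G]
  [NormedAddCommGroup H] [InnerProductSpace 𝕜 H]

theorem inner_map_eq_zero_of_hilbertBasis {κ : Type*} (b : HilbertBasis κ 𝕜 G)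
    (f : G →L[𝕜] H) {x : H} (h : ∀ k, inner 𝕜 x (f (b k)) = 0) (y : G) :
    inner 𝕜 x (f y) = 0 := by
  have hdense : Dense (Submodule.span 𝕜 (Set.range b) : Set G) :=
    Submodule.dense_iff_topologicalClosure_eq_top.2 b.dense_span
  have hzero : innerSL 𝕜 x ∘L f = 0 := ext_on hdense (by simpa [Set.EqOn] using h)
  simpa using congr($hzero y)

theorem exists_linearIsometry_apply_hilbertBasis [CompleteSpace H] {κ : Type*}
    (b : HilbertBasis κ 𝕜 G) {v : κ → H} (hv : Orthonormal 𝕜 v) :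
    ∃ W : G →ₗᵢ[𝕜] H, ∀ k, W (b k) = v k := by
  classical
  refine ⟨hv.orthogonalFamily.linearIsometry.comp b.repr.toLinearIsometry, fun k ↦ ?_⟩
  simp [b.repr_self, hv.orthogonalFamily.linearIsometry_apply_single]

theorem infinite_of_hilbertBasis (hinf : ¬ FiniteDimensional 𝕜 H) {κ : Type*}
    (b : HilbertBasis κ 𝕜 H) : Infinite κ := by
  refine not_finite_iff_infinite.1 fun _ ↦ hinf ?_
  have := Fintype.ofFinite κ
  exact b.toOrthonormalBasis.toBasis.finiteDimensional_of_finite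

theorem exists_orthogonalFamily_linearIsometry [CompleteSpace H]
    (hinf : ¬ FiniteDimensional 𝕜 H) :
    ∃ V : ℕ → H →ₗᵢ[𝕜] H, OrthogonalFamily 𝕜 (fun _ ↦ H) V := by
  obtain ⟨κ, b, -⟩ := exists_hilbertBasis 𝕜 H
  have : Infinite κ := infinite_of_hilbertBasis hinf b
  obtain ⟨e⟩ : Nonempty (ℕ × κ ≃ κ) := Cardinal.eq.1 (by simp)
  have hinj (n : ℕ) : Function.Injective fun k ↦ e (n, k) :=
    e.injective.comp (Prod.mk_right_injective n)
  choose V hV using fun n ↦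
    exists_linearIsometry_apply_hilbertBasis b (b.orthonormal.comp _ (hinj n))
  refine ⟨V, fun m n hmn x y ↦ ?_⟩
  refine inner_map_eq_zero_of_hilbertBasis b (V n).toContinuousLinearMap (fun l ↦ ?_) y
  rw [inner_eq_zero_symm]
  refine inner_map_eq_zero_of_hilbertBasis b (V m).toContinuousLinearMap (fun k ↦ ?_) x
  have : e (n, l) ≠ e (m, k) := e.injective.ne (by simp [hmn.symm])
  simpa [hV] using b.orthonormal.2 this

variable [CompleteSpace G] [CompleteSpace H] {ι : Type*} {V : ι → G →ₗᵢ[𝕜] H}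

theorem adjoint_comp_eq_zero (hV : OrthogonalFamily 𝕜 (fun _ ↦ G) V) {i j : ι} (hij : i ≠ j) :
    adjoint (V i).toContinuousLinearMap ∘L (V j).toContinuousLinearMap = 0 := by
  ext x
  refine ext_inner_left 𝕜 fun y ↦ ?_
  simpa [adjoint_inner_right] using hV hij y x

theorem sum_norm_adjoint_sq_le (hV : OrthogonalFamily 𝕜 (fun _ ↦ G) V) (s : Finset ι) (x : H) :
    ∑ i ∈ s, ‖adjoint (V i).toContinuousLinearMap x‖ ^ 2 ≤ ‖x‖ ^ 2 := by
  set y : ι → G := fun i ↦ adjoint (V i).toContinuousLinearMap x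
  set p := ∑ i ∈ s, V i (y i)
  have hp : ‖p‖ ^ 2 = ∑ i ∈ s, ‖y i‖ ^ 2 := hV.norm_sum y s
  have hinner : RCLike.re (inner 𝕜 p x) = ‖p‖ ^ 2 := by
    rw [hp, sum_inner, map_sum]
    refine Finset.sum_congr rfl fun i _ ↦ ?_
    rw [← inner_self_eq_norm_sq (𝕜 := 𝕜), adjoint_inner_right]
    rfl
  have hle : ‖p‖ ^ 2 ≤ ‖p‖ * ‖x‖ := hinner ▸ re_inner_le_norm p x
  rw [← hp]
  nlinarith [sq_nonneg (‖p‖ - ‖x‖)]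

theorem norm_sum_comp_adjoint_le (hV : OrthogonalFamily 𝕜 (fun _ ↦ G) V) (s : Finset ι)
    (X : G →L[𝕜] G) :
    ‖∑ i ∈ s, (V i).toContinuousLinearMap ∘L X ∘L adjoint (V i).toContinuousLinearMap‖ ≤ ‖X‖ := by
  refine opNorm_le_bound _ (norm_nonneg X) fun x ↦ le_of_sq_le_sq ?_ (by positivity)
  set y : ι → G := fun i ↦ adjoint (V i).toContinuousLinearMap x
  calc ‖(∑ i ∈ s, (V i).toContinuousLinearMap ∘L X ∘L adjoint (V i).toContinuousLinearMap) x‖ ^ 2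
    _ = ∑ i ∈ s, ‖X (y i)‖ ^ 2 := by simpa [y] using hV.norm_sum (fun i ↦ X (y i)) s
    _ ≤ ∑ i ∈ s, (‖X‖ * ‖y i‖) ^ 2 := by gcongr; exact X.le_opNorm _
    _ = ‖X‖ ^ 2 * ∑ i ∈ s, ‖y i‖ ^ 2 := by simp only [mul_pow, Finset.mul_sum]
    _ ≤ ‖X‖ ^ 2 * ‖x‖ ^ 2 := by gcongr; exact sum_norm_adjoint_sq_le hV s x
    _ = (‖X‖ * ‖x‖) ^ 2 := (mul_pow ..).symm

end OrthogonalIsometries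

section Factorization

theorem hasSum_comp_of_pairwise_comp_eq_zero {𝕜 E F G ι : Type*} [NontriviallyNormedField 𝕜]
    [NormedAddCommGroup E] [NormedSpace 𝕜 E] [NormedAddCommGroup F] [NormedSpace 𝕜 F]
    [NormedAddCommGroup G] [NormedSpace 𝕜 G] {a : ι → F →L[𝕜] G} {A : F →L[𝕜] G}
    {b : ι → E →L[𝕜] F} {B : E →L[𝕜] F} (hA : HasSum a A) (hB : HasSum b B)
    (hab : Pairwise fun i j ↦ a i ∘L b j = 0) : HasSum (fun i ↦ a i ∘L b i) (A ∘L B) := by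
  have hA_comp (j : ι) : A ∘L b j = a j ∘L b j :=
    (((compL 𝕜 E F G).flip (b j)).hasSum hA).unique (hasSum_single j fun i hij ↦ hab hij)
  simpa [hA_comp] using (compL 𝕜 E F G A).hasSum hB

variable {𝕜 E G H : Type*} [RCLike 𝕜] [NormedAddCommGroup E] [NormedSpace 𝕜 E]
  [NormedAddCommGroup G] [InnerProductSpace 𝕜 G] [CompleteSpace G]
  [NormedAddCommGroup H] [InnerProductSpace 𝕜 H] [CompleteSpace H]

theorem norm_starProjection_comp_adjoint_le (U : Submodule 𝕜 G)
    [U.HasOrthogonalProjection] (V : G →ₗᵢ[𝕜] H) :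
    ‖U.starProjection ∘L adjoint V.toContinuousLinearMap‖ ≤ 1 :=
  calc ‖U.starProjection ∘L adjoint V.toContinuousLinearMap‖
    _ ≤ ‖U.starProjection‖ * ‖adjoint V.toContinuousLinearMap‖ := opNorm_comp_le ..
    _ ≤ 1 * 1 := by
        gcongr
        · exact U.starProjection_norm_le
        · rw [LinearIsometryEquiv.norm_map]
          exact V.norm_toContinuousLinearMap_le
    _ = 1 := one_mul 1

theorem starProjection_range_comp_adjoint_comp (V : G →ₗᵢ[𝕜] H)
    (v : E →L[𝕜] G) [v.range.HasOrthogonalProjection] :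
    (v.range.starProjection ∘L adjoint V.toContinuousLinearMap) ∘L
      (V.toContinuousLinearMap ∘L v) = v := by
  ext x
  have hV : adjoint V.toContinuousLinearMap (V (v x)) = v x := congr($(V.adjoint_comp_self) (v x))
  have hproj : v.range.starProjection (v x) = v x :=
    Submodule.starProjection_eq_self_iff.2 (LinearMap.mem_range_self v.toLinearMap x)
  simp [hV, hproj]

theorem exists_isCompactOperator_comp_eq {V : ℕ → G →ₗᵢ[𝕜] H}
    (hV : OrthogonalFamily 𝕜 (fun _ ↦ G) V) {T : E →L[𝕜] G} (hT : IsCompactOperator T) :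
    ∃ (A : H →L[𝕜] G) (B : E →L[𝕜] H),
      IsCompactOperator A ∧ IsCompactOperator B ∧ A ∘L B = T := by
  obtain ⟨v, C, hfin, hbound, hsum⟩ :=
    exists_hasSum_hasFiniteRange hT (r := 4⁻¹) (by norm_num) (by norm_num)
  have (n : ℕ) : FiniteDimensional 𝕜 (v n).range := Module.Finite.of_fg (hfin n).fg_range
  -- `‖v n‖` decays like `4⁻ⁿ`, so a decay of `2⁻ⁿ` can be left to each of the two factors.
  let a (n : ℕ) : H →L[𝕜] G :=
    (2⁻¹ : 𝕜) ^ n • ((v n).range.starProjection ∘L adjoint (V n).toContinuousLinearMap)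
  let b (n : ℕ) : E →L[𝕜] H := (2 : 𝕜) ^ n • ((V n).toContinuousLinearMap ∘L v n)
  have ha_compact (n : ℕ) : IsCompactOperator (a n) :=
    ((isCompactOperator_of_hasFiniteRange (hasFiniteRange_starProjection _)).comp_clm
      (adjoint (V n).toContinuousLinearMap)).smul ((2⁻¹ : 𝕜) ^ n)
  have hb_compact (n : ℕ) : IsCompactOperator (b n) :=
    ((isCompactOperator_of_hasFiniteRange (hfin n)).clm_comp
      (V n).toContinuousLinearMap).smul ((2 : 𝕜) ^ n)
  have hgeom : Summable fun n : ℕ ↦ (2⁻¹ : ℝ) ^ n :=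
    summable_geometric_of_lt_one (by norm_num) (by norm_num)
  have ha : Summable a := .of_norm_bounded hgeom fun n ↦ by
    simpa [a, norm_smul] using norm_starProjection_comp_adjoint_le (v n).range (V n)
  have hb : Summable b := .of_norm_bounded (hgeom.mul_left C) fun n ↦
    calc ‖b n‖
      _ = 2 ^ n * ‖v n‖ := by simp [b, norm_smul, (V n).norm_toContinuousLinearMap_comp]
      _ ≤ 2 ^ n * (C * 4⁻¹ ^ n) := by gcongr; exact hbound n
      _ = C * 2⁻¹ ^ n := by rw [mul_left_comm, ← mul_pow]; norm_num
  have hab_ne : Pairwise fun m n ↦ a m ∘L b n = 0 := fun m n hmn ↦ by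
    ext x
    have hadj : adjoint (V m).toContinuousLinearMap (V n (v n x)) = 0 :=
      congr($(adjoint_comp_eq_zero hV hmn) (v n x))
    simp [a, b, hadj]
  have hab (n : ℕ) : a n ∘L b n = v n := by
    simp [a, b, smul_smul, starProjection_range_comp_adjoint_comp]
  refine ⟨_, _, isCompactOperator_of_hasSum ha.hasSum ha_compact,
    isCompactOperator_of_hasSum hb.hasSum hb_compact, ?_⟩
  exact (hasSum_comp_of_pairwise_comp_eq_zero ha.hasSum hb.hasSum hab_ne).unique
    (by simpa only [hab] using hsum)

end Factorization

section Commutators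

variable {𝕜 H : Type*} [RCLike 𝕜] [NormedAddCommGroup H] [InnerProductSpace 𝕜 H]
  [CompleteSpace H]

theorem exists_isCompactOperator_eq_add_smul_sum {ι : Type*} {V : ι → H →ₗᵢ[𝕜] H}
    (hV : OrthogonalFamily 𝕜 (fun _ ↦ H) V) (s : Finset ι) {c : 𝕜} (hc : ‖c‖ < 1)
    {T : H →L[𝕜] H} (hT : IsCompactOperator T) :
    ∃ X : H →L[𝕜] H, IsCompactOperator X ∧ X = T + c •
      ∑ i ∈ s, (V i).toContinuousLinearMap ∘L X ∘L adjoint (V i).toContinuousLinearMap := by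
  let Ψ (X : H →L[𝕜] H) : H →L[𝕜] H :=
    ∑ i ∈ s, (V i).toContinuousLinearMap ∘L X ∘L adjoint (V i).toContinuousLinearMap
  let Φ (X : H →L[𝕜] H) : H →L[𝕜] H := T + c • Ψ X
  let K : Set (H →L[𝕜] H) := {X | IsCompactOperator X}
  have hΨ {X : H →L[𝕜] H} (hX : X ∈ K) : IsCompactOperator (Ψ X) :=
    sum_mem (S := compactOperator (RingHom.id 𝕜) H H) fun i _ ↦
      (hX.comp_clm (adjoint (V i).toContinuousLinearMap)).clm_comp (V i).toContinuousLinearMap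
  have hΦ : Set.MapsTo Φ K K := fun X hX ↦ hT.add ((hΨ hX).smul c)
  have hlip : LipschitzWith ‖c‖₊ Φ := by
    refine LipschitzWith.of_dist_le_mul fun X Y ↦ ?_
    have hsub : Φ X - Φ Y = c • Ψ (X - Y) := by
      simp only [Φ, Ψ, comp_sub, sub_comp, Finset.sum_sub_distrib, smul_sub,
        add_sub_add_left_eq_sub]
    rw [dist_eq_norm, dist_eq_norm, hsub, norm_smul, coe_nnnorm]
    gcongr
    exact norm_sum_comp_adjoint_le hV s (X - Y)
  have hcontr : ContractingWith ‖c‖₊ (hΦ.restrict Φ K K) := ⟨hc, fun X Y ↦ hlip X Y⟩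
  obtain ⟨X, hX, hfix, -⟩ := hcontr.exists_fixedPoint'
    isClosed_setOfPred_isCompactOperator.isComplete hΦ hT (edist_ne_top _ _)
  exact ⟨X, hX, hfix.symm⟩

theorem mul_sub_mul_mul_eq_of_mul_eq_one {R : Type*} [Ring R] {S S' : R} (h : S' * S = 1)
    (A B : R) :
    A * B - S * (A * B * S') =
      (A * B - B * A) + (B * S' * (S * A) - S * A * (B * S')) := by
  rw [show B * S' * (S * A) = B * (S' * S) * A by noncomm_ring, h]
  noncomm_ring

theorem eq_commutator_add_smul_sum_of_eq_add_smul_sum {k R ι : Type*} [CommRing k] [Ring R]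
    [Algebra k R] {s : Finset ι} {c : k} (hc : c * s.card = 1) {S S' : ι → R}
    (hS : ∀ i, S' i * S i = 1) {T A B : R} (hAB : A * B = T + c • ∑ i ∈ s, S i * (A * B * S' i)) :
    T = (A * B - B * A) +
      c • ∑ i ∈ s, (B * S' i * (S i * A) - S i * A * (B * S' i)) := by
  have hmean (X : R) : c • ∑ _i ∈ s, X = X := by
    rw [Finset.sum_const, ← Nat.cast_smul_eq_nsmul k, smul_smul, hc, one_smul]
  calc T
    _ = A * B - c • ∑ i ∈ s, S i * (A * B * S' i) := eq_sub_of_add_eq hAB.symm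
    _ = c • ∑ i ∈ s, (A * B - S i * (A * B * S' i)) := by
        rw [Finset.sum_sub_distrib, smul_sub, hmean]
    _ = c • ∑ i ∈ s, ((A * B - B * A) + (B * S' i * (S i * A) - S i * A * (B * S' i))) := by
        simp only [mul_sub_mul_mul_eq_of_mul_eq_one (hS _)]
    _ = _ := by rw [Finset.sum_add_distrib, smul_add, hmean]

theorem pearcy_topping_general (hinf : ¬ FiniteDimensional 𝕜 H) {T : H →L[𝕜] H}
    (hT : IsCompactOperator T) :
    ∃ A B : Fin 3 → H →L[𝕜] H,
      (∀ i, IsCompactOperator (A i)) ∧ (∀ i, IsCompactOperator (B i)) ∧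
      T = ∑ i, (A i * B i - B i * A i) := by
  obtain ⟨V, hV⟩ := exists_orthogonalFamily_linearIsometry hinf
  obtain ⟨X, hX, hfix⟩ := exists_isCompactOperator_eq_add_smul_sum
    (hV.comp (Fin.val_injective (n := 2))) Finset.univ (c := 2⁻¹) (by simpa using by norm_num) hT
  obtain ⟨A, B, hA, hB, rfl⟩ := exists_isCompactOperator_comp_eq hV hX
  let S (i : Fin 2) : H →L[𝕜] H := (V i).toContinuousLinearMap
  let S' (i : Fin 2) : H →L[𝕜] H := adjoint (S i)
  have hS (i : Fin 2) : S' i * S i = 1 := (V i).adjoint_comp_self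
  have hsum := eq_commutator_add_smul_sum_of_eq_add_smul_sum (by simp) hS hfix
  refine ⟨Fin.cons A fun i ↦ (2⁻¹ : 𝕜) • (B * S' i), Fin.cons B fun i ↦ S i * A,
    Fin.forall_fin_succ.2 ⟨hA, fun i ↦ (hB.comp_clm (S' i)).smul (2⁻¹ : 𝕜)⟩,
    Fin.forall_fin_succ.2 ⟨hB, fun i ↦ hA.clm_comp (S i)⟩, ?_⟩
  simpa only [Fin.sum_univ_succ (n := 2), Fin.cons_zero, Fin.cons_succ, Finset.smul_sum, smul_sub,
    smul_mul_assoc, mul_smul_comm] using hsum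

end Commutators

/-- (Pearcy–Topping) On a separable infinite-dimensional complex Hilbert space, every
compact operator is a finite sum of commutators of compact operators. -/
theorem pearcy_topping (H : Type*) [NormedAddCommGroup H] [InnerProductSpace ℂ H]
    [CompleteSpace H] [TopologicalSpace.SeparableSpace H]
    (hinf : ¬ FiniteDimensional ℂ H)
    (T : H →L[ℂ] H) (hT : IsCompactOperator T) :
    ∃ (n : ℕ) (A B : Fin n → H →L[ℂ] H),
      (∀ i, IsCompactOperator (A i)) ∧ (∀ i, IsCompactOperator (B i)) ∧
      T = ∑ i, (A i * B i - B i * A i) :=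
  ⟨3, pearcy_topping_general hinf hT⟩
end

section
/- (Ringrose) Let A be a C*-algebra and X a Banach A-bimodule. Then every derivation D : A → X, i.e., every linear map satisfying D(ab) = a·D(b) + D(a)·b for all a, b ∈ A, is automatically continuous. -/
/-!
The elements `a` for which `t ↦ D (a * t)` is continuous form a closed ideal `J`, and `D` is
continuous on `J`: a sequence tending to `0` fast enough in `J` factors as `x n = a * y n` with a
fixed `a ∈ J` and `y` bounded, so `D (x n)` stays bounded. A gliding hump gives a chain condition on
annihilators modulo `J`: otherwise, summing suitable small elements produces a `c` with
`‖D (a n * c)‖` growing faster than the module structure permits. The chain condition forces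
`A ⧸ J` to be finite-dimensional, because a maximal supply of minimal projections of `A ⧸ J` is then
finite and its corners are at most one-dimensional. So `D` is continuous on a closed subspace of
finite codimension, hence everywhere.
-/

open Filter Topology

section Factorization

variable {A : Type*} [NonUnitalCStarAlgebra A] {a x : A} {ε : ℝ}

/-- The Tikhonov regularization `a (a ^ 2 + ε ^ 2)⁻¹` of the inverse of a self-adjoint element `a`,
which exists in a non-unital algebra because `t / (t ^ 2 + ε ^ 2)` vanishes at `t = 0`. -/
noncomputable def regularizedInverse (ε : ℝ) (a : A) : A :=
  cfcₙ (fun t : ℝ => t / (t ^ 2 + ε ^ 2)) a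

theorem isSelfAdjoint_regularizedInverse (ε : ℝ) (a : A) :
    IsSelfAdjoint (regularizedInverse ε a) :=
  cfcₙ_predicate _ a

theorem commute_regularizedInverse (ε : ℝ) (ha : IsSelfAdjoint a) :
    Commute (regularizedInverse ε a) a := by
  simpa only [cfcₙ_id' ℝ a ha, regularizedInverse] using
    cfcₙ_commute_cfcₙ (fun t : ℝ => t / (t ^ 2 + ε ^ 2)) (fun t => t) a

theorem regularizedInverse_mul_self (ha : IsSelfAdjoint a) (hε : 0 < ε) :
    regularizedInverse ε a * a = cfcₙ (fun t : ℝ => t / (t ^ 2 + ε ^ 2) * t) a := by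
  rw [cfcₙ_mul (fun t : ℝ => t / (t ^ 2 + ε ^ 2)) (fun t => t) a
    (by fun_prop (disch := intros; positivity)), cfcₙ_id' ℝ a ha, regularizedInverse]

theorem norm_regularizedInverse_mul_self_le (ha : IsSelfAdjoint a) (hε : 0 < ε) :
    ‖regularizedInverse ε a * a‖ ≤ 1 := by
  rw [regularizedInverse_mul_self ha hε]
  refine norm_cfcₙ_le fun t _ => ?_
  rw [div_mul_eq_mul_div, Real.norm_of_nonneg (div_nonneg (mul_self_nonneg t) (by positivity)),
    div_le_one (by positivity)]
  nlinarith [sq_nonneg ε]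

theorem norm_regularizedInverse_mul_mul_sub_le (ha : IsSelfAdjoint a) (hε : 0 < ε) :
    ‖regularizedInverse ε a * a * a - a‖ ≤ ε := by
  have hcfc : regularizedInverse ε a * a * a - a
      = cfcₙ (fun t : ℝ => t / (t ^ 2 + ε ^ 2) * t * t - t) a := by
    have hcont : Continuous fun t : ℝ => t / (t ^ 2 + ε ^ 2) * t := by
      fun_prop (disch := intros; positivity)
    rw [cfcₙ_sub (fun t : ℝ => t / (t ^ 2 + ε ^ 2) * t * t) (fun t => t) a
        (hcont.mul continuous_id).continuousOn,
      cfcₙ_mul (fun t : ℝ => t / (t ^ 2 + ε ^ 2) * t) (fun t => t) a hcont.continuousOn,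
      cfcₙ_id' ℝ a ha, regularizedInverse_mul_self ha hε]
  rw [hcfc]
  refine norm_cfcₙ_le fun t _ => ?_
  have hpos : 0 < t ^ 2 + ε ^ 2 := by positivity
  have ht : t / (t ^ 2 + ε ^ 2) * t * t - t = -(ε * (t * ε)) / (t ^ 2 + ε ^ 2) := by
    field_simp
    ring
  have hamgm : |t * ε| ≤ t ^ 2 + ε ^ 2 :=
    abs_le.mpr ⟨by nlinarith [sq_nonneg (t + ε)], by nlinarith [sq_nonneg (t - ε)]⟩
  rw [ht, Real.norm_eq_abs, abs_div, abs_neg, abs_mul, abs_of_pos hε, abs_of_pos hpos,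
    div_le_iff₀ hpos]
  gcongr

theorem tendsto_regularizedInverse_mul_mul (ha : IsSelfAdjoint a) :
    Tendsto (fun ε => regularizedInverse ε a * a * a) (𝓝[>] 0) (𝓝 a) := by
  rw [tendsto_iff_norm_sub_tendsto_zero]
  refine squeeze_zero' (.of_forall fun _ => norm_nonneg _) ?_
    (tendsto_id.mono_left nhdsWithin_le_nhds)
  filter_upwards [self_mem_nhdsWithin] with ε hε
  exact norm_regularizedInverse_mul_mul_sub_le ha hε

theorem exists_eq_mul_of_norm_mul_le (ha : IsSelfAdjoint a) (h : ∀ b, ‖b * x‖ ≤ ‖b * a * a‖) :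
    ∃ y, x = a * y ∧ ‖y‖ ≤ ‖a‖ := by
  have hlim := tendsto_regularizedInverse_mul_mul ha
  have hcauchy : Cauchy (map (fun ε => regularizedInverse ε a * x) (𝓝[>] 0)) := by
    rw [cauchy_map_iff', tendsto_uniformity_iff_dist_tendsto_zero]
    refine squeeze_zero (fun _ => dist_nonneg) (fun _ => ?_)
      (tendsto_uniformity_iff_dist_tendsto_zero.mp (cauchy_map_iff'.mp hlim.cauchy_map))
    simpa only [dist_eq_norm, sub_mul] using h (_ - _)
  obtain ⟨y, hy⟩ := cauchy_map_iff_exists_tendsto.mp hcauchy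
  refine ⟨y, sub_eq_zero.mp ?_, le_of_tendsto_of_tendsto' hy.norm hlim.norm fun _ => ?_⟩
  · have hmul : ∀ b, b * (x - a * y) = 0 := fun b => by
      have hx : Tendsto (fun ε => ‖(b - b * a * regularizedInverse ε a) * x‖) (𝓝[>] 0)
          (𝓝 ‖b * (x - a * y)‖) := by
        simpa only [sub_mul, mul_sub, mul_assoc] using
          ((tendsto_const_nhds (x := b * x)).sub (hy.const_mul (b * a))).norm
      have hz : Tendsto (fun ε => ‖(b - b * a * regularizedInverse ε a) * a * a‖) (𝓝[>] 0)
          (𝓝 0) := by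
        simpa only [sub_mul, mul_assoc, sub_self, norm_zero] using
          ((tendsto_const_nhds (x := b * a * a)).sub (hlim.const_mul (b * a))).norm
      exact norm_le_zero_iff.mp (le_of_tendsto_of_tendsto' hx hz fun _ => h _)
    exact CStarRing.star_mul_self_eq_zero_iff _ |>.mp (hmul _)
  · exact h _

theorem norm_mul_le_norm_mul_of_mul_star_le [PartialOrder A] [StarOrderedRing A] {z : A}
    (h : x * star x ≤ z * star z) (b : A) : ‖b * x‖ ≤ ‖b * z‖ := by
  refine (sq_le_sq₀ (norm_nonneg _) (norm_nonneg _)).mp ?_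
  rw [sq, sq, ← CStarRing.norm_self_mul_star, ← CStarRing.norm_self_mul_star]
  refine CStarAlgebra.norm_le_norm_of_nonneg_of_le (mul_star_self_nonneg _) ?_
  simpa only [star_mul, mul_assoc] using star_right_conjugate_le_conjugate h b

theorem norm_sub_mul_regularizedInverse_sq_le (x : A) (hε : 0 < ε) :
    ‖x - x * (regularizedInverse ε (star x * x) * (star x * x))‖ ^ 2 ≤ 2 * ε := by
  set h := star x * x with hh
  have hsa : IsSelfAdjoint h := .star_mul_self x
  set c := regularizedInverse ε h * h
  have hcomm : Commute c h := (commute_regularizedInverse ε hsa).mul_left (.refl h)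
  have hcsa : star c = c :=
    ((isSelfAdjoint_regularizedInverse ε h).commute_iff hsa).mp (commute_regularizedInverse ε hsa)
  have hstar : star (x - x * c) * (x - x * c) = (c * h - h) * c - (c * h - h) := by
    calc star (x - x * c) * (x - x * c) = h - c * h - (h * c - c * h * c) := by
          simp only [star_sub, star_mul, hcsa, hh, sub_mul, mul_sub, mul_assoc]
      _ = (c * h - h) * c - (c * h - h) := by
          rw [sub_mul, hcomm.eq]
          abel
  have hsub : ‖c * h - h‖ ≤ ε := norm_regularizedInverse_mul_mul_sub_le hsa hε
  have hc1 : ‖c‖ ≤ 1 := norm_regularizedInverse_mul_self_le hsa hε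
  calc ‖x - x * c‖ ^ 2 = ‖(c * h - h) * c - (c * h - h)‖ := by
        rw [sq, ← CStarRing.norm_star_mul_self, hstar]
    _ ≤ ‖c * h - h‖ * ‖c‖ + ‖c * h - h‖ := (norm_sub_le _ _).trans (by grw [norm_mul_le])
    _ ≤ ε * 1 + ε := by gcongr
    _ = 2 * ε := by ring

theorem mem_closure_range_mul_star_mul_self (x : A) :
    x ∈ closure (Set.range fun b => b * (star x * x)) := by
  rw [Metric.mem_closure_range_iff]
  intro δ hδ
  refine ⟨x * regularizedInverse (δ ^ 2 / 4) (star x * x), ?_⟩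
  rw [dist_eq_norm, mul_assoc]
  refine lt_of_pow_lt_pow_left₀ 2 hδ.le
    ((norm_sub_mul_regularizedInverse_sq_le x (by positivity)).trans_lt ?_)
  linarith [pow_pos hδ 2]

end Factorization

section ClosedIdeal

/-- `J` is a closed two-sided ideal. -/
structure IsClosedIdeal {A : Type*} [NonUnitalRing A] [TopologicalSpace A] [Module ℂ A]
    (J : Submodule ℂ A) : Prop where
  mul_mem_left : ∀ a, ∀ b ∈ J, a * b ∈ J
  mul_mem_right : ∀ a, ∀ b ∈ J, b * a ∈ J
  isClosed : IsClosed (J : Set A)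

variable {A : Type*} [NonUnitalCStarAlgebra A] {J : Submodule ℂ A} {u v x : A}

namespace IsClosedIdeal

theorem smodEq_mul_left (hJ : IsClosedIdeal J) (a : A) (h : u ≡ v [SMOD J]) :
    a * u ≡ a * v [SMOD J] := by
  rw [SModEq.sub_mem, ← mul_sub]
  exact hJ.mul_mem_left _ _ (SModEq.sub_mem.mp h)

theorem smodEq_mul_right (hJ : IsClosedIdeal J) (a : A) (h : u ≡ v [SMOD J]) :
    u * a ≡ v * a [SMOD J] := by
  rw [SModEq.sub_mem, ← sub_mul]
  exact hJ.mul_mem_right _ _ (SModEq.sub_mem.mp h)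

theorem mem_of_star_mul_self_mem (hJ : IsClosedIdeal J) (hx : star x * x ∈ J) : x ∈ J :=
  closure_minimal (Set.range_subset_iff.mpr fun b => hJ.mul_mem_left b _ hx) hJ.isClosed
    (mem_closure_range_mul_star_mul_self x)

theorem mem_of_mul_self_mem (hJ : IsClosedIdeal J) (hx : IsSelfAdjoint x) (h : x * x ∈ J) :
    x ∈ J :=
  hJ.mem_of_star_mul_self_mem (by rwa [hx.star_eq])

theorem star_mem (hJ : IsClosedIdeal J) (hx : x ∈ J) : star x ∈ J :=
  hJ.mem_of_star_mul_self_mem (by simpa only [star_star] using hJ.mul_mem_right (star x) x hx)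

theorem sqrt_mem [PartialOrder A] [StarOrderedRing A] (hJ : IsClosedIdeal J) (hx : 0 ≤ x)
    (h : x ∈ J) : CFC.sqrt x ∈ J :=
  hJ.mem_of_mul_self_mem (CFC.sqrt_nonneg x).isSelfAdjoint (by rwa [CFC.sqrt_mul_sqrt_self x hx])

theorem exists_common_factor (hJ : IsClosedIdeal J) {x : ℕ → A} (hx : ∀ n, x n ∈ J)
    (hsum : Summable fun n => ‖x n‖ ^ 2) : ∃ a ∈ J, ∀ n, ∃ y, x n = a * y ∧ ‖y‖ ≤ ‖a‖ := by
  let _ := CStarAlgebra.spectralOrder A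
  have _ := CStarAlgebra.spectralOrderedRing A
  have hs : Summable fun n => x n * star (x n) :=
    .of_norm (by simpa only [CStarRing.norm_self_mul_star, sq] using hsum)
  set h := ∑' n, x n * star (x n)
  have hh : 0 ≤ h := tsum_nonneg fun n => mul_star_self_nonneg _
  have hhJ : h ∈ J :=
    tsum_mem (s := J) hJ.isClosed fun n => hJ.mul_mem_right _ _ (hx n)
  set z := CFC.sqrt h
  set a := CFC.sqrt z
  have hz : 0 ≤ z := CFC.sqrt_nonneg h
  have haa : a * a = z := CFC.sqrt_mul_sqrt_self z hz
  refine ⟨a, hJ.sqrt_mem hz (hJ.sqrt_mem hh hhJ), fun n => ?_⟩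
  refine exists_eq_mul_of_norm_mul_le (CFC.sqrt_nonneg z).isSelfAdjoint fun b => ?_
  rw [mul_assoc, haa]
  refine norm_mul_le_norm_mul_of_mul_star_le ?_ b
  rw [hz.isSelfAdjoint.star_eq, CFC.sqrt_mul_sqrt_self h hh]
  exact hs.le_tsum n fun m _ => mul_star_self_nonneg _

end IsClosedIdeal

end ClosedIdeal

section AnnihilatorChains

variable {A : Type*} [NonUnitalRing A] [Module ℂ A] [SMulCommClass ℂ A A] {J : Submodule ℂ A}

/-- The right annihilator of a set `E` modulo `J`: the elements `b` with `a * b ∈ J` for all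
`a ∈ E`. -/
def rightAnnihilatorMod (J : Submodule ℂ A) (E : Set A) : Submodule ℂ A :=
  ⨅ a ∈ E, J.comap (LinearMap.mulLeft ℂ a)

theorem mem_rightAnnihilatorMod {E : Set A} {b : A} :
    b ∈ rightAnnihilatorMod J E ↔ ∀ a ∈ E, a * b ∈ J := by
  simp only [rightAnnihilatorMod, Submodule.mem_iInf, Submodule.mem_comap,
    LinearMap.mulLeft_apply]

theorem rightAnnihilatorMod_antitone (J : Submodule ℂ A) : Antitone (rightAnnihilatorMod J) :=
  fun _ _ h => biInf_mono h

/-- The descending chain condition on right annihilators modulo `J`, phrased without annihilators: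
there are no sequences `a`, `b` such that the matrix `a n * b m` vanishes modulo `J` above the
diagonal and nowhere on the diagonal. -/
def NoTriangularSequence (J : Submodule ℂ A) : Prop :=
  ∀ a b : ℕ → A, (∀ n m, n < m → a n * b m ∈ J) → ∃ n, a n * b n ∈ J

theorem NoTriangularSequence.wellFounded (hT : NoTriangularSequence J) :
    WellFounded (InvImage (· < ·) (rightAnnihilatorMod J)) := by
  rw [wellFounded_iff_isEmpty_descending_chain]
  refine ⟨fun ⟨E, hE⟩ => ?_⟩
  have hanti : Antitone fun n => rightAnnihilatorMod J (E n) :=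
    antitone_nat_of_succ_le fun n => (hE n).le
  choose b hb hb' using fun n => SetLike.exists_of_lt (hE n)
  have hsep : ∀ n, ∃ a ∈ E (n + 1), a * b n ∉ J := fun n => by
    simpa only [mem_rightAnnihilatorMod, not_forall, exists_prop] using hb' n
  choose a ha ha' using hsep
  obtain ⟨n, hn⟩ := hT a b fun n m hnm =>
    mem_rightAnnihilatorMod.mp (hanti (Nat.succ_le_of_lt hnm) (hb m)) _ (ha n)
  exact ha' n hn

end AnnihilatorChains

section MinimalProjections

variable {A : Type*} [NonUnitalCStarAlgebra A] {I J : Submodule ℂ A} {E : Set A} {h k p q : A}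

/-- `I` is a right ideal without zero divisors modulo `J`. For arguments in the functional calculus
it is enough to let the left factor of a product be self-adjoint. -/
structure IsDomainRightIdealMod (J I : Submodule ℂ A) : Prop where
  mul_mem : ∀ b ∈ I, ∀ c, b * c ∈ I
  mem_or_mem : ∀ u ∈ I, ∀ v ∈ I, IsSelfAdjoint u → u * v ∈ J → u ∈ J ∨ v ∈ J

theorem IsClosedIdeal.exists_isDomainRightIdealMod (hJ : IsClosedIdeal J)
    (hT : NoTriangularSequence J) (hE : ¬ rightAnnihilatorMod J E ≤ J) :
    ∃ I ≤ rightAnnihilatorMod J E, ¬ I ≤ J ∧ IsDomainRightIdealMod J I := by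
  obtain ⟨M, ⟨hEM, hMJ⟩, hmin⟩ := hT.wellFounded.has_min
    {F | E ⊆ F ∧ ¬ rightAnnihilatorMod J F ≤ J} ⟨E, subset_rfl, hE⟩
  refine ⟨_, rightAnnihilatorMod_antitone J hEM, hMJ, fun b hb c => ?_,
    fun u hu v hv husa huv => ?_⟩
  · refine mem_rightAnnihilatorMod.mpr fun a ha => ?_
    rw [← mul_assoc]
    exact hJ.mul_mem_right _ _ (mem_rightAnnihilatorMod.mp hb a ha)
  · by_contra! hcon
    have hvM : v ∈ rightAnnihilatorMod J (insert u M) := mem_rightAnnihilatorMod.mpr <|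
      Set.forall_mem_insert.mpr ⟨huv, mem_rightAnnihilatorMod.mp hv⟩
    have huM : u ∉ rightAnnihilatorMod J (insert u M) := fun hmem => hcon.1 <|
      hJ.mem_of_mul_self_mem husa (mem_rightAnnihilatorMod.mp hmem u (Set.mem_insert u M))
    exact hmin (insert u M) ⟨hEM.trans (Set.subset_insert u M), fun hle => hcon.2 (hle hvM)⟩
      (SetLike.lt_iff_le_and_exists.mpr
        ⟨rightAnnihilatorMod_antitone J (Set.subset_insert u M), u, hu, huM⟩)

theorem continuous_posPart_of_isSelfAdjoint {Y : Type*} [TopologicalSpace Y] {k : Y → A}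
    (hk : Continuous k) (hsa : ∀ y, IsSelfAdjoint (k y)) : Continuous fun y => (k y)⁺ :=
  hk.cfcₙ_of_mem_nhdsSet (s := Set.univ) _ univ_mem

theorem mul_self_le_norm_smul [PartialOrder A] [StarOrderedRing A] (hh : 0 ≤ h) :
    h * h ≤ ‖h‖ • h := by
  set s := CFC.sqrt h
  have hs : s * s = h := CFC.sqrt_mul_sqrt_self h hh
  have hsa : star s = s := (CFC.sqrt_nonneg h).isSelfAdjoint.star_eq
  calc h * h = star s * h * s := by rw [hsa, ← hs]; simp only [mul_assoc]
    _ ≤ ‖h‖ • (star s * s) := CStarAlgebra.star_left_conjugate_le_norm_smul hh.isSelfAdjoint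
    _ = ‖h‖ • h := by rw [hsa, hs]

namespace IsDomainRightIdealMod

theorem posPart_mem_or_negPart_mem (hI : IsDomainRightIdealMod J I) (hJ : IsClosedIdeal J)
    (hk : IsSelfAdjoint k) (hkI : k ∈ I) : k⁺ ∈ J ∨ k⁻ ∈ J := by
  have hpos : k⁺ * k⁺ ∈ I := by
    have hmul : k * k⁺ = k⁺ * k⁺ := by
      nth_rw 1 [← CFC.posPart_sub_negPart k hk]
      rw [sub_mul, CFC.negPart_mul_posPart, sub_zero]
    exact hmul ▸ hI.mul_mem k hkI k⁺
  have hneg : k⁻ * k⁻ ∈ I := by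
    have hmul : k * -k⁻ = k⁻ * k⁻ := by
      nth_rw 1 [← CFC.posPart_sub_negPart k hk]
      rw [mul_neg, sub_mul, CFC.posPart_mul_negPart, zero_sub, neg_neg]
    exact hmul ▸ hI.mul_mem k hkI (-k⁻)
  have hpsa : IsSelfAdjoint k⁺ := cfcₙ_predicate _ k
  have hnsa : IsSelfAdjoint k⁻ := cfcₙ_predicate _ k
  have hzero : k⁺ * k⁺ * (k⁻ * k⁻) ∈ J := by
    rw [mul_assoc, ← mul_assoc k⁺ k⁻, CFC.posPart_mul_negPart, zero_mul, mul_zero]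
    exact J.zero_mem
  exact (hI.mem_or_mem _ hpos _ hneg (hpsa.commute_iff hpsa |>.mp (.refl _)) hzero).imp
    (hJ.mem_of_mul_self_mem hpsa) (hJ.mem_of_mul_self_mem hnsa)

theorem exists_mul_self_smodEq_smul [PartialOrder A] [StarOrderedRing A]
    (hI : IsDomainRightIdealMod J I) (hJ : IsClosedIdeal J) (hh : 0 ≤ h) (hhI : h ∈ I) :
    ∃ c : ℝ, h * h ≡ (c : ℂ) • h [SMOD J] := by
  have hsa : IsSelfAdjoint h := hh.isSelfAdjoint
  let k : ℝ → A := fun s => h * h - s • h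
  have hk : ∀ s, IsSelfAdjoint (k s) := fun s =>
    ((hsa.commute_iff hsa).mp (.refl h)).sub (.smul (.all s) hsa)
  have hkI : ∀ s, k s ∈ I := fun s =>
    I.sub_mem (hI.mul_mem h hhI h) (I.smul_of_tower_mem s hhI)
  have hcont : Continuous k := by fun_prop
  have hpos : Continuous fun s => (k s)⁺ := continuous_posPart_of_isSelfAdjoint hcont hk
  have hneg : Continuous fun s => (k s)⁻ := by
    simpa only [CFC.posPart_neg] using
      continuous_posPart_of_isSelfAdjoint (k := fun s => -k s) hcont.neg fun s => (hk s).neg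
  have hpos_norm : (k ‖h‖)⁺ ∈ J := by
    rw [(CFC.posPart_eq_zero_iff _ (hk _)).mpr (sub_nonpos.mpr (mul_self_le_norm_smul hh))]
    exact J.zero_mem
  have hneg_zero : (k 0)⁻ ∈ J := by
    have hk0 : 0 ≤ k 0 := by simpa only [k, zero_smul, sub_zero] using hsa.mul_self_nonneg
    rw [(CFC.negPart_eq_zero_iff _ (hk 0)).mpr hk0]
    exact J.zero_mem
  obtain ⟨c, -, hcpos, hcneg⟩ := isPreconnected_closed_iff.mp (isPreconnected_univ (α := ℝ)) _ _
    (hJ.isClosed.preimage hpos) (hJ.isClosed.preimage hneg)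
    (fun s _ => hI.posPart_mem_or_negPart_mem hJ (hk s) (hkI s))
    ⟨‖h‖, trivial, hpos_norm⟩ ⟨0, trivial, hneg_zero⟩
  refine ⟨c, SModEq.sub_mem.mpr ?_⟩
  have hkJ : k c ∈ J := by
    rw [← CFC.posPart_sub_negPart (k c) (hk c)]
    exact J.sub_mem hcpos hcneg
  rwa [Complex.coe_smul]

end IsDomainRightIdealMod

/-- `p` represents a minimal projection of `A ⧸ J`: a self-adjoint idempotent modulo `J` whose
corner `p A p` is one-dimensional modulo `J`. -/
structure IsMinimalProjectionMod (J : Submodule ℂ A) (p : A) : Prop where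
  isSelfAdjoint : IsSelfAdjoint p
  mul_self : p * p ≡ p [SMOD J]
  notMem : p ∉ J
  corner : ∀ a, ∃ c : ℂ, p * a * p ≡ c • p [SMOD J]

theorem exists_corner_smodEq_smul_of_nonneg [PartialOrder A] [StarOrderedRing A]
    (hI : IsDomainRightIdealMod J I) (hJ : IsClosedIdeal J) (hpI : p ∈ I) (hpsa : IsSelfAdjoint p)
    (hpp : p * p ≡ p [SMOD J]) {a : A} (ha : 0 ≤ a) : ∃ c : ℂ, p * a * p ≡ c • p [SMOD J] := by
  set k := p * a * p
  have hk : 0 ≤ k := by simpa only [hpsa.star_eq] using star_right_conjugate_nonneg ha p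
  have hkI : k ∈ I := by simpa only [k, mul_assoc] using hI.mul_mem p hpI (a * p)
  obtain ⟨c, hc⟩ := hI.exists_mul_self_smodEq_smul hJ hk hkI
  have hkp : k * p ≡ k [SMOD J] := by
    simpa only [k, mul_assoc] using hJ.smodEq_mul_left (p * a) hpp
  have hprod : k * (k - (c : ℂ) • p) ∈ J := by
    rw [mul_sub, mul_smul_comm, ← SModEq.sub_mem]
    exact hc.trans (hkp.smul (c : ℂ)).symm
  rcases hI.mem_or_mem k hkI _ (I.sub_mem hkI (I.smul_mem _ hpI)) hk.isSelfAdjoint hprod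
    with hkJ | hsub
  · exact ⟨0, by rwa [zero_smul, SModEq.zero]⟩
  · exact ⟨c, SModEq.sub_mem.mpr hsub⟩

theorem IsDomainRightIdealMod.isMinimalProjectionMod (hI : IsDomainRightIdealMod J I)
    (hJ : IsClosedIdeal J) (hpI : p ∈ I) (hpsa : IsSelfAdjoint p) (hpp : p * p ≡ p [SMOD J])
    (hpJ : p ∉ J) : IsMinimalProjectionMod J p := by
  let _ := CStarAlgebra.spectralOrder A
  have _ := CStarAlgebra.spectralOrderedRing A
  refine ⟨hpsa, hpp, hpJ, fun a => ?_⟩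
  have ha : a ∈ Submodule.span ℂ {b : A | 0 ≤ b} := by
    rw [CStarAlgebra.span_nonneg]
    exact Submodule.mem_top
  induction ha using Submodule.span_induction with
  | mem b hb => exact exists_corner_smodEq_smul_of_nonneg hI hJ hpI hpsa hpp hb
  | zero => exact ⟨0, by simp⟩
  | add b b' _ _ hb hb' =>
    obtain ⟨c, hc⟩ := hb
    obtain ⟨c', hc'⟩ := hb'
    exact ⟨c + c', by simpa only [mul_add, add_mul, add_smul] using hc.add hc'⟩
  | smul z b _ hb =>
    obtain ⟨c, hc⟩ := hb
    exact ⟨z * c, by simpa only [mul_smul_comm, smul_mul_assoc, mul_smul] using hc.smul z⟩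

theorem IsDomainRightIdealMod.exists_isMinimalProjectionMod (hI : IsDomainRightIdealMod J I)
    (hJ : IsClosedIdeal J) (hIJ : ¬ I ≤ J) : ∃ p ∈ I, IsMinimalProjectionMod J p := by
  let _ := CStarAlgebra.spectralOrder A
  have _ := CStarAlgebra.spectralOrderedRing A
  obtain ⟨x, hxI, hxJ⟩ := SetLike.not_le_iff_exists.mp hIJ
  set h := x * star x
  have hhI : h ∈ I := hI.mul_mem x hxI (star x)
  have hhJ : h ∉ J := fun hmem => hxJ <| by
    have hstar : star x ∈ J := hJ.mem_of_star_mul_self_mem (by rwa [star_star])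
    simpa only [star_star] using hJ.star_mem hstar
  obtain ⟨c, hc⟩ := hI.exists_mul_self_smodEq_smul hJ (mul_star_self_nonneg x) hhI
  have hc0 : (c : ℂ) ≠ 0 := fun h0 => hhJ <| hJ.mem_of_mul_self_mem (.mul_star_self x) <| by
    rwa [h0, zero_smul, SModEq.zero] at hc
  refine ⟨(c : ℂ)⁻¹ • h, I.smul_mem _ hhI, hI.isMinimalProjectionMod hJ (I.smul_mem _ hhI) ?_ ?_ ?_⟩
  · exact .smul (by simp [IsSelfAdjoint]) (.mul_star_self x)
  · rw [smul_mul_smul_comm, mul_smul]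
    simpa only [inv_smul_smul₀ hc0] using (hc.smul (c : ℂ)⁻¹).smul (c : ℂ)⁻¹
  · rwa [J.smul_mem_iff (inv_ne_zero hc0)]

theorem IsClosedIdeal.exists_finite_isMinimalProjectionMod (hJ : IsClosedIdeal J)
    (hT : NoTriangularSequence J) :
    ∃ E : Set A, E.Finite ∧ (∀ p ∈ E, IsMinimalProjectionMod J p) ∧
      rightAnnihilatorMod J E ≤ J := by
  obtain ⟨E, ⟨hfin, hE⟩, hmin⟩ := hT.wellFounded.has_min
    {F : Set A | F.Finite ∧ ∀ p ∈ F, IsMinimalProjectionMod J p} ⟨∅, by simp⟩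
  refine ⟨E, hfin, hE, ?_⟩
  by_contra hcon
  obtain ⟨I, hIE, hIJ, hI⟩ := hJ.exists_isDomainRightIdealMod hT hcon
  obtain ⟨p, hpI, hp⟩ := hI.exists_isMinimalProjectionMod hJ hIJ
  have hpE : p ∉ rightAnnihilatorMod J (insert p E) := fun hmem => hp.notMem <|
    hJ.mem_of_mul_self_mem hp.isSelfAdjoint
      (mem_rightAnnihilatorMod.mp hmem p (Set.mem_insert p E))
  exact hmin (insert p E) ⟨hfin.insert p, Set.forall_mem_insert.mpr ⟨hp, hE⟩⟩
    (SetLike.lt_iff_le_and_exists.mpr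
      ⟨rightAnnihilatorMod_antitone J (Set.subset_insert p E), p, hIE hpI, hpE⟩)

theorem IsMinimalProjectionMod.exists_offDiagonal (hp : IsMinimalProjectionMod J p)
    (hq : IsMinimalProjectionMod J q) (hJ : IsClosedIdeal J) :
    ∃ x, ∀ a, ∃ c : ℂ, p * a * q ≡ c • x [SMOD J] := by
  by_cases hzero : ∀ a, p * a * q ∈ J
  · exact ⟨0, fun a => ⟨0, by simpa only [smul_zero, SModEq.zero] using hzero a⟩⟩
  push Not at hzero
  obtain ⟨b, hb⟩ := hzero
  refine ⟨p * b * q, fun a => ?_⟩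
  obtain ⟨c, hc⟩ := hp.corner (a * q * (q * star b))
  obtain ⟨d, hd⟩ := hq.corner (star b * p * (p * b))
  have hd0 : d ≠ 0 := by
    rintro rfl
    refine hb (hJ.mem_of_star_mul_self_mem ?_)
    simpa only [star_mul, hp.isSelfAdjoint.star_eq, hq.isSelfAdjoint.star_eq, zero_smul,
      SModEq.zero, mul_assoc] using hd
  refine ⟨d⁻¹ * c, ?_⟩
  have key : d • (p * a * q) ≡ c • (p * b * q) [SMOD J] := calc
    d • (p * a * q) ≡ d • (p * a * (q * q)) [SMOD J] :=
      (hJ.smodEq_mul_left (p * a) hq.mul_self).symm.smul d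
    _ ≡ p * a * q * (q * (star b * p * (p * b)) * q) [SMOD J] := by
      simpa only [mul_smul_comm, mul_assoc] using (hJ.smodEq_mul_left (p * a * q) hd).symm
    _ ≡ p * (a * q * (q * star b)) * p * (p * b * q) [SMOD J] := by
      simp only [mul_assoc, SModEq.rfl]
    _ ≡ c • p * (p * b * q) [SMOD J] := hJ.smodEq_mul_right _ hc
    _ ≡ c • (p * b * q) [SMOD J] := by
      simpa only [smul_mul_assoc, mul_assoc] using
        (hJ.smodEq_mul_right (b * q) hp.mul_self).smul c
  rw [mul_smul]
  simpa only [inv_smul_smul₀ hd0] using key.smul d⁻¹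

theorem IsMinimalProjectionMod.cofg_comap_mulLeftRight (hp : IsMinimalProjectionMod J p)
    (hq : IsMinimalProjectionMod J q) (hJ : IsClosedIdeal J) :
    (J.comap (LinearMap.mulLeftRight ℂ (p, q))).CoFG := by
  obtain ⟨x, hx⟩ := hp.exists_offDiagonal hq hJ
  have hrange : LinearMap.range (J.mkQ ∘ₗ LinearMap.mulLeftRight ℂ (p, q))
      ≤ Submodule.span ℂ {J.mkQ x} := by
    rintro _ ⟨a, rfl⟩
    obtain ⟨c, hc⟩ := hx a
    exact Submodule.mem_span_singleton.mpr ⟨c, hc.symm⟩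
  rw [← J.ker_mkQ, ← LinearMap.ker_comp, ← Submodule.range_fg_iff_ker_cofg]
  exact (Submodule.fg_span_singleton (R := ℂ) (J.mkQ x)).of_le hrange

theorem IsClosedIdeal.cofg (hJ : IsClosedIdeal J) (hT : NoTriangularSequence J) : J.CoFG := by
  obtain ⟨E, hfin, hE, hann⟩ := hJ.exists_finite_isMinimalProjectionMod hT
  let K : A × A → Submodule ℂ A := fun i => J.comap (LinearMap.mulLeftRight ℂ i)
  have hK : (sInf (K '' E ×ˢ E)).CoFG := by
    refine Submodule.CoFG.sInf_of_finite ((hfin.prod hfin).image K) ?_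
    rintro _ ⟨⟨p, q⟩, ⟨hp, hq⟩, rfl⟩
    exact (hE p hp).cofg_comap_mulLeftRight (hE q hq) hJ
  refine Submodule.CoFG.of_le (fun a ha => ?_) hK
  have hcorner : ∀ p ∈ E, ∀ q ∈ E, p * a * q ∈ J := fun p hp q hq =>
    Submodule.mem_sInf.mp ha _ ⟨(p, q), ⟨hp, hq⟩, rfl⟩
  have hrow : ∀ p ∈ E, p * a ∈ J := fun p hp => by
    have hstar : star (p * a) ∈ rightAnnihilatorMod J E := by
      refine mem_rightAnnihilatorMod.mpr fun q hq => ?_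
      simpa only [star_mul, (hE q hq).isSelfAdjoint.star_eq] using hJ.star_mem (hcorner p hp q hq)
    simpa only [star_star] using hJ.star_mem (hann hstar)
  exact hann (mem_rightAnnihilatorMod.mpr hrow)

end MinimalProjections

section GlidingHump

variable {𝕜 E F : Type*} [NontriviallyNormedField 𝕜] [NormedAddCommGroup E] [NormedSpace 𝕜 E]
  [NormedAddCommGroup F] [NormedSpace 𝕜 F]

theorem exists_norm_le_lt_norm_of_not_continuous {f : E →ₗ[𝕜] F} (hf : ¬ Continuous f) {δ : ℝ}
    (hδ : 0 < δ) (B : ℝ) : ∃ x, ‖x‖ ≤ δ ∧ B < ‖f x‖ := by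
  by_contra! h
  obtain ⟨C, hC⟩ := LinearMap.bound_of_ball_bound hδ B f fun z hz =>
    h z (mem_ball_zero_iff.mp hz).le
  exact hf (AddMonoidHomClass.continuous_of_bound f C hC)

theorem exists_seq_forall_sum_range {M : Type*} [AddCommMonoid M] {P : ℕ → M → M → Prop}
    (h : ∀ n s, ∃ u, P n s u) : ∃ u : ℕ → M, ∀ n, P n (∑ i ∈ Finset.range n, u i) (u n) := by
  choose v hv using h
  let s : ℕ → M := fun n => n.rec 0 fun n s => s + v n s
  have hs : ∀ n, ∑ i ∈ Finset.range n, v i (s i) = s n := fun n => by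
    induction n with
    | zero => exact Finset.sum_range_zero _
    | succ n ih => rw [Finset.sum_range_succ, ih]
  exact ⟨fun n => v n (s n), fun n => hs n ▸ hv n _⟩

theorem exists_eq_sum_range_add_of_norm_le [CompleteSpace E] {W : ℕ → Submodule 𝕜 E}
    (hW : ∀ n, IsClosed (W n : Set E)) {u : ℕ → E} (hu : ∀ n, ‖u n‖ ≤ 1 / 2 / 2 ^ n)
    (huW : ∀ n m, n < m → u m ∈ W n) :
    ∃ c, ∀ n, ∃ w ∈ W n, ‖w‖ ≤ 1 ∧ c = ∑ i ∈ Finset.range n, u i + u n + w := by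
  have hgeom : HasSum (fun n : ℕ => (1 : ℝ) / 2 / 2 ^ n) 1 := hasSum_geometric_two' 1
  have hsum : Summable u := .of_norm_bounded hgeom.summable hu
  refine ⟨∑' i, u i, fun n => ⟨∑' i, u (i + (n + 1)), ?_, ?_, ?_⟩⟩
  · exact tsum_mem (s := W n) (hW n) fun i => huW n _ (by lia)
  · refine tsum_of_norm_bounded hgeom fun i => (hu _).trans ?_
    gcongr
    · exact one_le_two
    · exact Nat.le_add_right _ _
  · rw [← Finset.sum_range_succ, hsum.sum_add_tsum_nat_add]

theorem exists_forall_lt_norm_apply [CompleteSpace E] {f : ℕ → E →ₗ[𝕜] F}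
    {V W : ℕ → Submodule 𝕜 E} (hW : ∀ n, IsClosed (W n : Set E))
    (hVW : ∀ n m, n < m → V m ≤ W n) (hfV : ∀ n, ¬ Continuous ((f n).domRestrict (V n)))
    (hfW : ∀ n, Continuous ((f n).domRestrict (W n))) (κ : ℕ → ℝ) :
    ∃ c, ∀ n, κ n < ‖f n c‖ := by
  let T : ∀ n, W n →L[𝕜] F := fun n => ⟨_, hfW n⟩
  have hhump : ∀ n s, ∃ u ∈ V n, ‖u‖ ≤ 1 / 2 / 2 ^ n ∧ κ n + ‖f n s‖ + ‖T n‖ < ‖f n u‖ :=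
    fun n s => by
      obtain ⟨⟨u, huV⟩, hu⟩ := exists_norm_le_lt_norm_of_not_continuous (hfV n)
        (δ := 1 / 2 / 2 ^ n) (by positivity) (κ n + ‖f n s‖ + ‖T n‖)
      exact ⟨u, huV, hu⟩
  obtain ⟨u, hu⟩ := exists_seq_forall_sum_range hhump
  obtain ⟨c, hc⟩ := exists_eq_sum_range_add_of_norm_le hW (fun n => (hu n).2.1)
    fun n m hnm => hVW n m hnm (hu m).1
  refine ⟨c, fun n => ?_⟩
  obtain ⟨w, hwW, hw, hcw⟩ := hc n
  set s := ∑ i ∈ Finset.range n, u i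
  have hfw : ‖f n w‖ ≤ ‖T n‖ := (T n).unit_le_opNorm ⟨w, hwW⟩ hw
  have hfu : f n (u n) = f n c - f n s - f n w := by
    rw [hcw, map_add, map_add]
    abel
  have htri : ‖f n (u n)‖ ≤ ‖f n c‖ + ‖f n s‖ + ‖f n w‖ := by
    rw [hfu]
    exact (norm_sub_le _ _).trans (by gcongr; exact norm_sub_le _ _)
  linarith [(hu n).2.2]

end GlidingHump

section FiniteCodimension

variable {𝕜 E F : Type*} [NontriviallyNormedField 𝕜] [CompleteSpace 𝕜]
  [AddCommGroup E] [Module 𝕜 E] [TopologicalSpace E] [IsTopologicalAddGroup E] [ContinuousSMul 𝕜 E]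
  [AddCommGroup F] [Module 𝕜 F] [TopologicalSpace F] [IsTopologicalAddGroup F] [ContinuousSMul 𝕜 F]

theorem continuous_of_continuous_domRestrict_of_cofg {f : E →ₗ[𝕜] F} {S : Submodule 𝕜 E}
    (hS : IsClosed (S : Set E)) (hfin : S.CoFG) (hf : Continuous (f.domRestrict S)) :
    Continuous f := by
  obtain ⟨P, hP⟩ := Submodule.ClosedComplemented.of_finiteDimensional_quotient hS
  have hle : S ≤ LinearMap.ker (f - f.domRestrict S ∘ₗ (P : E →ₗ[𝕜] S)) := fun x hx => by
    simp [hP ⟨x, hx⟩]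
  have hquot : Continuous (S.liftQ _ hle) := LinearMap.continuous_of_finiteDimensional _
  have hdecomp : ⇑f = fun x => f.domRestrict S (P x) + S.liftQ _ hle (S.mkQ x) := by
    ext x
    simp
  rw [hdecomp]
  exact (hf.comp P.continuous).add (hquot.comp continuous_quot_mk)

end FiniteCodimension

section ContinuityIdeal

variable {A X : Type*} [NonUnitalNormedRing A] [NormedSpace ℂ A] [NormedAddCommGroup X]
  [NormedSpace ℂ X]

/-- `D` intertwines left multiplication on `A` with the left action `L` on `X` up to continuous
maps. A derivation satisfies this because `D (a * b) - L a (D b)` is the right action of `b`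
on `D a`. -/
def IsLeftIntertwining (L : A →L[ℂ] X →L[ℂ] X) (D : A →ₗ[ℂ] X) : Prop :=
  ∀ a, Continuous fun t => D (a * t) - L a (D t)

variable [IsScalarTower ℂ A A]

/-- The elements `a` for which `t ↦ D (a * t)` is continuous. -/
def continuityIdeal (D : A →ₗ[ℂ] X) : Submodule ℂ A where
  carrier := {a | Continuous fun t => D (a * t)}
  zero_mem' := by simp only [Set.mem_ofPred_eq, zero_mul, map_zero, continuous_const]
  add_mem' ha hb := by
    simp only [Set.mem_ofPred_eq, add_mul, map_add]
    exact Continuous.add ha hb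
  smul_mem' c a ha := by
    simp only [Set.mem_ofPred_eq, smul_mul_assoc, map_smul]
    exact Continuous.const_smul ha c

variable {L : A →L[ℂ] X →L[ℂ] X} {D : A →ₗ[ℂ] X} {a : A}

theorem mem_continuityIdeal : a ∈ continuityIdeal D ↔ Continuous fun t => D (a * t) := Iff.rfl

namespace IsLeftIntertwining

theorem mem_continuityIdeal_iff (hD : IsLeftIntertwining L D) :
    a ∈ continuityIdeal D ↔ Continuous fun t => L a (D t) := by
  refine ⟨fun ha => ?_, fun ha => ?_⟩
  · simpa only [Pi.sub_def, sub_sub_cancel] using (mem_continuityIdeal.mp ha).sub (hD a)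
  · simpa only [mem_continuityIdeal, Pi.add_def, sub_add_cancel] using (hD a).add ha

theorem isClosed_continuityIdeal [CompleteSpace A] (hD : IsLeftIntertwining L D) :
    IsClosed (continuityIdeal D : Set A) := by
  refine isClosed_of_closure_subset fun a ha => hD.mem_continuityIdeal_iff.mpr ?_
  obtain ⟨u, hu, hlim⟩ := mem_closure_iff_seq_limit.mp ha
  let T : ℕ → A →L[ℂ] X := fun n => ⟨L (u n) ∘ₗ D, hD.mem_continuityIdeal_iff.mp (hu n)⟩
  have hT : Tendsto (fun n t => T n t) atTop (𝓝 fun t => L a (D t)) :=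
    tendsto_pi_nhds.mpr fun t => ((L.flip (D t)).continuous.tendsto a).comp hlim
  exact (continuousLinearMapOfTendsto T hT).continuous

theorem isClosedIdeal_continuityIdeal [CompleteSpace A] (hD : IsLeftIntertwining L D)
    (hL : ∀ a b x, L (a * b) x = L a (L b x)) : IsClosedIdeal (continuityIdeal D) where
  mul_mem_left a b hb := by
    simp only [hD.mem_continuityIdeal_iff, hL] at hb ⊢
    exact (L a).continuous.comp hb
  mul_mem_right a b hb := by
    simp only [mem_continuityIdeal, mul_assoc] at hb ⊢
    exact hb.comp (continuous_const_mul a)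
  isClosed := hD.isClosed_continuityIdeal

end IsLeftIntertwining

theorem not_continuous_domRestrict_range_mulLeft [SMulCommClass ℂ A A] {b : A}
    (hab : a * b ∉ continuityIdeal D) :
    ¬ Continuous ((D ∘ₗ LinearMap.mulLeft ℂ a).domRestrict (LinearMap.mulLeft ℂ b).range) :=
  fun h => hab <| mem_continuityIdeal.mpr <| by
    simp only [mul_assoc]
    exact h.comp ((continuous_const_mul b).subtype_mk (LinearMap.mem_range_self _))

end ContinuityIdeal

section CStarAlgebra

variable {A X : Type*} [NonUnitalCStarAlgebra A] [NormedAddCommGroup X] [NormedSpace ℂ X]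
  {L : A →L[ℂ] X →L[ℂ] X} {D : A →ₗ[ℂ] X}

theorem IsClosedIdeal.continuous_domRestrict {J : Submodule ℂ A} (hJ : IsClosedIdeal J)
    (hJD : J ≤ continuityIdeal D) : Continuous (D.domRestrict J) := by
  by_contra hcon
  choose x hx hDx using fun n : ℕ => exists_norm_le_lt_norm_of_not_continuous hcon
    (δ := (1 / 2) ^ n) (by positivity) n
  have hsum : Summable fun n => ‖(x n : A)‖ ^ 2 := by
    refine .of_nonneg_of_le (fun n => by positivity) (fun n => ?_)
      (summable_geometric_of_lt_one (r := (1 / 2) ^ 2) (by norm_num) (by norm_num))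
    rw [pow_right_comm]
    gcongr
    exact hx n
  obtain ⟨a, ha, hy⟩ := hJ.exists_common_factor (fun n => (x n).2) hsum
  let T : A →L[ℂ] X := ⟨D ∘ₗ LinearMap.mulLeft ℂ a, hJD ha⟩
  obtain ⟨n, hn⟩ := exists_nat_ge (‖T‖ * ‖a‖)
  obtain ⟨y, hxy, hya⟩ := hy n
  have hTy : D.domRestrict J (x n) = T y := congrArg D hxy
  refine (hDx n).not_ge ?_
  calc ‖D.domRestrict J (x n)‖ ≤ ‖T‖ * ‖y‖ := hTy ▸ T.le_opNorm y
    _ ≤ ‖T‖ * ‖a‖ := by gcongr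
    _ ≤ n := hn

theorem IsLeftIntertwining.noTriangularSequence_continuityIdeal (hD : IsLeftIntertwining L D)
    (hL : ∀ a b x, L (a * b) x = L a (L b x)) : NoTriangularSequence (continuityIdeal D) := by
  set J := continuityIdeal D
  have hJ : IsClosedIdeal J := hD.isClosedIdeal_continuityIdeal hL
  intro a b hab
  by_contra! hcon
  let R : ℕ → A →L[ℂ] X := fun n => ⟨D ∘ₗ LinearMap.mulLeft ℂ (a n) - L (a n) ∘ₗ D, hD (a n)⟩
  have hDa : ∀ n c, ‖D (a n * c)‖ ≤ ‖L‖ * ‖a n‖ * ‖D c‖ + ‖R n‖ * ‖c‖ := fun n c => by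
    have hsplit : D (a n * c) = L (a n) (D c) + R n c := (add_sub_cancel _ _).symm
    rw [hsplit]
    exact norm_add_le_of_le (L.le_opNorm₂ _ _) ((R n).le_opNorm c)
  obtain ⟨c, hc⟩ := exists_forall_lt_norm_apply (f := fun n => D ∘ₗ LinearMap.mulLeft ℂ (a n))
    (V := fun n => (LinearMap.mulLeft ℂ (b n)).range)
    (W := fun n => J.comap (LinearMap.mulLeft ℂ (a n)))
    (fun n => hJ.isClosed.preimage (continuous_const_mul (a n)))
    (fun n m hnm => by
      rintro _ ⟨t, rfl⟩
      simpa only [Submodule.mem_comap, LinearMap.mulLeft_apply, mul_assoc] using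
        hJ.mul_mem_right t _ (hab n m hnm))
    (fun n => not_continuous_domRestrict_range_mulLeft (hcon n))
    (fun n => (hJ.continuous_domRestrict le_rfl).comp
      (((continuous_const_mul (a n)).comp continuous_subtype_val).subtype_mk fun w => w.2))
    (fun n => n * (‖a n‖ + ‖R n‖))
  obtain ⟨n, hn⟩ := exists_nat_ge (max (‖L‖ * ‖D c‖) ‖c‖)
  rw [max_le_iff] at hn
  refine (hc n).not_ge ?_
  calc ‖D (a n * c)‖ ≤ ‖L‖ * ‖D c‖ * ‖a n‖ + ‖c‖ * ‖R n‖ := by linarith [hDa n c]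
    _ ≤ n * ‖a n‖ + n * ‖R n‖ := by gcongr; exacts [hn.1, hn.2]
    _ = n * (‖a n‖ + ‖R n‖) := by ring

end CStarAlgebra

theorem ringrose_automatic_continuity_general (A X : Type*) [NonUnitalCStarAlgebra A]
    [NormedAddCommGroup X] [NormedSpace ℂ X] (L : A →L[ℂ] X →L[ℂ] X)
    (hL : ∀ (a b : A) (x : X), L (a * b) x = L a (L b x)) (D : A →ₗ[ℂ] X)
    (hD : IsLeftIntertwining L D) : Continuous D := by
  have hJ : IsClosedIdeal (continuityIdeal D) := hD.isClosedIdeal_continuityIdeal hL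
  exact continuous_of_continuous_domRestrict_of_cofg hJ.isClosed
    (hJ.cofg (hD.noTriangularSequence_continuityIdeal hL)) (hJ.continuous_domRestrict le_rfl)

/-- (Ringrose) Every derivation from a C*-algebra `A` into a Banach `A`-bimodule `X`
is automatically continuous.  The bimodule actions are given by the bounded bilinear
maps `l` and `r`. -/
theorem ringrose_automatic_continuity (A X : Type*)
    [NonUnitalNormedRing A] [StarRing A] [CStarRing A] [CompleteSpace A]
    [NormedSpace ℂ A] [IsScalarTower ℂ A A] [SMulCommClass ℂ A A] [StarModule ℂ A]
    [NormedAddCommGroup X] [NormedSpace ℂ X] [CompleteSpace X]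
    (l : A →ₗ[ℂ] X →ₗ[ℂ] X) (r : X →ₗ[ℂ] A →ₗ[ℂ] X)
    (hlbdd : ∃ C : ℝ, ∀ (a : A) (x : X), ‖l a x‖ ≤ C * ‖a‖ * ‖x‖)
    (hrbdd : ∃ C : ℝ, ∀ (x : X) (a : A), ‖r x a‖ ≤ C * ‖x‖ * ‖a‖)
    (hmod₁ : ∀ (a b : A) (x : X), l a (l b x) = l (a * b) x)
    (hmod₂ : ∀ (a b : A) (x : X), l a (r x b) = r (l a x) b)
    (hmod₃ : ∀ (a b : A) (x : X), r (r x a) b = r x (a * b))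
    (D : A →ₗ[ℂ] X)
    (hD : ∀ a b : A, D (a * b) = l a (D b) + r (D a) b) :
    Continuous D := by
  let _ : NonUnitalCStarAlgebra A := {}
  obtain ⟨C, hC⟩ := hlbdd
  obtain ⟨C', hC'⟩ := hrbdd
  refine ringrose_automatic_continuity_general A X (l.mkContinuous₂ C hC)
    (fun a b x => (hmod₁ a b x).symm) D fun a => ?_
  simp only [hD, LinearMap.mkContinuous₂_apply, add_sub_cancel_left]
  exact ((r (D a)).mkContinuous (C' * ‖D a‖) (hC' (D a))).continuous
end

section
/- (Johnson) Let A be a C*-algebra and X a Banach A-bimodule. Then every bounded Jordan derivation D : A → X, i.e., every bounded linear map satisfying D(a²) = a·D(a) + D(a)·a for all a ∈ A, is an associative derivation: D(ab) = a·D(b) + D(a)·b for all a, b ∈ A. -/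
/-!
Let `w = D (a * b) - a · D b - D a · b` with `a`, `b` skew-adjoint; such elements span `A`. Jordan
identities show that `⁅a, b⁆ ^ 4` annihilates the sub-bimodule generated by `w`, and since `⁅a, b⁆`
is skew-adjoint it lies in a closed self-adjoint ideal `J` annihilating that sub-bimodule.

Modulo the closure `Y` of `J · X + X · J`, the commutator `⁅a, b⁆` acts as `0` and `D` kills `J`.
Hence there `ad a` and `ad b` commute, both kill `w`, and `2 w = ad b (D a) - ad a (D b)`.
Exponentials of skew-adjoint elements are unitary, so `ad a` and `ad b` generate bounded
one-parameter groups. The product of their ergodic means fixes `w` and tends to `0` on the ranges of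
`ad a` and `ad b`, so `w ∈ Y`.

Finally, for an approximate unit `e` of `J`, the maps `x ↦ (1 - e) · x · (1 - e)` fix `w` and tend
to `0` on `Y`, whence `w = 0`.
-/

open NormedSpace Filter Topology

section ErgodicMean

variable {B : Type*} [NormedRing B] [NormedAlgebra ℝ B]

/-- The mean over `[0, t]` of the one-parameter group `s ↦ exp (s • T)`. -/
noncomputable def ergodicMean (T : B) (t : ℝ) : B :=
  t⁻¹ • ∫ s in (0 : ℝ)..t, exp (s • T)

theorem norm_ergodicMean_le {T : B} {C : ℝ} (hC : ∀ s : ℝ, ‖exp (s • T)‖ ≤ C) (t : ℝ) :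
    ‖ergodicMean T t‖ ≤ C := by
  have hC₀ : 0 ≤ C := (norm_nonneg _).trans (hC 0)
  have hint : ‖∫ s in (0 : ℝ)..t, exp (s • T)‖ ≤ C * |t - 0| :=
    intervalIntegral.norm_integral_le_of_norm_le_const fun s _ => hC s
  calc ‖ergodicMean T t‖ ≤ |t|⁻¹ * (C * |t - 0|) := by
        rw [ergodicMean, norm_smul, norm_inv, Real.norm_eq_abs]
        gcongr
    _ = C * (|t|⁻¹ * |t|) := by rw [sub_zero]; ring
    _ ≤ C := mul_le_of_le_one_right hC₀ inv_mul_le_one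

variable [CompleteSpace B]

theorem continuous_exp_smul (T : B) : Continuous fun s : ℝ => exp (s • T) :=
  continuous_iff_continuousAt.2 fun s => (hasDerivAt_exp_smul_const T s).continuousAt

theorem commute_ergodicMean {S T : B} (h : Commute S T) (t : ℝ) :
    Commute S (ergodicMean T t) := by
  let : NormedAlgebra ℚ B := .restrictScalars ℚ ℝ _
  have hint := (continuous_exp_smul T).intervalIntegrable (μ := MeasureTheory.volume) 0 t
  refine Commute.smul_right ?_ _
  calc S * ∫ s in (0 : ℝ)..t, exp (s • T)
      = ∫ s in (0 : ℝ)..t, S * exp (s • T) :=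
        ((ContinuousLinearMap.mul ℝ B S).intervalIntegral_comp_comm hint).symm
    _ = ∫ s in (0 : ℝ)..t, exp (s • T) * S := by
        simp only [((h.smul_right _).exp_right).eq]
    _ = (∫ s in (0 : ℝ)..t, exp (s • T)) * S :=
        ((ContinuousLinearMap.mul ℝ B).flip S).intervalIntegral_comp_comm hint

theorem ergodicMean_mul_self (T : B) (t : ℝ) :
    ergodicMean T t * T = t⁻¹ • (exp (t • T) - 1) := by
  have hint := (continuous_exp_smul T).intervalIntegrable (μ := MeasureTheory.volume) 0 t
  rw [ergodicMean, smul_mul_assoc]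
  congr 1
  calc (∫ s in (0 : ℝ)..t, exp (s • T)) * T
      = ∫ s in (0 : ℝ)..t, exp (s • T) * T :=
        (((ContinuousLinearMap.mul ℝ B).flip T).intervalIntegral_comp_comm hint).symm
    _ = exp (t • T) - exp ((0 : ℝ) • T) :=
        intervalIntegral.integral_eq_sub_of_hasDerivAt
          (fun s _ => hasDerivAt_exp_smul_const T s)
          (((continuous_exp_smul T).mul_const T).intervalIntegrable 0 t)
    _ = exp (t • T) - 1 := by rw [zero_smul, exp_zero]

theorem tendsto_ergodicMean_mul_self {T : B} {C : ℝ} (hC : ∀ s : ℝ, ‖exp (s • T)‖ ≤ C) :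
    Tendsto (fun t => ergodicMean T t * T) atTop (𝓝 0) := by
  simp only [ergodicMean_mul_self]
  refine tendsto_inv_atTop_zero.zero_smul_isBoundedUnder_le
    (isBoundedUnder_of ⟨C + ‖(1 : B)‖, fun t => ?_⟩)
  exact (norm_sub_le _ _).trans (by gcongr; exact hC t)

end ErgodicMean

section BoundedGroup

variable {E : Type*} [NormedAddCommGroup E] [NormedSpace ℂ E] [CompleteSpace E]
  {S T : E →L[ℂ] E}

theorem exp_apply_eq_self {w : E} (hw : T w = 0) : exp T w = w := by
  have hs := (exp_series_hasSum_exp' (𝕂 := ℂ) T).mapL (ContinuousLinearMap.apply ℂ E w)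
  refine hs.unique ?_
  convert hasSum_single 0 fun n hn => ?_ using 1
  · simp
  · obtain ⟨n, rfl⟩ := Nat.exists_eq_succ_of_ne_zero hn
    simp [pow_succ, hw]

theorem ergodicMean_apply_eq_self {w : E} (hw : T w = 0) {t : ℝ} (ht : t ≠ 0) :
    ergodicMean T t w = w := by
  have hexp (s : ℝ) : exp (s • T) w = w := exp_apply_eq_self (by simp [hw])
  have hint := (continuous_exp_smul T).intervalIntegrable (μ := MeasureTheory.volume) 0 t
  simp [ergodicMean, ContinuousLinearMap.intervalIntegral_apply hint, hexp, ht]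

theorem tendsto_ergodicMean_apply_range {C : ℝ} (hS : ∀ s : ℝ, ‖exp (s • S)‖ ≤ C)
    (hT : ∀ s : ℝ, ‖exp (s • T)‖ ≤ C) (u : E) :
    Tendsto (fun t => ergodicMean S t (ergodicMean T t (T u))) atTop (𝓝 0) := by
  have hprod : Tendsto (fun t => ergodicMean S t * (ergodicMean T t * T)) atTop (𝓝 0) :=
    isBoundedUnder_le_mul_tendsto_zero
      (isBoundedUnder_of ⟨C, norm_ergodicMean_le hS⟩) (tendsto_ergodicMean_mul_self hT)
  simpa using! ((ContinuousLinearMap.apply ℂ E u).continuous.tendsto 0).comp hprod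

theorem eq_zero_of_eq_sub_of_commute_of_norm_exp_le (hST : Commute S T) {C : ℝ}
    (hS : ∀ s : ℝ, ‖exp (s • S)‖ ≤ C) (hT : ∀ s : ℝ, ‖exp (s • T)‖ ≤ C) {w u v : E}
    (hw : w = T u - S v) (hSw : S w = 0) (hTw : T w = 0) : w = 0 := by
  have hlim : Tendsto (fun t => ergodicMean S t (ergodicMean T t (T u)) -
      ergodicMean T t (ergodicMean S t (S v))) atTop (𝓝 0) := by
    simpa using (tendsto_ergodicMean_apply_range hS hT u).sub
      (tendsto_ergodicMean_apply_range hT hS v)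
  refine tendsto_nhds_unique (tendsto_const_nhds.congr' ?_) hlim
  filter_upwards [eventually_ne_atTop 0] with t ht
  have hcomm : Commute (ergodicMean T t) (ergodicMean S t) :=
    commute_ergodicMean (commute_ergodicMean hST.symm t).symm t |>.symm
  have hswap : ergodicMean T t (ergodicMean S t (S v)) =
      ergodicMean S t (ergodicMean T t (S v)) := congrArg (fun F : E →L[ℂ] E => F (S v)) hcomm.eq
  rw [hswap, ← map_sub, ← map_sub, ← hw, ergodicMean_apply_eq_self hTw ht,
    ergodicMean_apply_eq_self hSw ht]

end BoundedGroup

theorem exists_norm_exp_map_le {A B : Type*} [NonUnitalCStarAlgebra A] [NormedRing B]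
    [NormedAlgebra ℂ B] [CompleteSpace B] (φ : A →ₙₐ[ℂ] B) (hφ : Continuous φ) :
    ∃ C : ℝ, ∀ a ∈ skewAdjoint A, ‖exp (φ a)‖ ≤ C := by
  let : NormedAlgebra ℚ B := .restrictScalars ℚ ℂ _
  let : NormedAlgebra ℚ (Unitization ℂ A) := .restrictScalars ℚ ℂ _
  let Φ : Unitization ℂ A →ₐ[ℂ] B := Unitization.lift φ
  have hΦ : Continuous Φ :=
    ((continuous_algebraMap ℂ B).comp Unitization.continuous_fst).add
      (hφ.comp Unitization.continuous_snd)
  let L : Unitization ℂ A →L[ℂ] B := ⟨Φ.toLinearMap, hΦ⟩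
  refine ⟨‖L‖, fun a ha => ?_⟩
  have hunitary : exp (a : Unitization ℂ A) ∈ unitary (Unitization ℂ A) :=
    exp_mem_unitary_of_mem_skewAdjoint <| by
      rw [skewAdjoint.mem_iff, ← Unitization.inr_star, skewAdjoint.mem_iff.1 ha,
        Unitization.inr_neg]
  have hexp : exp (φ a) = L (exp (a : Unitization ℂ A)) :=
    ((NormedSpace.map_exp Φ hΦ _).trans (by simp [Φ])).symm
  rw [hexp]
  exact L.unit_le_opNorm _ (CStarRing.norm_of_mem_unitary hunitary).le

theorem norm_sub_mul_sq_le {A : Type*} [NonUnitalNormedRing A] [StarRing A] [CStarRing A]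
    (x : A) {e : A} (he : ‖e‖ ≤ 1) :
    ‖x - x * e‖ ^ 2 ≤ 2 * ‖star x * x - star x * x * e‖ := by
  set r := star x * x - star x * x * e with hr
  have hstar : star (x - x * e) * (x - x * e) = r - star e * r := by
    rw [hr, star_sub, star_mul]
    noncomm_ring
  have hle : ‖star e * r‖ ≤ ‖r‖ :=
    (norm_mul_le _ _).trans (mul_le_of_le_one_left (norm_nonneg _) (by rwa [norm_star]))
  rw [sq, ← CStarRing.norm_star_mul_self, hstar]
  linarith [norm_sub_le r (star e * r)]

section StarIdeal

variable {R A : Type*} [CommRing R] [NonUnitalRing A] [StarRing A] [Module R A]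
  {N : NonUnitalStarSubalgebra R A}

theorem mul_mem_of_forall_mul_mem (hN : ∀ a, ∀ j ∈ N, a * j ∈ N) (a : A) {j : A} (hj : j ∈ N) :
    j * a ∈ N := by
  simpa using star_mem (hN (star a) _ (star_mem hj))

theorem lie_mem_of_forall_mul_mem (hN : ∀ a, ∀ j ∈ N, a * j ∈ N) (a : A) {j : A} (hj : j ∈ N) :
    ⁅a, j⁆ ∈ N :=
  sub_mem (hN a j hj) (mul_mem_of_forall_mul_mem hN a hj)

end StarIdeal

section ClosedStarIdeal

variable {A : Type*} [NonUnitalCStarAlgebra A]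

/-- The closed unit ball of a subalgebra, the index set of its approximate units. -/
abbrev Contraction (N : NonUnitalStarSubalgebra ℂ A) : Type _ :=
  {e : A // e ∈ N ∧ ‖e‖ ≤ 1}

variable {N : NonUnitalStarSubalgebra ℂ A} [IsClosed (N : Set A)]

variable (N) in
theorem exists_approximateUnit_norm_le_one :
    ∃ l : Filter (Contraction N), l.NeBot ∧ ∀ j ∈ N,
      Tendsto (fun e : Contraction N => j * e) l (𝓝 j) ∧
        Tendsto (fun e : Contraction N => e * j) l (𝓝 j) := by
  let := CStarAlgebra.spectralOrder N
  have := CStarAlgebra.spectralOrderedRing N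
  have hF := CStarAlgebra.increasingApproximateUnit N
  have := hF.neBot
  let ι : Contraction N → N := fun e => ⟨e, e.2.1⟩
  have hrange : Set.range ι ∈ CStarAlgebra.approximateUnit N :=
    hF.eventually_norm.mono fun e he => ⟨⟨e, e.2, he⟩, rfl⟩
  refine ⟨(CStarAlgebra.approximateUnit N).comap ι, .comap_of_range_mem ‹_› hrange,
    fun j hj => ⟨?_, ?_⟩⟩
  · exact (continuous_subtype_val.tendsto _).comp
      ((hF.tendsto_mul_left ⟨j, hj⟩).comp tendsto_comap)
  · exact (continuous_subtype_val.tendsto _).comp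
      ((hF.tendsto_mul_right ⟨j, hj⟩).comp tendsto_comap)

theorem mem_of_star_mul_self_mem (hN : ∀ a, ∀ j ∈ N, a * j ∈ N) {x : A}
    (hx : star x * x ∈ N) : x ∈ N := by
  obtain ⟨l, _, hl⟩ := exists_approximateUnit_norm_le_one N
  have hsq : Tendsto (fun e : Contraction N => ‖x - x * e‖ ^ 2) l (𝓝 0) := by
    refine squeeze_zero (fun _ => by positivity) (fun e => norm_sub_mul_sq_le x e.2.2) ?_
    simpa using ((hl _ hx).1.const_sub (star x * x)).norm.const_mul 2
  have hlim : Tendsto (fun e : Contraction N => x * e) l (𝓝 x) := by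
    rw [tendsto_iff_norm_sub_tendsto_zero]
    simpa [Real.sqrt_sq, norm_sub_rev] using hsq.sqrt
  exact (‹IsClosed (N : Set A)›).mem_of_tendsto hlim (.of_forall fun e => hN x e e.2.1)

end ClosedStarIdeal

theorem tendsto_zero_of_mem_topologicalClosure_span {𝕜 X Z ι : Type*}
    [NontriviallyNormedField 𝕜] [NormedAddCommGroup X] [NormedSpace 𝕜 X] [NormedAddCommGroup Z]
    [NormedSpace 𝕜 Z] {P : ι → X →L[𝕜] Z} {C : ℝ} (hP : ∀ i, ‖P i‖ ≤ C) {l : Filter ι} {s : Set X}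
    (hs : ∀ x ∈ s, Tendsto (fun i => P i x) l (𝓝 0)) {x : X}
    (hx : x ∈ (Submodule.span 𝕜 s).topologicalClosure) : Tendsto (fun i => P i x) l (𝓝 0) := by
  let K : Submodule 𝕜 X :=
    { carrier := {x | Tendsto (fun i => P i x) l (𝓝 0)}
      add_mem' := fun hx hy => by simpa using hx.add hy
      zero_mem' := by simpa using! tendsto_const_nhds
      smul_mem' := fun c x hx => by simpa using hx.const_smul c }
  have hequi : Equicontinuous ((↑) ∘ P : ι → X → Z) :=
    (show (∃ C, ∀ i, ‖P i‖ ≤ C) ↔ _ from (NormedSpace.equicontinuous_TFAE P).out 5 1).1 ⟨C, hP⟩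
  have hsK : Submodule.span 𝕜 s ≤ K := Submodule.span_le.2 hs
  have hK : IsClosed (K : Set X) := hequi.isClosed_setOfPred_tendsto continuous_const
  exact Submodule.topologicalClosure_minimal _ hsK hK hx

/-- An `A`-bimodule structure on the normed space `X` with bounded actions. Both actions are curried
with the algebra element first, so that `right a x` stands for `x · a`. -/
structure NormedBimodule (𝕜 A X : Type*) [NontriviallyNormedField 𝕜] [NonUnitalNormedRing A]
    [NormedSpace 𝕜 A] [NormedAddCommGroup X] [NormedSpace 𝕜 X] where
  /-- The left action `x ↦ a · x`. -/
  left : A →L[𝕜] X →L[𝕜] X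
  /-- The right action `x ↦ x · a`. -/
  right : A →L[𝕜] X →L[𝕜] X
  left_mul : ∀ a b x, left (a * b) x = left a (left b x)
  right_mul : ∀ a b x, right (a * b) x = right b (right a x)
  left_right : ∀ a b x, left a (right b x) = right b (left a x)

namespace NormedBimodule

section Algebraic

variable {𝕜 A X : Type*} [NontriviallyNormedField 𝕜] [NonUnitalNormedRing A] [NormedSpace 𝕜 A]
  [NormedAddCommGroup X] [NormedSpace 𝕜 X] (m : NormedBimodule 𝕜 A X)

/-- The commutator `x ↦ a · x - x · a`; the map `a ↦ ad a x` is an inner derivation. -/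
def ad : A →L[𝕜] X →L[𝕜] X :=
  m.left - m.right

theorem ad_apply (a : A) (x : X) : m.ad a x = m.left a x - m.right a x :=
  rfl

theorem ad_lie (a b : A) : m.ad ⁅a, b⁆ = ⁅m.ad a, m.ad b⁆ := by
  ext x
  simp only [Ring.lie_def, ad_apply, sub_apply, mul_apply_eq_comp, map_sub, m.left_mul,
    m.right_mul, m.left_right]
  abel

/-- The identity `D (a * a) = a · D a + D a · a` characterising Jordan derivations. -/
def IsJordanDerivation (D : A →L[𝕜] X) : Prop :=
  ∀ a, D (a * a) = m.left a (D a) + m.right a (D a)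

/-- The failure of the Leibniz rule at `(a, b)`. -/
def leibnizDefect (D : A →L[𝕜] X) (a b : A) : X :=
  D (a * b) - m.left a (D b) - m.right b (D a)

variable {m} {D : A →L[𝕜] X}

theorem leibnizDefect_add_smul_left [IsScalarTower 𝕜 A A] (a₁ a₂ b : A) (c : 𝕜) :
    m.leibnizDefect D (a₁ + c • a₂) b =
      m.leibnizDefect D a₁ b + c • m.leibnizDefect D a₂ b := by
  simp only [leibnizDefect, add_mul, smul_mul_assoc, map_add, map_smul, add_apply, smul_apply]
  module

theorem leibnizDefect_add_smul_right [SMulCommClass 𝕜 A A] (a b₁ b₂ : A) (c : 𝕜) :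
    m.leibnizDefect D a (b₁ + c • b₂) =
      m.leibnizDefect D a b₁ + c • m.leibnizDefect D a b₂ := by
  simp only [leibnizDefect, mul_add, mul_smul_comm, map_add, map_smul, add_apply, smul_apply]
  module

namespace IsJordanDerivation

theorem map_mul_add_mul (hD : m.IsJordanDerivation D) (a b : A) : D (a * b) + D (b * a) =
    m.left a (D b) + m.right b (D a) + (m.left b (D a) + m.right a (D b)) := by
  have h := hD (a + b)
  simp only [add_mul, mul_add, map_add, add_apply, hD a, hD b] at h
  linear_combination (norm := module) h

theorem leibnizDefect_swap (hD : m.IsJordanDerivation D) (a b : A) :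
    m.leibnizDefect D b a = -m.leibnizDefect D a b := by
  simp only [leibnizDefect]
  linear_combination (norm := module) hD.map_mul_add_mul a b

theorem two_smul_leibnizDefect (hD : m.IsJordanDerivation D) (a b : A) :
    (2 : 𝕜) • m.leibnizDefect D a b = D ⁅a, b⁆ + (m.ad b (D a) - m.ad a (D b)) := by
  simp only [leibnizDefect, ad_apply, Ring.lie_def, map_sub]
  linear_combination (norm := module) hD.map_mul_add_mul a b

variable [NeZero (2 : 𝕜)]

theorem map_mul_mul_self (hD : m.IsJordanDerivation D) (a b : A) : D (a * b * a) =
    m.right a (m.right b (D a)) + m.right a (m.left a (D b)) + m.left a (m.left b (D a)) := by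
  -- `2aba = a(ab + ba) + (ab + ba)a - (a²b + ba²)`
  have h₁ := hD.map_mul_add_mul a (a * b + b * a)
  have h₂ := hD.map_mul_add_mul (a * a) b
  rw [map_add D (a * b), hD.map_mul_add_mul a b] at h₁
  rw [hD a] at h₂
  simp only [mul_add, add_mul, map_add, add_apply, m.left_mul, m.right_mul, m.left_right,
    ← mul_assoc] at h₁ h₂
  refine smul_right_injective X (two_ne_zero' 𝕜) ?_
  linear_combination (norm := module) h₁ - h₂

theorem map_mul_mul_add (hD : m.IsJordanDerivation D) (a b c : A) :
    D (a * b * c) + D (c * b * a) =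
    m.right c (m.right b (D a)) + m.right c (m.left a (D b)) + m.left a (m.left b (D c)) +
    (m.right a (m.right b (D c)) + m.right a (m.left c (D b)) + m.left c (m.left b (D a))) := by
  have h := hD.map_mul_mul_self (a + c) b
  simp only [add_mul, mul_add, map_add, add_apply] at h
  linear_combination (norm := module) h - hD.map_mul_mul_self a b - hD.map_mul_mul_self c b

theorem map_lie_lie (hD : m.IsJordanDerivation D) (a b : A) :
    D ⁅a, ⁅a, b⁆⁆ = m.ad a (m.ad a (D b) - m.ad b (D a)) - m.ad ⁅a, b⁆ (D a) := by
  -- `⁅a, ⁅a, b⁆⁆ = a²b + ba² - 2aba`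
  have h := hD.map_mul_add_mul (a * a) b
  rw [hD a] at h
  simp only [Ring.lie_def, ad_apply, mul_sub, sub_mul, map_add, map_sub, sub_apply, m.left_mul,
    m.right_mul, m.left_right, ← mul_assoc] at h ⊢
  linear_combination (norm := module) h - (2 : 𝕜) • hD.map_mul_mul_self a b

theorem right_leibnizDefect_eq_neg (hD : m.IsJordanDerivation D) (a b c : A) :
    m.right ⁅a, b⁆ (m.right c (m.leibnizDefect D a b)) =
      -m.left ⁅a, b⁆ (m.left c (m.leibnizDefect D a b)) := by
  -- expand `D (ab·c·ba + ba·c·ab)`, where `ab·c·ba = a(bcb)a` and `ba·c·ab = b(aca)b`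
  have h₁ := hD.map_mul_mul_add (a * b) c (b * a)
  have h₂ := hD.map_mul_mul_self a (b * c * b)
  have h₃ := hD.map_mul_mul_self b (a * c * a)
  rw [hD.map_mul_mul_self b c] at h₂
  rw [hD.map_mul_mul_self a c] at h₃
  have hab : D (a * b) = m.left a (D b) + m.right b (D a) + m.leibnizDefect D a b := by
    rw [leibnizDefect]; abel
  have hba : D (b * a) = m.left b (D a) + m.right a (D b) - m.leibnizDefect D a b := by
    rw [← neg_neg (m.leibnizDefect D a b), ← hD.leibnizDefect_swap, leibnizDefect]; abel
  rw [hab, hba] at h₁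
  simp only [Ring.lie_def, map_add, map_sub, sub_apply, m.left_mul, m.right_mul, m.left_right,
    ← mul_assoc] at h₁ h₂ h₃ ⊢
  linear_combination (norm := module) h₁ - h₂ - h₃

theorem right_lie_right_lie_leibnizDefect (hD : m.IsJordanDerivation D) (a b c d : A) :
    m.right ⁅a, b⁆ (m.right d (m.right ⁅a, b⁆ (m.right c (m.leibnizDefect D a b)))) =
      m.left ⁅a, b⁆ (m.left c (m.left ⁅a, b⁆ (m.left d (m.leibnizDefect D a b)))) := by
  simp only [hD.right_leibnizDefect_eq_neg, map_neg, neg_neg, ← m.left_right]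

theorem left_lie_left_lie_leibnizDefect_eq_zero (hD : m.IsJordanDerivation D) (a b c d : A) :
    m.left ⁅a, b⁆ (m.left c (m.left ⁅a, b⁆ (m.left d (m.leibnizDefect D a b)))) = 0 := by
  have h := hD.right_leibnizDefect_eq_neg a b (c * ⁅a, b⁆ * d)
  simp only [m.right_mul, m.left_mul, hD.right_lie_right_lie_leibnizDefect] at h
  refine (smul_eq_zero_iff_right (two_ne_zero' 𝕜)).1 ?_
  linear_combination (norm := module) h

theorem ad_leibnizDefect_eq_zero (hD : m.IsJordanDerivation D) {a b : A}
    (hk : m.ad ⁅a, b⁆ = 0) (hDk : D ⁅a, b⁆ = 0) (hDak : D ⁅a, ⁅a, b⁆⁆ = 0) :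
    m.ad a (m.leibnizDefect D a b) = 0 := by
  have hlie := hD.map_lie_lie a b
  rw [hDak, hk, zero_apply, sub_zero] at hlie
  refine (smul_eq_zero_iff_right (two_ne_zero' 𝕜)).1 ?_
  rw [← map_smul, hD.two_smul_leibnizDefect, hDk, zero_add, ← neg_sub, map_neg, ← hlie, neg_zero]

end IsJordanDerivation

end Algebraic

section ActionSpan

variable {𝕜 A X : Type*} [NontriviallyNormedField 𝕜] [NonUnitalNormedRing A] [NormedSpace 𝕜 A]
  [NormedAddCommGroup X] [NormedSpace 𝕜 X] (m : NormedBimodule 𝕜 A X) (J : Set A)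

/-- The closed subspace spanned by `J · X` and `X · J`. -/
def actionSpan : Submodule 𝕜 X :=
  (Submodule.span 𝕜 {y | ∃ j ∈ J, ∃ x, y = m.left j x ∨ y = m.right j x}).topologicalClosure

instance isClosed_actionSpan : IsClosed (m.actionSpan J : Set X) :=
  Submodule.isClosed_topologicalClosure _

variable {m J}

theorem left_mem_actionSpan {j : A} (hj : j ∈ J) (x : X) : m.left j x ∈ m.actionSpan J :=
  Submodule.le_topologicalClosure _ (Submodule.subset_span ⟨j, hj, x, .inl rfl⟩)

theorem right_mem_actionSpan {j : A} (hj : j ∈ J) (x : X) : m.right j x ∈ m.actionSpan J :=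
  Submodule.le_topologicalClosure _ (Submodule.subset_span ⟨j, hj, x, .inr rfl⟩)

theorem map_mem_actionSpan (F : X →L[𝕜] X)
    (hl : ∀ j ∈ J, ∀ x, F (m.left j x) ∈ m.actionSpan J)
    (hr : ∀ j ∈ J, ∀ x, F (m.right j x) ∈ m.actionSpan J) {y : X} (hy : y ∈ m.actionSpan J) :
    F y ∈ m.actionSpan J := by
  have hle : m.actionSpan J ≤ (m.actionSpan J).comap F.toLinearMap := by
    refine Submodule.topologicalClosure_minimal _ (Submodule.span_le.2 ?_)
      ((m.isClosed_actionSpan J).preimage F.continuous)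
    rintro _ ⟨j, hj, x, rfl | rfl⟩
    · exact hl j hj x
    · exact hr j hj x
  exact hle hy

theorem left_mem_actionSpan_of_mem (hJ : ∀ a, ∀ j ∈ J, a * j ∈ J) (a : A) {y : X}
    (hy : y ∈ m.actionSpan J) : m.left a y ∈ m.actionSpan J := by
  refine map_mem_actionSpan (m.left a) (fun j hj x => ?_) (fun j hj x => ?_) hy
  · rw [← m.left_mul]
    exact left_mem_actionSpan (hJ a j hj) x
  · rw [m.left_right]
    exact right_mem_actionSpan hj _

theorem right_mem_actionSpan_of_mem (hJ : ∀ a, ∀ j ∈ J, j * a ∈ J) (a : A) {y : X}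
    (hy : y ∈ m.actionSpan J) : m.right a y ∈ m.actionSpan J := by
  refine map_mem_actionSpan (m.right a) (fun j hj x => ?_) (fun j hj x => ?_) hy
  · rw [← m.left_right]
    exact left_mem_actionSpan hj _
  · rw [← m.right_mul]
    exact right_mem_actionSpan (hJ a j hj) x

end ActionSpan

section Annihilator

variable {𝕜 A X : Type*} [NontriviallyNormedField 𝕜] [NonUnitalNormedRing A] [NormedSpace 𝕜 A]
  [IsScalarTower 𝕜 A A] [SMulCommClass 𝕜 A A] [NormedAddCommGroup X] [NormedSpace 𝕜 X]
  {m : NormedBimodule 𝕜 A X} {w : X}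

/-- The two-sided ideal annihilating the sub-bimodule generated by `w`. -/
def annihilator (m : NormedBimodule 𝕜 A X) (w : X) : Submodule 𝕜 A where
  carrier := {j | (m.left j w = 0 ∧ m.right j w = 0) ∧
    ∀ c, m.left (j * c) w = 0 ∧ m.right (c * j) w = 0}
  add_mem' := fun ha hb =>
    ⟨by simp [ha.1, hb.1], fun c => by simp [add_mul, mul_add, ha.2 c, hb.2 c]⟩
  zero_mem' := by simp
  smul_mem' := fun s _ ha =>
    ⟨by simp [ha.1], fun c => by simp [smul_mul_assoc, mul_smul_comm, ha.2 c]⟩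

theorem isClosed_annihilator (m : NormedBimodule 𝕜 A X) (w : X) :
    IsClosed (m.annihilator w : Set A) := by
  have hl {f : A → A} (hf : Continuous f) : IsClosed {j | m.left (f j) w = 0} :=
    isClosed_eq ((m.left.flip w).continuous.comp hf) continuous_const
  have hr {f : A → A} (hf : Continuous f) : IsClosed {j | m.right (f j) w = 0} :=
    isClosed_eq ((m.right.flip w).continuous.comp hf) continuous_const
  simp only [annihilator, Submodule.coe_set_mk, AddSubmonoid.coe_set_mk,
    AddSubsemigroup.coe_set_mk, Set.ofPred_and, Set.ofPred_forall]
  exact ((hl continuous_id).inter (hr continuous_id)).inter <| isClosed_iInter fun c =>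
    (hl (by fun_prop)).inter (hr (by fun_prop))

theorem mul_mem_annihilator (a : A) {j : A} (hj : j ∈ m.annihilator w) :
    a * j ∈ m.annihilator w := by
  refine ⟨⟨?_, (hj.2 a).2⟩, fun c => ⟨?_, ?_⟩⟩
  · rw [m.left_mul, hj.1.1, map_zero]
  · rw [mul_assoc, m.left_mul, (hj.2 c).1, map_zero]
  · rw [← mul_assoc]; exact (hj.2 _).2

theorem annihilator_mul_mem (a : A) {j : A} (hj : j ∈ m.annihilator w) :
    j * a ∈ m.annihilator w := by
  refine ⟨⟨(hj.2 a).1, ?_⟩, fun c => ⟨?_, ?_⟩⟩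
  · rw [m.right_mul, hj.1.2, map_zero]
  · rw [mul_assoc]; exact (hj.2 _).1
  · rw [← mul_assoc, m.right_mul, (hj.2 c).2, map_zero]

end Annihilator

section Quotient

variable {𝕜 A X : Type*} [NontriviallyNormedField 𝕜] [NonUnitalNormedRing A] [NormedSpace 𝕜 A]
  [NormedAddCommGroup X] [NormedSpace 𝕜 X] (m : NormedBimodule 𝕜 A X) (Y : Submodule 𝕜 X)

/-- The action induced on the quotient by an invariant closed subspace. -/
noncomputable def quotientAction (f : A →L[𝕜] X →L[𝕜] X) (hf : ∀ a, ∀ y ∈ Y, f a y ∈ Y) :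
    A →L[𝕜] (X ⧸ Y) →L[𝕜] (X ⧸ Y) :=
  (Y.liftQL (ContinuousLinearMap.compL 𝕜 A X (X ⧸ Y) Y.mkQL ∘L f.flip) fun y hy => by
    ext a
    exact (Submodule.Quotient.mk_eq_zero Y).2 (hf a y hy)).flip

@[simp]
theorem quotientAction_mk (f : A →L[𝕜] X →L[𝕜] X) (hf : ∀ a, ∀ y ∈ Y, f a y ∈ Y) (a : A) (x : X) :
    quotientAction Y f hf a (Submodule.Quotient.mk x) = Submodule.Quotient.mk (f a x) :=
  rfl

/-- The quotient of a Banach bimodule by a closed sub-bimodule. -/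
noncomputable def quotient [IsClosed (Y : Set X)] (hl : ∀ a, ∀ y ∈ Y, m.left a y ∈ Y)
    (hr : ∀ a, ∀ y ∈ Y, m.right a y ∈ Y) : NormedBimodule 𝕜 A (X ⧸ Y) where
  left := quotientAction Y m.left hl
  right := quotientAction Y m.right hr
  left_mul a b z := by
    obtain ⟨x, rfl⟩ := Submodule.Quotient.mk_surjective Y z
    simp [m.left_mul]
  right_mul a b z := by
    obtain ⟨x, rfl⟩ := Submodule.Quotient.mk_surjective Y z
    simp [m.right_mul]
  left_right a b z := by
    obtain ⟨x, rfl⟩ := Submodule.Quotient.mk_surjective Y z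
    simp [m.left_right]

end Quotient

section Compression

variable {𝕜 A X : Type*} [NontriviallyNormedField 𝕜] [NonUnitalNormedRing A] [NormedSpace 𝕜 A]
  [NormedAddCommGroup X] [NormedSpace 𝕜 X] {m : NormedBimodule 𝕜 A X}

/-- The compression `x ↦ (1 - a) · x · (1 - a)`. -/
def compress (m : NormedBimodule 𝕜 A X) (a : A) : X →L[𝕜] X :=
  (1 - m.left a) * (1 - m.right a)

theorem compress_apply (a : A) (x : X) :
    m.compress a x = x - m.right a x - m.left a (x - m.right a x) :=
  rfl

theorem compress_left (a j : A) (x : X) :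
    m.compress a (m.left j x) = m.left (j - a * j) (x - m.right a x) := by
  simp only [compress_apply, map_sub, sub_apply, m.left_mul, m.left_right]
  abel

theorem compress_right (a j : A) (x : X) :
    m.compress a (m.right j x) = m.right (j - j * a) (x - m.left a x) := by
  simp only [compress_apply, map_sub, sub_apply, m.right_mul, m.left_right]

theorem norm_compress_le (m : NormedBimodule 𝕜 A X) {a : A} (ha : ‖a‖ ≤ 1) :
    ‖m.compress a‖ ≤ (1 + ‖m.left‖) * (1 + ‖m.right‖) := by
  have hsub (f : A →L[𝕜] X →L[𝕜] X) : ‖1 - f a‖ ≤ 1 + ‖f‖ :=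
    (norm_sub_le _ _).trans
      (add_le_add ContinuousLinearMap.norm_id_le (f.unit_le_opNorm a ha))
  exact (norm_mul_le _ _).trans
    (mul_le_mul (hsub _) (hsub _) (norm_nonneg _) (by positivity))

end Compression

section CStarAlgebra

variable {A X : Type*} [NonUnitalCStarAlgebra A] [NormedAddCommGroup X] [NormedSpace ℂ X]
  {m : NormedBimodule ℂ A X} {D : A →L[ℂ] X}

theorem exists_norm_exp_ad_le [CompleteSpace X] (m : NormedBimodule ℂ A X) :
    ∃ C : ℝ, ∀ a ∈ skewAdjoint A, ‖exp (m.ad a)‖ ≤ C := by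
  let : NormedAlgebra ℚ (X →L[ℂ] X) := .restrictScalars ℚ ℂ _
  let lHom : A →ₙₐ[ℂ] (X →L[ℂ] X) :=
    { m.left with
      map_zero' := map_zero m.left
      map_mul' := fun a b => by ext x; exact m.left_mul a b x }
  let rHom : A →ₙₐ[ℂ] (X →L[ℂ] X)ᵐᵒᵖ :=
    { toFun := fun a => MulOpposite.op (m.right a)
      map_smul' := fun c a => by simp
      map_zero' := by simp
      map_add' := fun a b => by simp
      map_mul' := fun a b => MulOpposite.unop_injective <| by ext x; exact m.right_mul a b x }
  obtain ⟨Cl, hCl⟩ := exists_norm_exp_map_le lHom m.left.continuous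
  obtain ⟨Cr, hCr⟩ := exists_norm_exp_map_le rHom
    (MulOpposite.continuous_op.comp m.right.continuous)
  refine ⟨Cl * Cr, fun a ha => ?_⟩
  have hcomm : Commute (m.left a) (m.right (-a)) := by
    ext x; exact m.left_right a (-a) x
  have hl : ‖exp (m.left a)‖ ≤ Cl := hCl a ha
  have hr : ‖exp (m.right (-a))‖ ≤ Cr := by
    rw [← MulOpposite.norm_op, ← exp_op]
    exact hCr (-a) (neg_mem ha)
  calc ‖exp (m.ad a)‖ = ‖exp (m.left a) * exp (m.right (-a))‖ := by
        rw [← exp_add_of_commute hcomm, map_neg, ← sub_eq_add_neg]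
        rfl
    _ ≤ Cl * Cr := (norm_mul_le _ _).trans
        (mul_le_mul hl hr (norm_nonneg _) ((norm_nonneg _).trans hl))

theorem IsJordanDerivation.leibnizDefect_eq_zero_of_ad_lie_eq_zero [CompleteSpace X]
    (hD : m.IsJordanDerivation D) {a b : A} (ha : a ∈ skewAdjoint A) (hb : b ∈ skewAdjoint A)
    (hk : m.ad ⁅a, b⁆ = 0) (hDk : D ⁅a, b⁆ = 0) (hDak : D ⁅a, ⁅a, b⁆⁆ = 0)
    (hDbk : D ⁅b, ⁅b, a⁆⁆ = 0) : m.leibnizDefect D a b = 0 := by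
  obtain ⟨C, hC⟩ := m.exists_norm_exp_ad_le
  have hgroup {c : A} (hc : c ∈ skewAdjoint A) (s : ℝ) : ‖exp (s • m.ad c)‖ ≤ C := by
    have hsmul : s • m.ad c = m.ad (s • c) := (map_real_smul m.ad m.ad.continuous s c).symm
    rw [hsmul]
    exact hC _ (skewAdjoint.smul_mem s hc)
  have hcomm : Commute (m.ad a) (m.ad b) := by
    rw [commute_iff_lie_eq, ← ad_lie, hk]
  have hswap : ⁅b, a⁆ = -⁅a, b⁆ := by rw [Ring.lie_def, Ring.lie_def, neg_sub]
  have ha₀ : m.ad a (m.leibnizDefect D a b) = 0 := hD.ad_leibnizDefect_eq_zero hk hDk hDak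
  have hb₀ : m.ad b (m.leibnizDefect D a b) = 0 := by
    rw [← neg_eq_zero, ← map_neg, ← hD.leibnizDefect_swap]
    exact hD.ad_leibnizDefect_eq_zero (by rw [hswap, map_neg, hk, neg_zero])
      (by rw [hswap, map_neg, hDk, neg_zero]) hDbk
  have h₂ : (2 : ℂ) • m.leibnizDefect D a b = m.ad b (D a) - m.ad a (D b) := by
    rw [hD.two_smul_leibnizDefect, hDk, zero_add]
  refine (smul_eq_zero_iff_right (two_ne_zero' ℂ)).1 ?_
  exact eq_zero_of_eq_sub_of_commute_of_norm_exp_le hcomm (hgroup ha) (hgroup hb) h₂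
    (by rw [map_smul, ha₀, smul_zero]) (by rw [map_smul, hb₀, smul_zero])

/-- The largest self-adjoint ideal annihilating the sub-bimodule generated by `w`. -/
def starAnnihilator (m : NormedBimodule ℂ A X) (w : X) : NonUnitalStarSubalgebra ℂ A where
  carrier := {j | j ∈ m.annihilator w ∧ star j ∈ m.annihilator w}
  add_mem' := fun ha hb => ⟨add_mem ha.1 hb.1, by rw [star_add]; exact add_mem ha.2 hb.2⟩
  zero_mem' := ⟨zero_mem _, by rw [star_zero]; exact zero_mem _⟩
  mul_mem' := fun {a b} ha hb =>
    ⟨mul_mem_annihilator a hb.1, by rw [star_mul]; exact mul_mem_annihilator _ ha.2⟩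
  smul_mem' := fun s a ha =>
    ⟨Submodule.smul_mem _ s ha.1, by rw [star_smul]; exact Submodule.smul_mem _ _ ha.2⟩
  star_mem' := fun ha => ⟨ha.2, by rw [star_star]; exact ha.1⟩

instance isClosed_starAnnihilator (w : X) : IsClosed (m.starAnnihilator w : Set A) :=
  (m.isClosed_annihilator w).inter ((m.isClosed_annihilator w).preimage continuous_star)

theorem mul_mem_starAnnihilator {w : X} (a : A) {j : A} (hj : j ∈ m.starAnnihilator w) :
    a * j ∈ m.starAnnihilator w :=
  ⟨mul_mem_annihilator a hj.1, by rw [star_mul]; exact annihilator_mul_mem _ hj.2⟩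

namespace IsJordanDerivation

theorem lie_mul_lie_mem_annihilator (hD : m.IsJordanDerivation D) (a b : A) :
    ⁅a, b⁆ * ⁅a, b⁆ * (⁅a, b⁆ * ⁅a, b⁆) ∈ m.annihilator (m.leibnizDefect D a b) := by
  set k := ⁅a, b⁆ with hk
  refine ⟨⟨?_, ?_⟩, fun c => ⟨?_, ?_⟩⟩
  · simp only [m.left_mul, hk, hD.left_lie_left_lie_leibnizDefect_eq_zero]
  · simp only [m.right_mul, hk, hD.right_lie_right_lie_leibnizDefect,
      hD.left_lie_left_lie_leibnizDefect_eq_zero]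
  · have h := hD.left_lie_left_lie_leibnizDefect_eq_zero a b k (k * c)
    simpa only [m.left_mul] using h
  · have h := hD.right_lie_right_lie_leibnizDefect a b (c * k) k
    rw [hD.left_lie_left_lie_leibnizDefect_eq_zero] at h
    simpa only [m.right_mul] using h

theorem lie_mem_starAnnihilator (hD : m.IsJordanDerivation D) {a b : A}
    (ha : a ∈ skewAdjoint A) (hb : b ∈ skewAdjoint A) :
    ⁅a, b⁆ ∈ m.starAnnihilator (m.leibnizDefect D a b) := by
  set w := m.leibnizDefect D a b
  have hmem : ⁅a, b⁆ * ⁅a, b⁆ * (⁅a, b⁆ * ⁅a, b⁆) ∈ m.annihilator w :=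
    hD.lie_mul_lie_mem_annihilator a b
  set k := ⁅a, b⁆ with hk
  have hstar : star k = -k := by
    rw [hk, Ring.lie_def, star_sub, star_mul, star_mul, skewAdjoint.mem_iff.1 ha,
      skewAdjoint.mem_iff.1 hb]
    noncomm_ring
  have hsq : star (k * k) = k * k := by rw [star_mul, hstar, neg_mul_neg]
  have hfour : k * k * (k * k) ∈ m.starAnnihilator w := ⟨hmem, by rwa [star_mul, hsq]⟩
  have htwo : k * k ∈ m.starAnnihilator w :=
    mem_of_star_mul_self_mem (fun a _ => mul_mem_starAnnihilator a) (by rwa [hsq])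
  refine mem_of_star_mul_self_mem (fun a _ => mul_mem_starAnnihilator a) ?_
  rw [hstar, neg_mul]
  exact neg_mem htwo

theorem map_mem_actionSpan (hD : m.IsJordanDerivation D) {N : NonUnitalStarSubalgebra ℂ A}
    [IsClosed (N : Set A)] {j : A} (hj : j ∈ N) : D j ∈ m.actionSpan (N : Set A) := by
  obtain ⟨l, _, hl⟩ := exists_approximateUnit_norm_le_one N
  have hlim : Tendsto (fun e : Contraction N => D (j * e) + D (e * j)) l (𝓝 (D j + D j)) :=
    ((D.continuous.tendsto j).comp (hl j hj).1).add ((D.continuous.tendsto j).comp (hl j hj).2)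
  have hmem : D j + D j ∈ m.actionSpan (N : Set A) := by
    refine (m.isClosed_actionSpan N).mem_of_tendsto hlim (.of_forall fun e => ?_)
    rw [hD.map_mul_add_mul]
    exact add_mem
      (add_mem (left_mem_actionSpan hj _) (right_mem_actionSpan e.2.1 _))
      (add_mem (left_mem_actionSpan e.2.1 _) (right_mem_actionSpan hj _))
  rw [← two_smul ℂ] at hmem
  exact ((m.actionSpan (N : Set A)).smul_mem_iff two_ne_zero).1 hmem

theorem leibnizDefect_mem_actionSpan [CompleteSpace X] (hD : m.IsJordanDerivation D)
    {N : NonUnitalStarSubalgebra ℂ A} [IsClosed (N : Set A)] (hN : ∀ a, ∀ j ∈ N, a * j ∈ N)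
    {a b : A} (ha : a ∈ skewAdjoint A) (hb : b ∈ skewAdjoint A) (hk : ⁅a, b⁆ ∈ N) :
    m.leibnizDefect D a b ∈ m.actionSpan (N : Set A) := by
  let Y := m.actionSpan (N : Set A)
  let m' := m.quotient Y (fun a _ => left_mem_actionSpan_of_mem hN a)
    (fun a _ => right_mem_actionSpan_of_mem (fun a _ => mul_mem_of_forall_mul_mem hN a) a)
  let D' : A →L[ℂ] X ⧸ Y := Y.mkQL ∘L D
  have hD' : m'.IsJordanDerivation D' := fun c => congrArg Y.mkQ (hD c)
  have hDN {j : A} (hj : j ∈ N) : D' j = 0 :=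
    (Submodule.Quotient.mk_eq_zero Y).2 (hD.map_mem_actionSpan hj)
  have had : m'.ad ⁅a, b⁆ = 0 := by
    ext z
    obtain ⟨x, rfl⟩ := Submodule.Quotient.mk_surjective Y z
    exact (Submodule.Quotient.mk_eq_zero Y).2
      (sub_mem (left_mem_actionSpan hk x) (right_mem_actionSpan hk x))
  have hk' : ⁅b, a⁆ ∈ N := by
    have hneg := neg_mem hk
    rwa [Ring.lie_def, neg_sub, ← Ring.lie_def] at hneg
  refine (Submodule.Quotient.mk_eq_zero Y).1 ?_
  exact hD'.leibnizDefect_eq_zero_of_ad_lie_eq_zero ha hb had (hDN hk)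
    (hDN (lie_mem_of_forall_mul_mem hN a hk)) (hDN (lie_mem_of_forall_mul_mem hN b hk'))

end IsJordanDerivation

theorem tendsto_compress_of_mem_actionSpan {N : NonUnitalStarSubalgebra ℂ A}
    {l : Filter (Contraction N)} (hl : ∀ j ∈ N, Tendsto (fun e : Contraction N => j * e) l (𝓝 j) ∧
      Tendsto (fun e : Contraction N => e * j) l (𝓝 j)) {x : X}
    (hx : x ∈ m.actionSpan (N : Set A)) :
    Tendsto (fun e : Contraction N => m.compress (e : A) x) l (𝓝 0) := by
  have hbdd (f : A →L[ℂ] X →L[ℂ] X) (x : X) (e : Contraction N) :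
      ‖x - f e x‖ ≤ ‖x‖ + ‖f‖ * ‖x‖ :=
    (norm_sub_le _ _).trans <| add_le_add_right
      ((f e).le_of_opNorm_le (f.unit_le_opNorm _ e.2.2) x) _
  have htendsto (f g : A →L[ℂ] X →L[ℂ] X) (x : X) {u : Contraction N → A}
      (hu : Tendsto u l (𝓝 0)) : Tendsto (fun e => f (u e) (x - g e x)) l (𝓝 0) := by
    refine squeeze_zero_norm (a := fun e => ‖f‖ * ‖u e‖ * (‖x‖ + ‖g‖ * ‖x‖))
      (fun e => (f.le_opNorm₂ _ _).trans (by gcongr; exact hbdd g x e)) ?_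
    simpa using (hu.norm.const_mul ‖f‖).mul_const (‖x‖ + ‖g‖ * ‖x‖)
  refine tendsto_zero_of_mem_topologicalClosure_span
    (P := fun e : Contraction N => m.compress (e : A)) (fun e => m.norm_compress_le e.2.2) ?_ hx
  rintro _ ⟨j, hj, x, rfl | rfl⟩
  · simp only [compress_left]
    exact htendsto _ _ x (by simpa using (hl j hj).2.const_sub j)
  · simp only [compress_right]
    exact htendsto _ _ x (by simpa using (hl j hj).1.const_sub j)

theorem eq_zero_of_mem_actionSpan {N : NonUnitalStarSubalgebra ℂ A} [IsClosed (N : Set A)]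
    {w : X} (hl : ∀ j ∈ N, m.left j w = 0) (hr : ∀ j ∈ N, m.right j w = 0)
    (hw : w ∈ m.actionSpan (N : Set A)) : w = 0 := by
  obtain ⟨l, _, hN⟩ := exists_approximateUnit_norm_le_one N
  have hfix (e : Contraction N) : m.compress (e : A) w = w := by
    rw [compress_apply, hr _ e.2.1, sub_zero, hl _ e.2.1, sub_zero]
  have hlim := tendsto_compress_of_mem_actionSpan hN hw
  simp only [hfix] at hlim
  exact tendsto_nhds_unique tendsto_const_nhds hlim

namespace IsJordanDerivation

variable [CompleteSpace X]

theorem leibnizDefect_eq_zero_of_mem_skewAdjoint (hD : m.IsJordanDerivation D) {a b : A}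
    (ha : a ∈ skewAdjoint A) (hb : b ∈ skewAdjoint A) : m.leibnizDefect D a b = 0 := by
  have hmem := hD.leibnizDefect_mem_actionSpan (fun a _ => mul_mem_starAnnihilator a) ha hb
    (hD.lie_mem_starAnnihilator ha hb)
  exact eq_zero_of_mem_actionSpan (N := m.starAnnihilator _) (fun _ hj => hj.1.1.1)
    (fun _ hj => hj.1.1.2) hmem

theorem leibnizDefect_eq_zero (hD : m.IsJordanDerivation D) (a b : A) :
    m.leibnizDefect D a b = 0 := by
  have hskew (x : selfAdjoint A) : Complex.I • (x : A) ∈ skewAdjoint A :=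
    Complex.I_smul_mem_skewAdjoint_iff_isSelfAdjoint.2 x.2
  have hdecomp (c : A) :
      ∃ u ∈ skewAdjoint A, ∃ v ∈ skewAdjoint A, c = u + (-Complex.I) • v := by
    refine ⟨_, hskew (imaginaryPart c), _, hskew (realPart c), ?_⟩
    rw [smul_smul, neg_mul, Complex.I_mul_I, neg_neg, one_smul, add_comm,
      realPart_add_I_smul_imaginaryPart]
  obtain ⟨u, hu, v, hv, rfl⟩ := hdecomp a
  obtain ⟨s, hs, t, ht, rfl⟩ := hdecomp b
  simp only [leibnizDefect_add_smul_left, leibnizDefect_add_smul_right,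
    hD.leibnizDefect_eq_zero_of_mem_skewAdjoint, hu, hv, hs, ht, smul_zero, add_zero]

end IsJordanDerivation

end CStarAlgebra

end NormedBimodule

/-- (Johnson) Every bounded Jordan derivation from a C*-algebra `A` into a Banach
`A`-bimodule `X` is an associative derivation.  The bimodule actions are given by the
bounded bilinear maps `l` and `r`. -/
theorem johnson_jordan_derivation (A X : Type*)
    [NonUnitalNormedRing A] [StarRing A] [CStarRing A] [CompleteSpace A]
    [NormedSpace ℂ A] [IsScalarTower ℂ A A] [SMulCommClass ℂ A A] [StarModule ℂ A]
    [NormedAddCommGroup X] [NormedSpace ℂ X] [CompleteSpace X]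
    (l : A →ₗ[ℂ] X →ₗ[ℂ] X) (r : X →ₗ[ℂ] A →ₗ[ℂ] X)
    (hlbdd : ∃ C : ℝ, ∀ (a : A) (x : X), ‖l a x‖ ≤ C * ‖a‖ * ‖x‖)
    (hrbdd : ∃ C : ℝ, ∀ (x : X) (a : A), ‖r x a‖ ≤ C * ‖x‖ * ‖a‖)
    (hmod₁ : ∀ (a b : A) (x : X), l a (l b x) = l (a * b) x)
    (hmod₂ : ∀ (a b : A) (x : X), l a (r x b) = r (l a x) b)
    (hmod₃ : ∀ (a b : A) (x : X), r (r x a) b = r x (a * b))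
    (D : A →L[ℂ] X)
    (hD : ∀ a : A, D (a * a) = l a (D a) + r (D a) a) :
    ∀ a b : A, D (a * b) = l a (D b) + r (D a) b := by
  obtain ⟨Cl, hl⟩ := hlbdd
  obtain ⟨Cr, hr⟩ := hrbdd
  let : NonUnitalCStarAlgebra A := {}
  let m : NormedBimodule ℂ A X :=
    { left := l.mkContinuous₂ Cl hl
      right := r.flip.mkContinuous₂ Cr fun a x => (hr x a).trans_eq (by ring)
      left_mul := fun a b x => (hmod₁ a b x).symm
      right_mul := fun a b x => (hmod₃ a b x).symm
      left_right := fun a b x => hmod₂ a b x }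
  intro a b
  have h : D (a * b) - l a (D b) - r (D a) b = 0 :=
    NormedBimodule.IsJordanDerivation.leibnizDefect_eq_zero (m := m) (D := D) hD a b
  rwa [sub_sub, sub_eq_zero] at h
end
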